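/- arXiv:1812.06313 — 5 statements merged into one kernel-verified Lean document; each statement's English description precedes it below -/
import Mathlib

section
/- Let 1 < p ≤ 2 and let (u_k)_{k≥1} be a normalized unconditional basis of L^p_ℝ(0,1) (Lebesgue measure). Then for every measurable set E ⊂ (0,1) of positive Lebesgue measure, the sequence (∫_E u_k⁺ dx)_{k≥1} does not belong to ℓ² and the sequence (∫_E u_k⁻ dx)_{k≥1} does not belong to ℓ². In particular, ∑_{k≥1} (u_k⁺(x))² = ∞ and ∑_{k≥1} (u_k⁻(x))² = ∞ for almost every x ∈ (0,1). -/
/-!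
Suppose that `a k = ∫_E (u k)⁺` is square summable, and let `φ f = ∫_E f`. Since
`|t| = 2 t⁺ - t`, the seminorm `n f = ∫_E |f|` satisfies `n (u k) ≤ 2 a k + |φ (u k)|`. The point is
that `n` is then determined on the unit ball, up to a small error, by finitely many coordinates
(`seminorm_le_coeffs`), and this is refuted by oscillating functions.

To estimate the tail `∑ |c k| n (u k)` of the expansion of `f` in the unit ball, both terms of the
bound for `n (u k)` are handled through the square function. The closed graph theorem gives a
uniform unconditional constant (`exists_unconditional_const`), so sign changes distort norms by a
bounded factor, and averaging over signs with Khinchine's inequalities (`khinchine_lower`,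
`khinchine_upper`) shows that `‖∑ d k • u k‖ ^ p` is equivalent to
`∫ (∑ (d k * u k) ^ 2) ^ (p / 2)` (`sqFun_equiv`).

* For `a k`: Jensen's inequality bounds the square function below by the `ℓ²` norm of the
  coefficients (`rpow_sum_sq_le_sqFun`). This is the cotype 2 estimate of `L^p`, `p ≤ 2`, and the
  Cauchy–Schwarz inequality makes `∑ |c k| a k` small over the tail.
* For `|φ (u k)|`: the square function is subadditive over disjoint blocks because `p ≤ 2`. If
  `∑ |c k φ (u k)|` did not have uniformly small tails, then stacking `N` disjoint blocks and
  choosing signs would give a vector of norm `O(N ^ (1 / p))` on which `φ` is of order `N`, which is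
  impossible for `p > 1` (`tail_small`).

Finally let `f n = 1_E cos (2 π n x)`. Each coordinate of `f n` tends to `0` by the
Riemann–Lebesgue lemma, since a bounded functional on `L^p` acts on bounded functions as integration
against an integrable density (`tendsto_functional_osc`). On the other hand
`∫_E |f n| ≥ ∫_E cos² (2 π n x) → |E| / 2` (`absSeminorm_osc_ge`), whereas the finitely many
coordinates only account for `|E| / 4` in the limit. The statement for `u⁻` follows on replacing
`u` by `-u`, and the almost everywhere statement from Cauchy–Schwarz on the sets where the sum of
squares is at most `N` (`ae_not_summable_sq`).
-/

open MeasureTheory ENNReal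

namespace UBSigns
open Filter Topology

/-! ### Unconditional bases -/

section Abstract
variable {X : Type*} [NormedAddCommGroup X] [NormedSpace ℝ X]

/-- Uniqueness of the expansion makes the coefficient map linear. -/
lemma exists_coeff {u : ℕ → X} (hb : ∀ f : X, ∃! c : ℕ → ℝ, HasSum (fun k => c k • u k) f) :
    ∃ c : X →ₗ[ℝ] (ℕ → ℝ), (∀ f, HasSum (fun k => c f k • u k) f) ∧
      ∀ f d, HasSum (fun k => d k • u k) f → d = c f := by
  choose c hc hu using hb
  refine ⟨⟨⟨c, fun f g => ?_⟩, fun r f => ?_⟩, hc, hu⟩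
  · refine (hu _ _ ?_).symm
    simpa [add_smul] using (hc f).add (hc g)
  · refine (hu _ _ ?_).symm
    simpa [mul_smul] using (hc f).const_smul r

omit [NormedSpace ℝ X] in
/-- Finite partial sums of an unconditionally convergent series are bounded. -/
lemma exists_bound_sum_of_hasSum {v : ℕ → X} {f : X} (h : HasSum v f) :
    ∃ C, ∀ F : Finset ℕ, ‖∑ k ∈ F, v k‖ ≤ C := by
  obtain ⟨F₀, hF₀⟩ := (Metric.tendsto_atTop.1 h) 1 one_pos
  refine ⟨(‖f‖ + 1) + ∑ k ∈ F₀, ‖v k‖, fun F => ?_⟩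
  have h1 : ∑ k ∈ F, v k = ∑ k ∈ F ∪ F₀, v k - ∑ k ∈ F₀ \ F, v k := by
    rw [← Finset.union_sdiff_self_eq_union, Finset.sum_union Finset.disjoint_sdiff]; abel
  have h2 : ‖∑ k ∈ F ∪ F₀, v k‖ ≤ ‖f‖ + 1 := by
    have := hF₀ (F ∪ F₀) Finset.subset_union_right
    rw [dist_eq_norm] at this
    linarith [norm_le_norm_add_norm_sub f (∑ k ∈ F ∪ F₀, v k), norm_sub_rev f (∑ k ∈ F ∪ F₀, v k)]
  have h3 : ‖∑ k ∈ F₀ \ F, v k‖ ≤ ∑ k ∈ F₀, ‖v k‖ :=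
    (norm_sum_le _ _).trans
      (Finset.sum_le_sum_of_subset_of_nonneg Finset.sdiff_subset fun _ _ _ => norm_nonneg _)
  rw [h1]
  exact (norm_sub_le _ _).trans (add_le_add h2 h3)

/-- The partial sum projections of an unconditional basis are uniformly bounded. The map sending `f`
to the family of its finite partial sums, with values in `ℓ^∞(Finset ℕ; X)`, has closed graph: a
limit of such families is again the family of partial sums of an expansion, whose sum is the limit
of the vectors. -/
lemma exists_unconditional_const [CompleteSpace X] {u : ℕ → X}
    {c : X →ₗ[ℝ] (ℕ → ℝ)} (hc : ∀ f, HasSum (fun k => c f k • u k) f)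
    (hu : ∀ f d, HasSum (fun k => d k • u k) f → d = c f) :
    ∃ K : ℝ, 1 ≤ K ∧ ∀ f (F : Finset ℕ), ‖∑ k ∈ F, c f k • u k‖ ≤ K * ‖f‖ := by
  have hmem : ∀ f, Memℓp (fun F : Finset ℕ => ∑ k ∈ F, c f k • u k) ∞ := fun f => by
    obtain ⟨C, hC⟩ := exists_bound_sum_of_hasSum (hc f)
    exact memℓp_infty ⟨C, by rintro _ ⟨F, rfl⟩; exact hC F⟩
  let T : X →ₗ[ℝ] lp (fun _ : Finset ℕ => X) ∞ :=
    { toFun := fun f => ⟨fun F => ∑ k ∈ F, c f k • u k, hmem f⟩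
      map_add' := fun f g => by
        ext F
        change ∑ k ∈ F, c (f + g) k • u k = ∑ k ∈ F, c f k • u k + ∑ k ∈ F, c g k • u k
        simp [add_smul, Finset.sum_add_distrib]
      map_smul' := fun r f => by
        ext F; simp [mul_smul, Finset.smul_sum] }
  have hT : ∀ f F, T f F = ∑ k ∈ F, c f k • u k := fun f F => rfl
  have hcont : Continuous T := by
    refine T.continuous_of_seq_closed_graph fun f x Φ hf hΦ => ?_
    have hunif : ∀ ε > 0, ∀ᶠ n in atTop, ∀ F, ‖T (f n) F - Φ F‖ < ε := fun ε hε => by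
      filter_upwards [(Metric.tendsto_nhds.1 hΦ) ε hε] with n hn F
      rw [dist_eq_norm] at hn
      exact (lp.norm_apply_le_norm ENNReal.top_ne_zero (T (f n) - Φ) F).trans_lt hn
    have hpt : ∀ F, Tendsto (fun n => T (f n) F) atTop (𝓝 (Φ F)) := fun F =>
      Metric.tendsto_nhds.2 fun ε hε => by
        filter_upwards [hunif ε hε] with n hn
        rw [dist_eq_norm]; exact hn F
    -- the coefficients of the limit: each line `ℝ ∙ u k` is closed
    have hd : ∀ k, ∃ d : ℝ, Φ {k} = d • u k := fun k => by
      have hcl : IsClosed ((ℝ ∙ u k : Submodule ℝ X) : Set X) :=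
        Submodule.closed_of_finiteDimensional _
      have : Φ {k} ∈ (ℝ ∙ u k : Submodule ℝ X) :=
        hcl.mem_of_tendsto (hpt {k}) (Eventually.of_forall fun n => by
          rw [hT, Finset.sum_singleton]
          exact Submodule.smul_mem _ _ (Submodule.mem_span_singleton_self _))
      obtain ⟨d, hd⟩ := Submodule.mem_span_singleton.1 this
      exact ⟨d, hd.symm⟩
    choose d hd using hd
    have hΦF : ∀ F, Φ F = ∑ k ∈ F, d k • u k := fun F => by
      refine tendsto_nhds_unique (hpt F) ?_
      have : ∀ n, T (f n) F = ∑ k ∈ F, T (f n) {k} := fun n => by simp [hT]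
      simp_rw [this, ← hd]
      exact tendsto_finsetSum _ fun k _ => hpt {k}
    have hs : HasSum (fun k => d k • u k) x := by
      have : Tendsto (fun F => Φ F) atTop (𝓝 x) := by
        refine Metric.tendsto_nhds.2 fun ε hε => ?_
        obtain ⟨n, h1, h2⟩ := ((hunif (ε / 3) (by positivity)).and
          ((Metric.tendsto_nhds.1 hf) (ε / 3) (by positivity))).exists
        filter_upwards [(Metric.tendsto_nhds.1 (hc (f n))) (ε / 3) (by positivity)] with F hF
        have h3 := h1 F
        rw [← dist_eq_norm, dist_comm] at h3
        rw [← hT] at hF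
        linarith [dist_triangle4 (Φ F) (T (f n) F) (f n) x]
      simpa only [HasSum, SummationFilter.unconditional_filter, ← hΦF] using this
    have := hu x d hs
    ext F
    rw [hΦF, hT, this]
  let T' : X →L[ℝ] lp (fun _ : Finset ℕ => X) ∞ := ⟨T, hcont⟩
  refine ⟨max 1 ‖T'‖, le_max_left _ _, fun f F => ?_⟩
  calc ‖∑ k ∈ F, c f k • u k‖ = ‖T' f F‖ := rfl
    _ ≤ ‖T' f‖ := lp.norm_apply_le_norm ENNReal.top_ne_zero _ F
    _ ≤ ‖T'‖ * ‖f‖ := T'.le_opNorm f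
    _ ≤ _ := by gcongr; exact le_max_right _ _

lemma coeff_sum {u : ℕ → X} {c : X →ₗ[ℝ] (ℕ → ℝ)}
    (hu : ∀ f d, HasSum (fun k => d k • u k) f → d = c f) (d : ℕ → ℝ) (H : Finset ℕ) (k : ℕ) :
    c (∑ j ∈ H, d j • u j) k = if k ∈ H then d k else 0 := by
  have : HasSum (fun k => (if k ∈ H then d k else 0) • u k) (∑ j ∈ H, d j • u j) := by
    have h := hasSum_sum_of_ne_finset_zero (f := fun k => (if k ∈ H then d k else 0) • u k)
      (s := H) (L := .unconditional ℕ) (fun b hb => by simp [hb])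
    rwa [Finset.sum_congr rfl (g := fun j => d j • u j) (fun j hj => by simp [hj])] at h
  exact (congrFun (hu _ _ this) k).symm

/-- Changing signs of coefficients costs at most a factor `2 * K`: a signed sum is a difference of
two partial sums. -/
lemma norm_sum_sign_le {u : ℕ → X} {c : X →ₗ[ℝ] (ℕ → ℝ)}
    (hu : ∀ f d, HasSum (fun k => d k • u k) f → d = c f) {K : ℝ}
    (hK : ∀ f (F : Finset ℕ), ‖∑ k ∈ F, c f k • u k‖ ≤ K * ‖f‖) (d : ℕ → ℝ) (H s : Finset ℕ) :
    ‖∑ k ∈ H, (if k ∈ s then d k else -d k) • u k‖ ≤ 2 * K * ‖∑ k ∈ H, d k • u k‖ := by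
  have key : ∀ F ⊆ H, ‖∑ k ∈ F, d k • u k‖ ≤ K * ‖∑ k ∈ H, d k • u k‖ := fun F hF => by
    have := hK (∑ k ∈ H, d k • u k) F
    rwa [Finset.sum_congr rfl (g := fun k => d k • u k) fun k hk => by
      rw [coeff_sum hu, if_pos (hF hk)]] at this
  have h1 := key (H.filter (· ∈ s)) (Finset.filter_subset _ _)
  have h2 := key (H.filter (· ∉ s)) (Finset.filter_subset _ _)
  have h3 : ∑ k ∈ H, (if k ∈ s then d k else -d k) • u k =
      ∑ k ∈ H.filter (· ∈ s), d k • u k - ∑ k ∈ H.filter (· ∉ s), d k • u k := by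
    simp_rw [ite_smul]
    rw [Finset.sum_ite]; simp [sub_eq_add_neg]
  rw [h3]
  linarith [norm_sub_le (∑ k ∈ H.filter (· ∈ s), d k • u k) (∑ k ∈ H.filter (· ∉ s), d k • u k)]

end Abstract

/-! ### Khinchine inequalities -/

/-- The signed sum `∑_{k ∈ t} ± a k`, with sign `+` exactly on `s`. -/
def signSum (a : ℕ → ℝ) (t s : Finset ℕ) : ℝ := ∑ k ∈ t, if k ∈ s then a k else -a k

/-- Conditioning on the sign of `a i`; the induction step for the moment computations. -/
lemma sum_signSum_insert (a : ℕ → ℝ) {i : ℕ} {t : Finset ℕ} (hi : i ∉ t) (g : ℝ → ℝ) :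
    ∑ s ∈ (insert i t).powerset, g (signSum a (insert i t) s) =
      ∑ s ∈ t.powerset, (g (signSum a t s - a i) + g (signSum a t s + a i)) := by
  rw [Finset.sum_powerset_insert hi, ← Finset.sum_add_distrib]
  refine Finset.sum_congr rfl fun s hs => ?_
  have his : i ∉ s := fun h => hi (Finset.mem_powerset.1 hs h)
  congr 2
  · rw [signSum, Finset.sum_insert hi, if_neg his, signSum]; ring
  · rw [signSum, Finset.sum_insert hi, if_pos (Finset.mem_insert_self _ _), signSum, add_comm]
    congr 1
    refine Finset.sum_congr rfl fun k hk => ?_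
    have : k ≠ i := fun h => hi (h ▸ hk)
    simp [Finset.mem_insert, this]

/-- Second moment of a Rademacher sum. -/
lemma sum_signSum_sq (a : ℕ → ℝ) (t : Finset ℕ) :
    ∑ s ∈ t.powerset, signSum a t s ^ 2 = 2 ^ t.card * ∑ k ∈ t, a k ^ 2 := by
  induction t using Finset.induction_on with
  | empty => simp [signSum]
  | insert i t hi ih =>
    rw [sum_signSum_insert a hi (fun x => x ^ 2), Finset.sum_insert hi, Finset.card_insert_of_notMem hi]
    have : ∀ s, (signSum a t s - a i) ^ 2 + (signSum a t s + a i) ^ 2 =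
        2 * signSum a t s ^ 2 + 2 * a i ^ 2 := fun s => by ring
    simp_rw [this]
    rw [Finset.sum_add_distrib, ← Finset.mul_sum, ih, Finset.sum_const, Finset.card_powerset]
    simp; ring

/-- Fourth moment bound for a Rademacher sum. -/
lemma sum_signSum_four_le (a : ℕ → ℝ) (t : Finset ℕ) :
    ∑ s ∈ t.powerset, signSum a t s ^ 4 ≤ 3 * 2 ^ t.card * (∑ k ∈ t, a k ^ 2) ^ 2 := by
  induction t using Finset.induction_on with
  | empty => simp [signSum]
  | insert i t hi ih =>
    rw [sum_signSum_insert a hi (fun x => x ^ 4), Finset.sum_insert hi, Finset.card_insert_of_notMem hi]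
    have : ∀ s, (signSum a t s - a i) ^ 4 + (signSum a t s + a i) ^ 4 =
        2 * signSum a t s ^ 4 + 12 * a i ^ 2 * signSum a t s ^ 2 + 2 * a i ^ 4 := fun s => by ring
    simp_rw [this]
    rw [Finset.sum_add_distrib, Finset.sum_add_distrib, ← Finset.mul_sum, ← Finset.mul_sum,
      sum_signSum_sq, Finset.sum_const, Finset.card_powerset]
    have h2 : (0 : ℝ) ≤ 2 ^ t.card * a i ^ 4 := by positivity
    simp only [nsmul_eq_mul, pow_succ (2 : ℝ) t.card]
    push_cast
    nlinarith

lemma rpow_le_one_add_sq {q s : ℝ} (hq0 : 0 ≤ q) (hq2 : q ≤ 2) (hs : 0 ≤ s) :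
    s ^ q ≤ 1 + s ^ 2 := by
  rcases le_total s 1 with h | h
  · linarith [Real.rpow_le_one hs h hq0, sq_nonneg s]
  · have := Real.rpow_le_rpow_of_exponent_le h hq2
    rw [Real.rpow_two] at this; linarith

lemma le_rpow_of_sq_sub {q s : ℝ} (hq0 : 0 ≤ q) (hq2 : q ≤ 2) (hs : 0 ≤ s) :
    2 / 3 * (s ^ 2 - s ^ 4 / 6) ≤ s ^ q := by
  rcases le_total s 1 with h | h
  · rcases hs.eq_or_lt with rfl | hs'
    · simpa using Real.rpow_nonneg le_rfl q
    have := Real.rpow_le_rpow_of_exponent_ge hs' h hq2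
    rw [Real.rpow_two] at this
    have h4 : 0 ≤ s ^ 4 := by positivity
    nlinarith [sq_nonneg s]
  · have := Real.one_le_rpow h hq0
    nlinarith [sq_nonneg (s ^ 2 - 3)]

/-- Normalization reducing the Khinchine inequalities to sums of unit variance. -/
lemma abs_rpow_eq {q S : ℝ} (hS : 0 < S) (x : ℝ) :
    |x| ^ q = S ^ (q / 2) * (|x| / √S) ^ q := by
  have h : S ^ (q / 2) = √S ^ q := by
    rw [Real.sqrt_eq_rpow, ← Real.rpow_mul hS.le]; ring_nf
  rw [h, ← Real.mul_rpow (Real.sqrt_nonneg _) (by positivity),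
    mul_div_cancel₀ _ (Real.sqrt_pos.2 hS).ne']

/-- Lower Khinchine inequality, averaged form. The constant comes from
`s ^ q ≥ (2/3) (s ^ 2 - s ^ 4 / 6)` and the second and fourth moments. -/
lemma khinchine_lower {q : ℝ} (hq0 : 0 < q) (hq2 : q ≤ 2) (a : ℕ → ℝ) (t : Finset ℕ) :
    2 ^ t.card * (∑ k ∈ t, a k ^ 2) ^ (q / 2) ≤ 3 * ∑ s ∈ t.powerset, |signSum a t s| ^ q := by
  set S := ∑ k ∈ t, a k ^ 2 with hSdef
  have hS0 : 0 ≤ S := Finset.sum_nonneg fun _ _ => sq_nonneg _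
  rcases hS0.eq_or_lt with h | hS
  · rw [← h, Real.zero_rpow (by positivity), mul_zero]
    positivity
  have hpt : ∀ s ∈ t.powerset, S ^ (q / 2) * (2 / 3 * (signSum a t s ^ 2 / S -
      signSum a t s ^ 4 / (6 * S ^ 2))) ≤ |signSum a t s| ^ q := fun s _ => by
    rw [abs_rpow_eq hS]
    refine mul_le_mul_of_nonneg_left ?_ (by positivity)
    refine le_trans (le_of_eq ?_) (le_rpow_of_sq_sub hq0.le hq2 (by positivity))
    have h4 : √S ^ 4 = S ^ 2 := by rw [show 4 = 2 * 2 from rfl, pow_mul, Real.sq_sqrt hS0]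
    rw [div_pow, div_pow, Real.sq_sqrt hS0, h4, sq_abs, show |signSum a t s| ^ 4 =
      signSum a t s ^ 4 from by rw [show 4 = 2 * 2 from rfl, pow_mul, sq_abs, pow_mul]]
    field_simp
  have := Finset.sum_le_sum hpt
  rw [← Finset.mul_sum, ← Finset.mul_sum, Finset.sum_sub_distrib, ← Finset.sum_div,
    ← Finset.sum_div, sum_signSum_sq] at this
  have h4 : (∑ s ∈ t.powerset, signSum a t s ^ 4) / (6 * S ^ 2) ≤ 2 ^ t.card / 2 := by
    rw [div_le_iff₀ (by positivity)]
    linarith [sum_signSum_four_le a t]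
  rw [mul_div_assoc, div_self hS.ne'] at this
  have h5 : 0 ≤ S ^ (q / 2) := by positivity
  nlinarith [mul_le_mul_of_nonneg_left h4 h5]

/-- Upper Khinchine inequality, averaged form, with a crude constant. -/
lemma khinchine_upper {q : ℝ} (hq0 : 0 < q) (hq2 : q ≤ 2) (a : ℕ → ℝ) (t : Finset ℕ) :
    ∑ s ∈ t.powerset, |signSum a t s| ^ q ≤ 2 * 2 ^ t.card * (∑ k ∈ t, a k ^ 2) ^ (q / 2) := by
  set S := ∑ k ∈ t, a k ^ 2 with hSdef
  have hS0 : 0 ≤ S := Finset.sum_nonneg fun _ _ => sq_nonneg _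
  rcases hS0.eq_or_lt with h | hS
  · have ha : ∀ k ∈ t, a k = 0 := fun k hk => by
      have := (Finset.sum_eq_zero_iff_of_nonneg fun _ _ => sq_nonneg _).1 h.symm k hk
      simpa using this
    have hX : ∀ s, signSum a t s = 0 := fun s =>
      Finset.sum_eq_zero fun k hk => by simp [ha k hk]
    simp only [hX, abs_zero, Real.zero_rpow hq0.ne', Finset.sum_const_zero]
    positivity
  have hpt : ∀ s ∈ t.powerset, |signSum a t s| ^ q ≤
      S ^ (q / 2) * (1 + signSum a t s ^ 2 / S) := fun s _ => by
    rw [abs_rpow_eq hS]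
    refine mul_le_mul_of_nonneg_left ?_ (by positivity)
    refine (rpow_le_one_add_sq hq0.le hq2 (by positivity)).trans (le_of_eq ?_)
    rw [div_pow, Real.sq_sqrt hS0, sq_abs]
  have := Finset.sum_le_sum hpt
  rw [← Finset.mul_sum, Finset.sum_add_distrib, ← Finset.sum_div, sum_signSum_sq,
    mul_div_assoc, div_self hS.ne', Finset.sum_const, Finset.card_powerset] at this
  refine this.trans (le_of_eq ?_)
  simp; ring

/-! ### The square function -/

section SquareFunction
variable {α : Type*} [MeasurableSpace α] {μ : Measure α} {p : ℝ≥0∞}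

lemma sq_rpow_half (q x : ℝ) : (x ^ 2) ^ (q / 2) = |x| ^ q := by
  rw [← sq_abs, ← Real.rpow_natCast, ← Real.rpow_mul (abs_nonneg x)]
  congr 1; push_cast; ring

lemma coeFn_sum_smul (u : ℕ → Lp ℝ p μ) (d : ℕ → ℝ) (H : Finset ℕ) :
    (∑ k ∈ H, d k • u k : Lp ℝ p μ) =ᵐ[μ] fun x => ∑ k ∈ H, d k * u k x := by
  induction H using Finset.induction_on with
  | empty => simp only [Finset.sum_empty]; exact Lp.coeFn_zero ℝ p μ
  | insert i t hi ih =>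
    rw [Finset.sum_insert hi]
    filter_upwards [Lp.coeFn_add (d i • u i) (∑ k ∈ t, d k • u k), ih, Lp.coeFn_smul (d i) (u i)]
      with x h1 h2 h3
    rw [h1, Pi.add_apply, h2, h3, Finset.sum_insert hi]; simp

lemma integrable_abs_rpow (hp0 : p ≠ 0) (hpt : p ≠ ∞) (f : Lp ℝ p μ) :
    Integrable (fun x => |f x| ^ p.toReal) μ :=
  (Lp.memLp f).integrable_norm_rpow hp0 hpt

lemma norm_rpow_eq_integral (hp0 : p ≠ 0) (hpt : p ≠ ∞) (f : Lp ℝ p μ) :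
    ‖f‖ ^ p.toReal = ∫ x, |f x| ^ p.toReal ∂μ := by
  have h0 : 0 ≤ ∫ x, |f x| ^ p.toReal ∂μ := integral_nonneg fun x => by positivity
  rw [Lp.norm_def, (Lp.memLp f).eLpNorm_eq_integral_rpow_norm hp0 hpt,
    ENNReal.toReal_ofReal (Real.rpow_nonneg (by simpa using h0) _)]
  simp only [Real.norm_eq_abs]
  rw [← Real.rpow_mul h0, inv_mul_cancel₀ (ENNReal.toReal_pos hp0 hpt).ne', Real.rpow_one]

/-- The `p`-th power of the `L^p` norm of the square function of `∑_{k ∈ H} d k • u k`. -/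
noncomputable def sqFun (u : ℕ → Lp ℝ p μ) (d : ℕ → ℝ) (H : Finset ℕ) : ℝ :=
  ∫ x, (∑ k ∈ H, (d k * u k x) ^ 2) ^ (p.toReal / 2) ∂μ

lemma sqFun_congr (u : ℕ → Lp ℝ p μ) {d e : ℕ → ℝ} {H : Finset ℕ}
    (h : ∀ k ∈ H, d k ^ 2 = e k ^ 2) : sqFun u d H = sqFun u e H := by
  unfold sqFun
  congr 1; ext x; congr 1
  exact Finset.sum_congr rfl fun k hk => by rw [mul_pow, mul_pow, h k hk]

lemma integrable_sqFun (hp0 : p ≠ 0) (hp2 : p ≤ 2) (u : ℕ → Lp ℝ p μ) (d : ℕ → ℝ)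
    (H : Finset ℕ) :
    Integrable (fun x => (∑ k ∈ H, (d k * u k x) ^ 2) ^ (p.toReal / 2)) μ := by
  have hpt : p ≠ ∞ := (hp2.trans_lt (by simp)).ne
  have hq : 0 < p.toReal := ENNReal.toReal_pos hp0 hpt
  have hq2 : p.toReal ≤ 2 := by simpa using ENNReal.toReal_mono (by simp) hp2
  have hi : Integrable (fun x => ∑ k ∈ H, |d k| ^ p.toReal * |u k x| ^ p.toReal) μ :=
    integrable_finsetSum _ fun k _ => (integrable_abs_rpow hp0 hpt (u k)).const_mul _
  refine hi.mono' ?_ ?_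
  · have : ∀ k, Measurable (u k) := fun k => (Lp.stronglyMeasurable (u k)).measurable
    exact (by fun_prop : Measurable _).aestronglyMeasurable
  · refine Eventually.of_forall fun x => ?_
    rw [Real.norm_of_nonneg (Real.rpow_nonneg (Finset.sum_nonneg fun _ _ => sq_nonneg _) _)]
    simp_rw [← Real.mul_rpow (abs_nonneg _) (abs_nonneg _), ← abs_mul, ← sq_rpow_half]
    refine Finset.le_sum_of_subadditive_on_pred (fun y : ℝ => y ^ (p.toReal / 2)) (fun y => 0 ≤ y)
      (Real.zero_rpow (by positivity)).le
      (fun a b ha hb => Real.rpow_add_le_add_rpow ha hb (by positivity) (by linarith))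
      (fun a b ha hb => add_nonneg ha hb) _ (fun k _ => sq_nonneg _)

/-- Subadditivity of the square function over disjoint blocks, which holds because `p ≤ 2`. -/
lemma sqFun_union_le (hp0 : p ≠ 0) (hp2 : p ≤ 2) (u : ℕ → Lp ℝ p μ) (d : ℕ → ℝ)
    {H G : Finset ℕ} (hHG : Disjoint H G) :
    sqFun u d (H ∪ G) ≤ sqFun u d H + sqFun u d G := by
  have hpt : p ≠ ∞ := (hp2.trans_lt (by simp)).ne
  have hq2 : p.toReal ≤ 2 := by simpa using ENNReal.toReal_mono (by simp) hp2
  unfold sqFun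
  rw [← integral_add (integrable_sqFun hp0 hp2 u d H) (integrable_sqFun hp0 hp2 u d G)]
  refine integral_mono (integrable_sqFun hp0 hp2 u d _)
    ((integrable_sqFun hp0 hp2 u d H).add (integrable_sqFun hp0 hp2 u d G)) fun x => ?_
  simp only [Finset.sum_union hHG]
  exact Real.rpow_add_le_add_rpow (Finset.sum_nonneg fun _ _ => sq_nonneg _)
    (Finset.sum_nonneg fun _ _ => sq_nonneg _) (by positivity) (by linarith)

/-- Jensen's inequality for the concave function `t ^ (p / 2)`: for a normalized sequence the
square function dominates the `ℓ²` norm of the coefficients. -/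
lemma rpow_sum_sq_le_sqFun (hp0 : p ≠ 0) (hp2 : p ≤ 2) {u : ℕ → Lp ℝ p μ}
    (hn : ∀ k, ‖u k‖ = 1) (d : ℕ → ℝ) (H : Finset ℕ) :
    (∑ k ∈ H, d k ^ 2) ^ (p.toReal / 2) ≤ sqFun u d H := by
  have hpt : p ≠ ∞ := (hp2.trans_lt (by simp)).ne
  have hq : 0 < p.toReal := ENNReal.toReal_pos hp0 hpt
  have hq2 : p.toReal ≤ 2 := by simpa using ENNReal.toReal_mono (by simp) hp2
  set S := ∑ k ∈ H, d k ^ 2 with hS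
  have hS0 : 0 ≤ S := Finset.sum_nonneg fun _ _ => sq_nonneg _
  rcases hS0.eq_or_lt with h | hSpos
  · rw [← h, Real.zero_rpow (by positivity)]
    exact integral_nonneg fun x => Real.rpow_nonneg (Finset.sum_nonneg fun _ _ => sq_nonneg _) _
  have hw : ∑ k ∈ H, d k ^ 2 / S = 1 := by rw [← Finset.sum_div, ← hS, div_self hSpos.ne']
  have hpt' : ∀ x, S ^ (p.toReal / 2) * ∑ k ∈ H, d k ^ 2 / S * |u k x| ^ p.toReal ≤
      (∑ k ∈ H, (d k * u k x) ^ 2) ^ (p.toReal / 2) := fun x => by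
    have hJ := (Real.concaveOn_rpow (p := p.toReal / 2) (by positivity) (by linarith)).le_map_sum
      (t := H) (w := fun k => d k ^ 2 / S) (p := fun k => u k x ^ 2) (fun k _ => by positivity) hw
      (fun k _ => Set.mem_Ici.2 (sq_nonneg _))
    simp only [smul_eq_mul, sq_rpow_half] at hJ
    have : ∑ k ∈ H, (d k * u k x) ^ 2 = S * ∑ k ∈ H, d k ^ 2 / S * u k x ^ 2 := by
      rw [Finset.mul_sum]
      exact Finset.sum_congr rfl fun k _ => by field_simp
    rw [this, Real.mul_rpow hS0 (Finset.sum_nonneg fun k _ => by positivity)]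
    gcongr
  have hterm : ∀ k, Integrable (fun x => d k ^ 2 / S * |u k x| ^ p.toReal) μ := fun k =>
    (integrable_abs_rpow hp0 hpt (u k)).const_mul _
  have hint := integral_mono ((integrable_finsetSum H fun k _ => hterm k).const_mul _)
    (integrable_sqFun hp0 hp2 u d H) hpt'
  rw [integral_const_mul, integral_finsetSum _ fun k _ => hterm k] at hint
  simp_rw [integral_const_mul, ← norm_rpow_eq_integral hp0 hpt, hn, Real.one_rpow, mul_one] at hint
  rwa [hw, mul_one] at hint

/-- Fubini: averaging the `p`-th power of the norm over signs amounts to averaging pointwise. -/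
lemma sum_norm_sign_rpow (hp0 : p ≠ 0) (hpt : p ≠ ∞) (u : ℕ → Lp ℝ p μ) (d : ℕ → ℝ)
    (H : Finset ℕ) :
    Integrable (fun x => ∑ s ∈ H.powerset, |signSum (fun k => d k * u k x) H s| ^ p.toReal) μ ∧
    ∑ s ∈ H.powerset, ‖∑ k ∈ H, (if k ∈ s then d k else -d k) • u k‖ ^ p.toReal =
      ∫ x, ∑ s ∈ H.powerset, |signSum (fun k => d k * u k x) H s| ^ p.toReal ∂μ := by
  have hae : ∀ s, (fun x => |(∑ k ∈ H, (if k ∈ s then d k else -d k) • u k : Lp ℝ p μ) x| ^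
      p.toReal) =ᵐ[μ] fun x => |signSum (fun k => d k * u k x) H s| ^ p.toReal := fun s => by
    filter_upwards [coeFn_sum_smul u (fun k => if k ∈ s then d k else -d k) H] with x hx
    rw [hx]
    simp only [signSum, ite_mul, neg_mul]
  have hi : ∀ s, Integrable (fun x => |signSum (fun k => d k * u k x) H s| ^ p.toReal) μ :=
    fun s => (integrable_abs_rpow hp0 hpt _).congr (hae s)
  refine ⟨integrable_finsetSum _ fun s _ => hi s, ?_⟩
  rw [integral_finsetSum _ fun s _ => hi s]
  refine Finset.sum_congr rfl fun s _ => ?_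
  rw [norm_rpow_eq_integral hp0 hpt, integral_congr_ae (hae s)]

/-- If all sign changes distort norms by at most `B`, then the norm is equivalent to the
norm of the square function. -/
lemma sqFun_equiv (hp1 : 1 ≤ p) [Fact (1 ≤ p)] (hp2 : p ≤ 2) {u : ℕ → Lp ℝ p μ} {B : ℝ} (hB : 0 ≤ B)
    (hsign : ∀ (d : ℕ → ℝ) (H s : Finset ℕ),
      ‖∑ k ∈ H, (if k ∈ s then d k else -d k) • u k‖ ≤ B * ‖∑ k ∈ H, d k • u k‖)
    (d : ℕ → ℝ) (H : Finset ℕ) :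
    sqFun u d H ≤ 3 * B ^ p.toReal * ‖∑ k ∈ H, d k • u k‖ ^ p.toReal ∧
    ‖∑ k ∈ H, d k • u k‖ ^ p.toReal ≤ 2 * B ^ p.toReal * sqFun u d H := by
  have hp0 : p ≠ 0 := (zero_lt_one.trans_le hp1).ne'
  have hpt : p ≠ ∞ := (hp2.trans_lt (by simp)).ne
  have hq : 0 < p.toReal := ENNReal.toReal_pos hp0 hpt
  have hq2 : p.toReal ≤ 2 := by simpa using ENNReal.toReal_mono (by simp) hp2
  obtain ⟨hint, hsum⟩ := sum_norm_sign_rpow hp0 hpt u d H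
  have hlow : 2 ^ H.card * sqFun u d H ≤
      3 * ∑ s ∈ H.powerset, ‖∑ k ∈ H, (if k ∈ s then d k else -d k) • u k‖ ^ p.toReal := by
    rw [hsum, sqFun, ← integral_const_mul, ← integral_const_mul]
    exact integral_mono ((integrable_sqFun hp0 hp2 u d H).const_mul _) (hint.const_mul _)
      fun x => khinchine_lower hq hq2 (fun k => d k * u k x) H
  have hup : ∑ s ∈ H.powerset, ‖∑ k ∈ H, (if k ∈ s then d k else -d k) • u k‖ ^ p.toReal ≤
      2 * 2 ^ H.card * sqFun u d H := by
    rw [hsum, sqFun, ← integral_const_mul]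
    exact integral_mono hint ((integrable_sqFun hp0 hp2 u d H).const_mul _)
      fun x => khinchine_upper hq hq2 (fun k => d k * u k x) H
  have h1 : ∑ s ∈ H.powerset, ‖∑ k ∈ H, (if k ∈ s then d k else -d k) • u k‖ ^ p.toReal ≤
      2 ^ H.card * (B ^ p.toReal * ‖∑ k ∈ H, d k • u k‖ ^ p.toReal) := by
    refine (Finset.sum_le_card_nsmul _ _ _ fun s _ =>
      Real.rpow_le_rpow (norm_nonneg _) (hsign d H s) hq.le).trans (le_of_eq ?_)
    rw [Real.mul_rpow hB (norm_nonneg _), Finset.card_powerset]; simp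
  have h2 : 2 ^ H.card * ‖∑ k ∈ H, d k • u k‖ ^ p.toReal ≤ B ^ p.toReal *
      ∑ s ∈ H.powerset, ‖∑ k ∈ H, (if k ∈ s then d k else -d k) • u k‖ ^ p.toReal := by
    rw [Finset.mul_sum]
    refine le_trans (le_of_eq ?_) (Finset.card_nsmul_le_sum H.powerset _
      (‖∑ k ∈ H, d k • u k‖ ^ p.toReal) fun s _ => ?_)
    · rw [Finset.card_powerset]; simp
    rw [← Real.mul_rpow hB (norm_nonneg _)]
    refine Real.rpow_le_rpow (norm_nonneg _) ?_ hq.le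
    -- the same sign change applied twice is the identity
    have := hsign (fun k => if k ∈ s then d k else -d k) H s
    rwa [Finset.sum_congr rfl (g := fun k => d k • u k) fun k _ => by
      split_ifs <;> simp] at this
  have hpow : (0 : ℝ) < 2 ^ H.card := by positivity
  have hBq : 0 ≤ B ^ p.toReal := by positivity
  constructor
  · refine le_of_mul_le_mul_left ?_ hpow
    linarith
  · refine le_of_mul_le_mul_left ?_ hpow
    linarith [mul_le_mul_of_nonneg_left hup hBq]

end SquareFunction

/-! ### Weak convergence along a basis -/

section Tail
variable {X : Type*} [NormedAddCommGroup X] [NormedSpace ℝ X]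

/-- Gliding hump. Here `Q` stands for the `q`-th power of the norm of the square function: a
quantity equivalent to `‖∑ d k • u k‖ ^ q`, insensitive to signs and subadditive over disjoint
blocks. Stacking `N` disjoint blocks on which `∑ |d k φ (u k)|` exceeds `δ` and choosing signs
produces a vector of norm `O(N ^ (1 / q))` on which `φ` is at least `N * δ`, impossible for large
`N` as `q > 1`. -/
lemma tail_small {u : ℕ → X} (φ : X →L[ℝ] ℝ) {Q : (ℕ → ℝ) → Finset ℕ → ℝ} {q A R : ℝ}
    (hq : 1 < q) (hA : 0 ≤ A)
    (hcongr : ∀ d e H, (∀ k ∈ H, d k ^ 2 = e k ^ 2) → Q d H = Q e H)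
    (hunion : ∀ d H G, Disjoint H G → Q d (H ∪ G) ≤ Q d H + Q d G)
    (hQ1 : ∀ d H, Q d H ≤ A * ‖∑ k ∈ H, d k • u k‖ ^ q)
    (hQ2 : ∀ d H, ‖∑ k ∈ H, d k • u k‖ ^ q ≤ A * Q d H) {δ : ℝ} (hδ : 0 < δ) :
    ∃ F : Finset ℕ, ∀ G, Disjoint F G → ∀ d : ℕ → ℝ, ‖∑ k ∈ G, d k • u k‖ ≤ R →
      ∑ k ∈ G, |d k * φ (u k)| ≤ δ := by
  by_contra! hcon
  have hq0 : 0 < q := by linarith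
  have hstack : ∀ N : ℕ, ∃ (H : Finset ℕ) (d : ℕ → ℝ), Q d H ≤ N * (A * R ^ q) ∧
      N * δ ≤ ∑ k ∈ H, |d k * φ (u k)| := fun N => by
    induction N with
    | zero =>
      refine ⟨∅, 0, ?_, by simp⟩
      have := hQ1 0 ∅
      simpa [Real.zero_rpow hq0.ne'] using this
    | succ N ih =>
      obtain ⟨H, d, h1, h2⟩ := ih
      obtain ⟨G, hG, e, he, hδe⟩ := hcon H
      have hd : ∀ k ∈ H, (if k ∈ G then e k else d k) = d k := fun k hk =>
        if_neg (Finset.disjoint_left.1 hG hk)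
      have he' : ∀ k ∈ G, (if k ∈ G then e k else d k) = e k := fun k hk => if_pos hk
      refine ⟨H ∪ G, fun k => if k ∈ G then e k else d k, ?_, ?_⟩
      · refine (hunion _ _ _ hG).trans ?_
        rw [hcongr _ d H fun k hk => by rw [hd k hk], hcongr _ e G fun k hk => by rw [he' k hk]]
        have h3 : Q e G ≤ A * R ^ q := (hQ1 e G).trans (by gcongr)
        push_cast; linarith
      · have e1 : ∑ k ∈ H, |(if k ∈ G then e k else d k) * φ (u k)| = ∑ k ∈ H, |d k * φ (u k)| :=
          Finset.sum_congr rfl fun k hk => by rw [hd k hk]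
        have e2 : ∑ k ∈ G, |(if k ∈ G then e k else d k) * φ (u k)| = ∑ k ∈ G, |e k * φ (u k)| :=
          Finset.sum_congr rfl fun k hk => by rw [he' k hk]
        rw [Finset.sum_union hG, e1, e2]
        push_cast; linarith
  have hbound : ∀ N : ℕ, (N * δ) ^ q ≤ N * (‖φ‖ ^ q * (A * (A * R ^ q))) := fun N => by
    obtain ⟨H, d, h1, h2⟩ := hstack N
    -- choose signs so that all the terms of `φ (∑ e k • u k)` are nonnegative
    set e : ℕ → ℝ := fun k => if 0 ≤ d k * φ (u k) then d k else -d k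
    have he : ∑ k ∈ H, |d k * φ (u k)| = φ (∑ k ∈ H, e k • u k) := by
      rw [map_sum]
      refine Finset.sum_congr rfl fun k _ => ?_
      rw [map_smul, smul_eq_mul]
      by_cases h : 0 ≤ d k * φ (u k)
      · simp only [e, if_pos h, abs_of_nonneg h]
      · simp only [e, if_neg h, abs_of_neg (not_le.1 h)]; ring
    have h3 : N * δ ≤ ‖φ‖ * ‖∑ k ∈ H, e k • u k‖ :=
      (h2.trans he.le).trans ((le_abs_self _).trans (φ.le_opNorm _))
    have h4 : Q e H = Q d H := hcongr _ _ _ fun k _ => by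
      simp only [e]; split_ifs <;> ring
    calc (N * δ) ^ q ≤ (‖φ‖ * ‖∑ k ∈ H, e k • u k‖) ^ q :=
          Real.rpow_le_rpow (by positivity) h3 hq0.le
      _ = ‖φ‖ ^ q * ‖∑ k ∈ H, e k • u k‖ ^ q := Real.mul_rpow (norm_nonneg _) (norm_nonneg _)
      _ ≤ ‖φ‖ ^ q * (A * (N * (A * R ^ q))) := by
          refine mul_le_mul_of_nonneg_left ((hQ2 e H).trans ?_) (by positivity)
          rw [h4]; exact mul_le_mul_of_nonneg_left h1 hA
      _ = _ := by ring
  set M := ‖φ‖ ^ q * (A * (A * R ^ q))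
  have hlim : Tendsto (fun N : ℕ => (N : ℝ) ^ (q - 1)) atTop atTop :=
    (tendsto_rpow_atTop (by linarith)).comp tendsto_natCast_atTop_atTop
  obtain ⟨N, hN, hN1⟩ := ((hlim.eventually_gt_atTop (M / δ ^ q)).and (eventually_ge_atTop 1)).exists
  have hNpos : (0 : ℝ) < N := by exact_mod_cast hN1
  have h := hbound N
  rw [Real.mul_rpow hNpos.le hδ.le] at h
  rw [Real.rpow_sub_one hNpos.ne', div_lt_div_iff₀ (by positivity) hNpos] at hN
  linarith

/-- A seminorm that is controlled on the basis vectors by an `ℓ²` sequence plus the values of a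
functional with uniformly small tails is determined on the unit ball, up to `ε`, by finitely many
coordinates. -/
lemma seminorm_le_coeffs {u : ℕ → X} {c : X →ₗ[ℝ] (ℕ → ℝ)}
    (hc : ∀ f, HasSum (fun k => c f k • u k) f) {K B : ℝ} (hK1 : 0 ≤ K) (hB : 0 ≤ B)
    (hK : ∀ f (F : Finset ℕ), ‖∑ k ∈ F, c f k • u k‖ ≤ K * ‖f‖)
    (hcotype : ∀ (d : ℕ → ℝ) (H : Finset ℕ), √(∑ k ∈ H, d k ^ 2) ≤ B * ‖∑ k ∈ H, d k • u k‖)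
    (φ : X →L[ℝ] ℝ)
    (htail : ∀ δ > 0, ∃ F : Finset ℕ, ∀ G, Disjoint F G → ∀ d : ℕ → ℝ,
      ‖∑ k ∈ G, d k • u k‖ ≤ K → ∑ k ∈ G, |d k * φ (u k)| ≤ δ)
    (n : Seminorm ℝ X) (hn : ∀ f, n f ≤ ‖f‖) {a : ℕ → ℝ}
    (ha : Summable fun k => a k ^ 2) (hna : ∀ k, n (u k) ≤ 2 * a k + |φ (u k)|)
    {ε : ℝ} (hε : 0 < ε) :
    ∃ F : Finset ℕ, ∀ f, ‖f‖ ≤ 1 → n f ≤ ∑ k ∈ F, |c f k| * n (u k) + ε := by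
  obtain ⟨F₁, hF₁⟩ := htail (ε / 4) (by positivity)
  set η : ℝ := ε / (8 * (B * K + 1)) with hη
  have hBK : 0 ≤ B * K := mul_nonneg hB hK1
  have hηpos : 0 < η := by positivity
  obtain ⟨F₂, hF₂⟩ := summable_iff_vanishing_norm.1 ha (η ^ 2) (by positivity)
  refine ⟨F₁ ∪ F₂, fun f hf => ?_⟩
  obtain ⟨H₀, hH₀⟩ := Metric.tendsto_atTop.1 (hc f) (ε / 4) (by positivity)
  set H := H₀ ∪ (F₁ ∪ F₂)
  have hH := hH₀ H Finset.subset_union_left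
  rw [dist_comm, dist_eq_norm] at hH
  set G := H \ (F₁ ∪ F₂)
  have hGK : ‖∑ k ∈ G, c f k • u k‖ ≤ K := (hK f G).trans (mul_le_of_le_one_right hK1 hf)
  have hG1 : ∑ k ∈ G, |c f k * φ (u k)| ≤ ε / 4 :=
    hF₁ G (Finset.disjoint_sdiff.mono_left Finset.subset_union_left) (c f) hGK
  have hG2 : ∑ k ∈ G, |c f k| * a k ≤ ε / 8 := by
    have h1 : √(∑ k ∈ G, a k ^ 2) ≤ η := by
      have := hF₂ G (Finset.disjoint_sdiff.mono_left Finset.subset_union_right).symm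
      refine Real.sqrt_le_iff.2 ⟨hηpos.le, ?_⟩
      exact (le_abs_self _).trans this.le
    have h2 : √(∑ k ∈ G, |c f k| ^ 2) ≤ B * K := by
      simp_rw [sq_abs]
      exact (hcotype (c f) G).trans (by gcongr)
    calc ∑ k ∈ G, |c f k| * a k ≤ √(∑ k ∈ G, |c f k| ^ 2) * √(∑ k ∈ G, a k ^ 2) :=
          Real.sum_mul_le_sqrt_mul_sqrt _ _ _
      _ ≤ (B * K) * η := by gcongr
      _ ≤ (B * K + 1) * η := by gcongr; linarith
      _ = ε / 8 := by rw [hη]; field_simp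
  have hsum : n (∑ k ∈ H, c f k • u k) ≤ ∑ k ∈ H, |c f k| * n (u k) := by
    refine (Finset.le_sum_of_subadditive n (map_zero n).le (map_add_le_add n) _ _).trans (le_of_eq ?_)
    exact Finset.sum_congr rfl fun k _ => by rw [map_smul_eq_mul, Real.norm_eq_abs]
  have hsplit : ∑ k ∈ H, |c f k| * n (u k) =
      ∑ k ∈ G, |c f k| * n (u k) + ∑ k ∈ F₁ ∪ F₂, |c f k| * n (u k) :=
    (Finset.sum_sdiff Finset.subset_union_right).symm
  have hGn : ∑ k ∈ G, |c f k| * n (u k) ≤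
      2 * ∑ k ∈ G, |c f k| * a k + ∑ k ∈ G, |c f k * φ (u k)| := by
    rw [Finset.mul_sum, ← Finset.sum_add_distrib]
    refine Finset.sum_le_sum fun k _ => ?_
    rw [abs_mul]
    nlinarith [mul_le_mul_of_nonneg_left (hna k) (abs_nonneg (c f k))]
  have htri : n f ≤ n (∑ k ∈ H, c f k • u k) + n (f - ∑ k ∈ H, c f k • u k) := by
    simpa using map_add_le_add n (∑ k ∈ H, c f k • u k) (f - ∑ k ∈ H, c f k • u k)
  linarith [hn (f - ∑ k ∈ H, c f k • u k)]

end Tail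

/-! ### Oscillating test functions -/

section Oscillation

/-- Riemann–Lebesgue lemma for the frequencies `m * n`, as `n → ∞`. -/
lemma tendsto_integral_cos_mul {w : ℝ → ℝ} (hw : Integrable w) (m : ℕ) (hm : 0 < m) :
    Tendsto (fun n : ℕ => ∫ x, Real.cos (2 * Real.pi * (x * ((m * n : ℕ) : ℝ))) * w x) atTop (𝓝 0) := by
  have hcast : Tendsto (fun n : ℕ => ((m * n : ℕ) : ℝ)) atTop (cocompact ℝ) :=
    (tendsto_natCast_atTop_atTop.comp (tendsto_id.const_mul_atTop' hm)).mono_right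
      atTop_le_cocompact
  have h := (Real.tendsto_integral_exp_smul_cocompact (fun x => (w x : ℂ))).comp hcast
  have hre := (Complex.continuous_re.tendsto 0).comp h
  rw [Complex.zero_re] at hre
  refine hre.congr fun n => ?_
  simp only [Function.comp_apply]
  have hint : Integrable (fun x : ℝ => (Real.fourierChar (-(x * ((m * n : ℕ) : ℝ)))) • (w x : ℂ)) := by
    refine hw.mono ?_ (Eventually.of_forall fun x => by simp)
    refine AEStronglyMeasurable.smul (f := fun x : ℝ => Real.fourierChar (-(x * ((m * n : ℕ) : ℝ)))) ?_ (hw.ofReal (𝕜 := ℂ)).aestronglyMeasurable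
    exact (Real.continuous_fourierChar.comp (by fun_prop)).aestronglyMeasurable
  have := integral_re hint
  simp only [RCLike.re_eq_complex_re] at this
  rw [← this]
  refine integral_congr_ae (Eventually.of_forall fun x => ?_)
  simp only [Circle.smul_def, Real.fourierChar_apply, smul_eq_mul, Complex.re_mul_ofReal]
  rw [Complex.exp_ofReal_mul_I_re]
  congr 1
  rw [← Real.cos_neg]; congr 1; ring

/-- A bounded functional on `L^p`, `p ≤ 2`, restricts to one on `L²`, hence is given on bounded
functions by integration against some `w ∈ L² ⊆ L¹` (Riesz representation). -/
lemma exists_density {α : Type*} [MeasurableSpace α] {μ : Measure α} [IsProbabilityMeasure μ]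
    {p : ℝ≥0∞} [Fact (1 ≤ p)] (hp2 : p ≤ 2) (ψ : Lp ℝ p μ →L[ℝ] ℝ) :
    ∃ w : α → ℝ, Integrable w μ ∧ ∀ (g : α → ℝ) (hg : MemLp g p μ), MemLp g 2 μ →
      ψ (hg.toLp g) = ∫ x, g x * w x ∂μ := by
  have hmem : ∀ f : Lp ℝ 2 μ, MemLp f p μ := fun f => (Lp.memLp f).mono_exponent hp2
  let J₀ : Lp ℝ 2 μ →ₗ[ℝ] Lp ℝ p μ :=
    { toFun := fun f => (hmem f).toLp f
      map_add' := fun f g => by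
        rw [← MemLp.toLp_add]
        exact MemLp.toLp_congr _ _ (Lp.coeFn_add f g)
      map_smul' := fun r f => by
        rw [RingHom.id_apply, ← MemLp.toLp_const_smul]
        exact MemLp.toLp_congr _ _ (Lp.coeFn_smul r f) }
  let J : Lp ℝ 2 μ →L[ℝ] Lp ℝ p μ := J₀.mkContinuous 1 fun f => by
    rw [one_mul]
    change ‖(hmem f).toLp f‖ ≤ ‖f‖
    rw [Lp.norm_toLp, Lp.norm_def]
    exact ENNReal.toReal_mono (Lp.eLpNorm_ne_top f)
      (eLpNorm_le_eLpNorm_of_exponent_le hp2 (Lp.aestronglyMeasurable f))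
  set w : Lp ℝ 2 μ := (InnerProductSpace.toDual ℝ (Lp ℝ 2 μ)).symm (ψ.comp J) with hw
  refine ⟨w, (Lp.memLp w).integrable (by norm_num), fun g hg hg2 => ?_⟩
  have h1 : (ψ.comp J) (hg2.toLp g) = inner ℝ w (hg2.toLp g) := by
    rw [hw, InnerProductSpace.toDual_symm_apply]
  have h2 : (ψ.comp J) (hg2.toLp g) = ψ (hg.toLp g) := by
    change ψ ((hmem _).toLp _) = _
    congr 1
    exact MemLp.toLp_congr _ _ hg2.coeFn_toLp
  rw [← h2, h1, L2.inner_def]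
  refine integral_congr_ae ?_
  filter_upwards [hg2.coeFn_toLp] with x hx
  rw [hx]; simp

end Oscillation

/-- Lebesgue measure on the unit interval. -/
noncomputable abbrev unitMeasure : Measure ℝ := volume.restrict (Set.Ioo (0:ℝ) 1)

instance : IsProbabilityMeasure unitMeasure := ⟨by simp [unitMeasure]⟩

section Concrete
variable {p : ℝ≥0∞} [hp : Fact (1 ≤ p)]

lemma setIntegral_eq_unit {E : Set ℝ} (hE : E ⊆ Set.Ioo (0:ℝ) 1) (g : ℝ → ℝ) :
    ∫ x in E, g x = ∫ x in E, g x ∂unitMeasure := by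
  rw [unitMeasure, Measure.restrict_restrict_of_subset hE]

lemma integrableOn_Lp (f : Lp ℝ p unitMeasure) (E : Set ℝ) : IntegrableOn f E unitMeasure :=
  ((Lp.memLp f).integrable hp.out).integrableOn

lemma setIntegral_abs_le_norm (f : Lp ℝ p unitMeasure) (E : Set ℝ) :
    ∫ x in E, |f x| ∂unitMeasure ≤ ‖f‖ := by
  have hi : Integrable f unitMeasure := (Lp.memLp f).integrable hp.out
  calc ∫ x in E, |f x| ∂unitMeasure ≤ ∫ x, |f x| ∂unitMeasure :=
        setIntegral_le_integral hi.abs (Eventually.of_forall fun x => abs_nonneg _)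
    _ = (eLpNorm f 1 unitMeasure).toReal := by
        rw [eLpNorm_one_eq_lintegral_enorm, ← integral_norm_eq_lintegral_enorm hi.1]; rfl
    _ ≤ ‖f‖ := by
        rw [Lp.norm_def]
        exact ENNReal.toReal_mono (Lp.eLpNorm_ne_top f)
          (eLpNorm_le_eLpNorm_of_exponent_le hp.out (Lp.aestronglyMeasurable f))

/-- The functional `f ↦ ∫_E f` on `L^p(0,1)`. -/
noncomputable def intFun (p : ℝ≥0∞) [Fact (1 ≤ p)] (E : Set ℝ) : Lp ℝ p unitMeasure →L[ℝ] ℝ :=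
  LinearMap.mkContinuous
    { toFun := fun f => ∫ x in E, f x ∂unitMeasure
      map_add' := fun f g => by
        rw [← integral_add (integrableOn_Lp f E) (integrableOn_Lp g E)]
        exact integral_congr_ae (ae_restrict_of_ae (Lp.coeFn_add f g))
      map_smul' := fun r f => by
        rw [RingHom.id_apply, smul_eq_mul, ← integral_const_mul]
        exact integral_congr_ae (ae_restrict_of_ae (Lp.coeFn_smul r f)) } 1 fun f => by
    rw [one_mul]
    exact (norm_integral_le_integral_norm _).trans (setIntegral_abs_le_norm f E)

/-- The seminorm `f ↦ ∫_E |f|` on `L^p(0,1)`. -/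
noncomputable def absSeminorm (p : ℝ≥0∞) [Fact (1 ≤ p)] (E : Set ℝ) :
    Seminorm ℝ (Lp ℝ p unitMeasure) :=
  Seminorm.of (fun f => ∫ x in E, |f x| ∂unitMeasure)
    (fun f g => by
      rw [← integral_add (integrableOn_Lp f E).abs (integrableOn_Lp g E).abs]
      refine integral_mono_ae (integrableOn_Lp (f + g) E).abs
        ((integrableOn_Lp f E).abs.add (integrableOn_Lp g E).abs) ?_
      filter_upwards [ae_restrict_of_ae (Lp.coeFn_add f g)] with x hx
      rw [hx]; exact abs_add_le _ _)
    (fun r f => by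
      rw [Real.norm_eq_abs, ← integral_const_mul]
      refine integral_congr_ae ?_
      filter_upwards [ae_restrict_of_ae (Lp.coeFn_smul r f)] with x hx
      rw [hx]; simp [abs_mul])

/-- The oscillating test functions `1_E cos(2 π n x)`. -/
noncomputable def osc (E : Set ℝ) (n : ℕ) : ℝ → ℝ :=
  E.indicator fun x => Real.cos (2 * Real.pi * (x * n))

lemma measurable_osc {E : Set ℝ} (hE : MeasurableSet E) (n : ℕ) : Measurable (osc E n) :=
  Measurable.indicator (by fun_prop) hE

lemma norm_osc_le (E : Set ℝ) (n : ℕ) (x : ℝ) : ‖osc E n x‖ ≤ 1 :=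
  (norm_indicator_le_norm_self _ _).trans (Real.abs_cos_le_one _)

lemma memLp_osc {E : Set ℝ} (hE : MeasurableSet E) (n : ℕ) (r : ℝ≥0∞) :
    MemLp (osc E n) r unitMeasure :=
  MemLp.of_bound (measurable_osc hE n).aestronglyMeasurable 1 (Eventually.of_forall (norm_osc_le E n))

omit hp in
lemma norm_toLp_osc_le {E : Set ℝ} (hE : MeasurableSet E) (n : ℕ) :
    ‖(memLp_osc hE n p).toLp (osc E n)‖ ≤ 1 := by
  rw [Lp.norm_toLp]
  refine ENNReal.toReal_le_of_le_ofReal zero_le_one ?_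
  refine (eLpNorm_le_of_ae_bound (Eventually.of_forall (norm_osc_le E n))).trans ?_
  simp

/-- The test functions tend weakly to `0`. -/
lemma tendsto_functional_osc (hp2 : p ≤ 2) {E : Set ℝ} (hE : MeasurableSet E)
    (ψ : Lp ℝ p unitMeasure →L[ℝ] ℝ) :
    Tendsto (fun n => ψ ((memLp_osc hE n p).toLp (osc E n))) atTop (𝓝 0) := by
  obtain ⟨w, hw, hψ⟩ := exists_density hp2 ψ
  have hw' : Integrable ((Set.Ioo (0:ℝ) 1).indicator (E.indicator w)) :=
    IntegrableOn.integrable_indicator (hw.indicator hE) measurableSet_Ioo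
  refine (tendsto_integral_cos_mul hw' 1 one_pos).congr fun n => ?_
  rw [hψ _ _ (memLp_osc hE n 2), unitMeasure, ← integral_indicator measurableSet_Ioo]
  congr 1; ext x
  simp only [osc, Set.indicator]
  split_ifs <;> simp

/-- The test functions do not tend to `0` in `L¹(E)`: `|cos| ≥ cos² = (1 + cos (2 ·)) / 2`, and
the integral on the left tends to `0`. -/
lemma absSeminorm_osc_ge {E : Set ℝ} (hEs : E ⊆ Set.Ioo (0:ℝ) 1) (hE : MeasurableSet E) (n : ℕ) :
    (volume.real E + ∫ x, Real.cos (2 * Real.pi * (x * ((2 * n : ℕ) : ℝ))) * E.indicator 1 x) / 2 ≤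
      absSeminorm p E ((memLp_osc hE n p).toLp (osc E n)) := by
  have hfin : volume E < ∞ := (measure_mono hEs).trans_lt (by simp)
  have h1 : absSeminorm p E ((memLp_osc hE n p).toLp (osc E n)) =
      ∫ x in E, |Real.cos (2 * Real.pi * (x * n))| := by
    change ∫ x in E, |_| ∂unitMeasure = _
    rw [setIntegral_eq_unit hEs]
    refine integral_congr_ae ?_
    filter_upwards [ae_restrict_of_ae (memLp_osc hE n p).coeFn_toLp, ae_restrict_mem hE] with x hx hxE
    rw [hx, osc, Set.indicator_of_mem hxE]
  have : IsFiniteMeasure (volume.restrict E) := ⟨by simpa using hfin⟩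
  have hbdd : ∀ g : ℝ → ℝ, Continuous g → (∀ x, ‖g x‖ ≤ 1) → Integrable g (volume.restrict E) :=
    fun g hg hb => Integrable.of_bound hg.aestronglyMeasurable 1 (Eventually.of_forall hb)
  have hc2 : Integrable (fun x => Real.cos (2 * Real.pi * (x * ((2 * n : ℕ) : ℝ))))
      (volume.restrict E) := hbdd _ (by fun_prop) fun x => Real.abs_cos_le_one _
  have h2 : ∫ x, Real.cos (2 * Real.pi * (x * ((2 * n : ℕ) : ℝ))) * E.indicator 1 x =
      ∫ x in E, Real.cos (2 * Real.pi * (x * ((2 * n : ℕ) : ℝ))) := by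
    rw [← integral_indicator hE]
    congr 1; ext x
    simp only [Set.indicator]
    split_ifs <;> simp
  have h3 : volume.real E = ∫ x in E, (1 : ℝ) := by simp
  rw [h1, h2, h3, ← integral_add (integrable_const _) hc2, ← integral_div]
  refine integral_mono (((integrable_const _).add hc2).div_const _)
    (hbdd _ (by fun_prop) fun x => by simpa using Real.abs_cos_le_one _) fun x => ?_
  have h4 : Real.cos (2 * Real.pi * (x * ((2 * n : ℕ) : ℝ))) =
      2 * Real.cos (2 * Real.pi * (x * n)) ^ 2 - 1 := by
    rw [← Real.cos_two_mul]; congr 1; push_cast; ring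
  simp only [h4]
  have h5 := Real.abs_cos_le_one (2 * Real.pi * (x * n))
  rw [← sq_abs]
  nlinarith [abs_nonneg (Real.cos (2 * Real.pi * (x * n)))]

end Concrete

/-! ### Divergence of the integrals and of the pointwise sums -/

section Main
variable {p : ℝ≥0∞} [hp : Fact (1 ≤ p)]

/-- If `(∫_E (u k)⁺)` were in `ℓ²`, the `L¹(E)` norm would be controlled by finitely many
coordinates, against the behaviour of the functions `1_E cos (2 π n x)`. -/
lemma not_summable_sq_integral_pos (hp1 : 1 < p) (hp2 : p ≤ 2) (u : ℕ → Lp ℝ p unitMeasure)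
    (hnorm : ∀ k, ‖u k‖ = 1)
    (hbasis : ∀ f : Lp ℝ p unitMeasure, ∃! c : ℕ → ℝ, HasSum (fun k => c k • u k) f)
    {E : Set ℝ} (hEs : E ⊆ Set.Ioo (0:ℝ) 1) (hE : MeasurableSet E) (hpos : 0 < volume E) :
    ¬ Summable fun k => (∫ x in E, max (u k x) 0) ^ 2 := by
  intro ha
  have hpt : p ≠ ∞ := (hp2.trans_lt (by simp)).ne
  have hp0 : p ≠ 0 := (zero_lt_one.trans hp1).ne'
  have hq : 1 < p.toReal := by
    simpa using (ENNReal.toReal_lt_toReal ENNReal.one_ne_top hpt).2 hp1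
  have hq0 : 0 < p.toReal := by linarith
  obtain ⟨c, hc, hu⟩ := exists_coeff hbasis
  obtain ⟨K, hK1, hK⟩ := exists_unconditional_const hc hu
  have hK0 : 0 ≤ K := by linarith
  have hequiv := sqFun_equiv hp1.le hp2 (u := u) (B := 2 * K) (by positivity)
    (norm_sum_sign_le hu hK)
  set A : ℝ := 3 * (2 * K) ^ p.toReal with hA
  have hA0 : 0 ≤ A := by positivity
  have hQ1 : ∀ d H, sqFun u d H ≤ A * ‖∑ k ∈ H, d k • u k‖ ^ p.toReal := fun d H =>
    (hequiv d H).1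
  have hQ2 : ∀ d H, ‖∑ k ∈ H, d k • u k‖ ^ p.toReal ≤ A * sqFun u d H := fun d H => by
    refine (hequiv d H).2.trans ?_
    have : 0 ≤ sqFun u d H :=
      integral_nonneg fun x => Real.rpow_nonneg (Finset.sum_nonneg fun _ _ => sq_nonneg _) _
    rw [hA]; gcongr; norm_num
  -- cotype 2 estimate, obtained by taking `p`-th roots
  have hcotype : ∀ (d : ℕ → ℝ) (H : Finset ℕ),
      √(∑ k ∈ H, d k ^ 2) ≤ A ^ p.toReal⁻¹ * ‖∑ k ∈ H, d k • u k‖ := fun d H => by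
    have h := (rpow_sum_sq_le_sqFun hp0 hp2 hnorm d H).trans (hQ1 d H)
    have hS : 0 ≤ ∑ k ∈ H, d k ^ 2 := Finset.sum_nonneg fun _ _ => sq_nonneg _
    refine (Real.rpow_le_rpow_iff (Real.sqrt_nonneg _) (by positivity) hq0).1 ?_
    rw [Real.mul_rpow (by positivity) (norm_nonneg _), ← Real.rpow_mul hA0,
      inv_mul_cancel₀ hq0.ne', Real.rpow_one, Real.sqrt_eq_rpow, ← Real.rpow_mul hS]
    refine le_trans (le_of_eq ?_) h
    congr 1; ring
  -- `|t| = 2 t⁺ - t`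
  have hna : ∀ k, absSeminorm p E (u k) ≤
      2 * (∫ x in E, max (u k x) 0) + |intFun p E (u k)| := fun k => by
    have hi := integrableOn_Lp (u k) E
    have h1 : absSeminorm p E (u k) =
        2 * (∫ x in E, max (u k x) 0) - intFun p E (u k) := by
      change ∫ x in E, |u k x| ∂unitMeasure = _ - ∫ x in E, u k x ∂unitMeasure
      rw [setIntegral_eq_unit hEs, ← integral_const_mul,
        ← integral_sub (hi.pos_part.const_mul _) hi]
      refine integral_congr_ae (Eventually.of_forall fun x => ?_)
      rcases le_total (u k x) 0 with h | h
      · simp [h, abs_of_nonpos]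
      · simp only [abs_of_nonneg h, max_eq_left h]; ring
    linarith [neg_le_abs (intFun p E (u k))]
  have hvol : 0 < volume.real E :=
    ENNReal.toReal_pos hpos.ne' ((measure_mono hEs).trans_lt (by simp)).ne
  obtain ⟨F, hF⟩ := seminorm_le_coeffs hc hK0 (by positivity) hK hcotype (intFun p E)
    (fun δ hδ => tail_small (Q := sqFun u) (intFun p E) hq hA0 (fun d e H h => sqFun_congr u h)
      (fun d H G h => sqFun_union_le hp0 hp2 u d h) hQ1 hQ2 hδ)
    (absSeminorm p E) (fun f => setIntegral_abs_le_norm f E) ha hna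
    (ε := volume.real E / 4) (by positivity)
  -- the coordinates are bounded functionals
  have hψ : ∀ k, ∃ ψ : Lp ℝ p unitMeasure →L[ℝ] ℝ, ∀ f, ψ f = c f k := fun k =>
    ⟨((LinearMap.proj k).comp c).mkContinuous K fun f => by
      have := hK f {k}
      rw [Finset.sum_singleton, norm_smul, hnorm, mul_one] at this
      simpa using this, fun f => rfl⟩
  have hcoef : ∀ k, Tendsto (fun n => c ((memLp_osc hE n p).toLp (osc E n)) k) atTop (𝓝 0) :=
    fun k => by
      obtain ⟨ψ, hψ⟩ := hψ k
      simpa only [hψ] using tendsto_functional_osc hp2 hE ψ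
  have hone : Integrable (E.indicator (1 : ℝ → ℝ)) :=
    (integrable_indicator_iff hE).2 (by
      have : volume E ≠ ∞ := ((measure_mono hEs).trans_lt (by simp)).ne
      exact integrableOn_const this)
  have hlow := ((tendsto_integral_cos_mul hone 2 two_pos).const_add (volume.real E)).div_const 2
  have hhigh : Tendsto (fun n => ∑ k ∈ F, |c ((memLp_osc hE n p).toLp (osc E n)) k| *
      absSeminorm p E (u k) + volume.real E / 4) atTop
      (𝓝 (∑ k ∈ F, |(0 : ℝ)| * absSeminorm p E (u k) + volume.real E / 4)) :=
    (tendsto_finsetSum _ fun k _ => (hcoef k).abs.mul_const _).add_const _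
  have := le_of_tendsto_of_tendsto' hlow hhigh fun n =>
    (absSeminorm_osc_ge hEs hE n).trans (hF _ (norm_toLp_osc_le hE n))
  simp only [abs_zero, zero_mul, Finset.sum_const_zero, add_zero, zero_add] at this
  linarith

/-- A divergence statement for integrals over all sets of positive measure passes to
pointwise divergence: otherwise the sum of squares would be bounded on a set of positive measure,
against the Cauchy–Schwarz inequality. -/
lemma ae_not_summable_sq {g : ℕ → ℝ → ℝ} (hg : ∀ k, Measurable (g k))
    (h : ∀ E : Set ℝ, E ⊆ Set.Ioo (0:ℝ) 1 → MeasurableSet E → 0 < volume E →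
      ¬ Summable fun k => (∫ x in E, g k x) ^ 2) :
    ∀ᵐ x ∂unitMeasure, ¬ Summable fun k => g k x ^ 2 := by
  set S : ℝ → ℝ≥0∞ := fun x => ∑' k, ENNReal.ofReal (g k x ^ 2) with hSdef
  have hS : Measurable S := by
    refine Measurable.tsum fun k => ?_
    have := hg k
    fun_prop
  set E : ℕ → Set ℝ := fun N => Set.Ioo (0:ℝ) 1 ∩ {x | S x ≤ N}
  have hEm : ∀ N, MeasurableSet (E N) := fun N =>
    measurableSet_Ioo.inter (measurableSet_le hS measurable_const)
  have hzero : ∀ N, volume (E N) = 0 := fun N => by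
    by_contra hne
    refine h (E N) Set.inter_subset_left (hEm N) (pos_iff_ne_zero.2 hne) ?_
    set ν := volume.restrict (E N)
    have hν1 : ν Set.univ ≤ 1 := by
      rw [Measure.restrict_apply_univ]
      exact (measure_mono Set.inter_subset_left).trans (by simp)
    have hSν : ∫⁻ x, S x ∂ν ≤ N := by
      calc ∫⁻ x, S x ∂ν ≤ ∫⁻ _, (N : ℝ≥0∞) ∂ν := by
            refine lintegral_mono_ae ?_
            filter_upwards [ae_restrict_mem (hEm N)] with x hx using hx.2
        _ ≤ N := by
            rw [lintegral_const]
            exact mul_le_of_le_one_right' hν1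
    have hkey : ∀ k, ENNReal.ofReal ((∫ x, g k x ∂ν) ^ 2) ≤
        ∫⁻ x, ENNReal.ofReal (g k x ^ 2) ∂ν := fun k => by
      have he : ∀ x : ℝ, ENNReal.ofReal (x ^ 2) = ‖x‖ₑ ^ (2:ℝ) := fun x => by
        rw [← sq_abs, ENNReal.ofReal_pow (abs_nonneg x), ← Real.norm_eq_abs, ofReal_norm]
        norm_cast
      simp_rw [he]
      have hH := ENNReal.lintegral_mul_le_Lp_mul_Lq ν Real.HolderConjugate.two_two
        (hg k).enorm.aemeasurable (aemeasurable_const (b := (1 : ℝ≥0∞)))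
      simp only [Pi.mul_apply, mul_one, ENNReal.one_rpow, lintegral_one] at hH
      have h1 : ‖∫ x, g k x ∂ν‖ₑ ≤ (∫⁻ x, ‖g k x‖ₑ ^ (2:ℝ) ∂ν) ^ (1 / (2:ℝ)) :=
        (enorm_integral_le_lintegral_enorm _).trans (hH.trans
          (mul_le_of_le_one_right' (ENNReal.rpow_le_one hν1 (by norm_num))))
      refine (ENNReal.rpow_le_rpow h1 (by norm_num : (0:ℝ) ≤ 2)).trans (le_of_eq ?_)
      rw [← ENNReal.rpow_mul]; norm_num
    have hfin : ∑' k, ENNReal.ofReal ((∫ x, g k x ∂ν) ^ 2) ≠ ∞ := by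
      refine ne_top_of_le_ne_top (ENNReal.natCast_ne_top N) ((ENNReal.tsum_le_tsum hkey).trans ?_)
      rw [← lintegral_tsum fun k => by have := hg k; fun_prop]
      exact hSν
    have := ENNReal.summable_toReal hfin
    simpa only [ENNReal.toReal_ofReal (sq_nonneg _)] using this
  have hall : ∀ᵐ x ∂unitMeasure, ∀ N : ℕ, x ∉ E N := ae_all_iff.2 fun N =>
    ae_restrict_of_ae (measure_eq_zero_iff_ae_notMem.1 (hzero N))
  filter_upwards [hall, ae_restrict_mem measurableSet_Ioo] with x hx hx01 hsum
  have hSx : S x ≠ ∞ := by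
    rw [hSdef]
    exact hsum.tsum_ofReal_ne_top
  obtain ⟨N, hN⟩ := ENNReal.exists_nat_gt hSx
  exact hx N ⟨hx01, hN.le⟩

end Main

end UBSigns

/-- Let `1 < p ≤ 2` and `(u k)` a normalized unconditional basis of
`L^p_ℝ(0,1)`. Then for every measurable `E ⊆ (0,1)` of positive measure the sequences
`(∫_E uₖ⁺)ₖ` and `(∫_E uₖ⁻)ₖ` are not in `ℓ²`; in particular
`∑ₖ (uₖ⁺ x)² = ∞` and `∑ₖ (uₖ⁻ x)² = ∞` for a.e. `x ∈ (0,1)`. -/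
theorem unconditional_basis_Lp_small_p_signs
    (p : ℝ≥0∞) [Fact (1 ≤ p)] (hp1 : 1 < p) (hp2 : p ≤ 2)
    (u : ℕ → Lp ℝ p (volume.restrict (Set.Ioo (0:ℝ) 1)))
    (hnorm : ∀ k, ‖u k‖ = 1)
    (hbasis : ∀ f : Lp ℝ p (volume.restrict (Set.Ioo (0:ℝ) 1)),
      ∃! c : ℕ → ℝ, HasSum (fun k => c k • u k) f) :
    (∀ E : Set ℝ, E ⊆ Set.Ioo (0:ℝ) 1 → MeasurableSet E → 0 < volume E →
      (¬ Summable fun k => (∫ x in E, max ((u k : ℝ → ℝ) x) 0) ^ 2) ∧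
      (¬ Summable fun k => (∫ x in E, max (-((u k : ℝ → ℝ) x)) 0) ^ 2)) ∧
    (∀ᵐ x ∂(volume.restrict (Set.Ioo (0:ℝ) 1)),
      (¬ Summable fun k => (max ((u k : ℝ → ℝ) x) 0) ^ 2) ∧
      (¬ Summable fun k => (max (-((u k : ℝ → ℝ) x)) 0) ^ 2)) := by
  have hneg : ∀ k, ((-u k : Lp ℝ p (volume.restrict (Set.Ioo (0:ℝ) 1))) : ℝ → ℝ)
      =ᵐ[volume.restrict (Set.Ioo (0:ℝ) 1)] fun x => -(u k x) := fun k => Lp.coeFn_neg (u k)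
  have hpos : ∀ E : Set ℝ, E ⊆ Set.Ioo (0:ℝ) 1 → MeasurableSet E → 0 < volume E →
      ¬ Summable fun k => (∫ x in E, max ((u k : ℝ → ℝ) x) 0) ^ 2 := fun E h1 h2 h3 =>
    UBSigns.not_summable_sq_integral_pos hp1 hp2 u hnorm hbasis h1 h2 h3
  -- `-u` is again a normalized unconditional basis, and `u⁻ = (-u)⁺`
  have hnegpos : ∀ E : Set ℝ, E ⊆ Set.Ioo (0:ℝ) 1 → MeasurableSet E → 0 < volume E →
      ¬ Summable fun k => (∫ x in E, max (-((u k : ℝ → ℝ) x)) 0) ^ 2 := fun E h1 h2 h3 => by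
    have h := UBSigns.not_summable_sq_integral_pos hp1 hp2 (fun k => -u k) (by simpa using hnorm)
      (fun f => by
        simp only [smul_neg]
        obtain ⟨c, hc, hcu⟩ := hbasis f
        refine ⟨fun k => -c k, by simpa using hc, fun d hd => ?_⟩
        have := hcu (fun k => -d k) (by simpa using hd)
        ext k
        rw [← this]; simp) h1 h2 h3
    have hint : ∀ k, ∫ x in E, max ((-u k : Lp ℝ p (volume.restrict (Set.Ioo (0:ℝ) 1))) x) 0 =
        ∫ x in E, max (-((u k : ℝ → ℝ) x)) 0 := fun k => by
      refine integral_congr_ae ?_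
      filter_upwards [ae_restrict_of_ae_restrict_of_subset h1 (hneg k)] with x hx
      rw [hx]
    simpa only [hint] using h
  have hm : ∀ k, Measurable (u k : ℝ → ℝ) := fun k => (Lp.stronglyMeasurable (u k)).measurable
  refine ⟨fun E h1 h2 h3 => ⟨hpos E h1 h2 h3, hnegpos E h1 h2 h3⟩, ?_⟩
  filter_upwards [UBSigns.ae_not_summable_sq (fun k => (hm k).max measurable_const) hpos,
    UBSigns.ae_not_summable_sq (fun k => (hm k).neg.max measurable_const) hnegpos] with x h1 h2
  exact ⟨h1, h2⟩
end

section
/- Let 2 < p < ∞, let p' be the conjugate exponent (1/p + 1/p' = 1), and let (u_k)_{k≥1} be a normalized unconditional basis of L^p_ℝ(0,1) (Lebesgue measure). Then for every measurable set E ⊂ (0,1) of positive Lebesgue measure, the sequence (∫_E u_k⁺ dx)_{k≥1} does not belong to ℓ^{p'} and the sequence (∫_E u_k⁻ dx)_{k≥1} does not belong to ℓ^{p'}. In particular, ∑_{k≥1} (u_k⁺(x))^{p'} = ∞ and ∑_{k≥1} (u_k⁻(x))^{p'} = ∞ for almost every x ∈ (0,1). -/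
/-!
The proof is by contradiction. Let `c f k` be the coefficients of `f` in the basis and suppose that
`(∫_E uₖ⁺)` lies in `ℓ^{p'}`. By the closed graph theorem all finite partial sums of `f` are bounded
by `K ‖f‖` (`exists_partial_sum_bound`), hence signed partial sums by `2 K ‖f‖`. Since `L^p` has
cotype `p` for `p ≥ 2` (`exists_signs_sum_rpow_le`, from Clarkson's inequality), the coefficients
lie in `ℓ^p`, and Hölder's inequality bounds `∑ |c f k| ∫_E uₖ⁺`. As `∑ |c f k| ∫_E uₖ` is also
bounded, being the integral over `E` of an expansion with changed signs, so is
`∑ |c f k| ∫_E |uₖ|` (`exists_l1_bound`).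

Thus `f ↦ (c f k ∫_E |uₖ|)ₖ` is a bounded operator from `L^p` to `ℓ¹`, and the `ℓ¹` norm of the
image dominates `∫_E |f|`. Such an operator is compact, by reflexivity of `L^p` and the Schur
property of `ℓ¹`, while the inclusion of `L^p` into `L¹(E)` is not. Concretely, the norm of a signed
sum of `N` of the functions `cos (2π (n+1) x)` is `O(N^{1-1/p})`, by interpolation between `L²` and
`L^∞` (`norm_sum_cosLp_le`); this makes them weakly null (`tendsto_zero_of_sums`), and a gliding
hump (`no_lower_bound_of_sums`) produces sums of `N` of them whose image has `ℓ¹` norm at least a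
constant times `N`, because their `L¹(E)` norms stay away from zero. This is absurd for large `N`.

The negative parts are handled by the basis `-uₖ`, and the pointwise statement follows from the
integral one by Jensen's inequality (`ae_not_summable_posPart`).
-/

open MeasureTheory ENNReal

/-! ### Unconditional bases and operators into `ℓ¹` -/

section Abstract

theorem bddAbove_norm_partial_sums {X : Type*} [NormedAddCommGroup X] [CompleteSpace X]
    {v : ℕ → X} (hv : Summable v) :
    BddAbove (Set.range fun F : Finset ℕ => ‖∑ k ∈ F, v k‖) := by
  obtain ⟨s, hs⟩ := summable_iff_vanishing_norm.1 hv 1 one_pos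
  refine ⟨∑ k ∈ s, ‖v k‖ + 1, ?_⟩
  rintro _ ⟨F, rfl⟩
  have h1 : ∑ k ∈ F, v k = ∑ k ∈ F ∩ s, v k + ∑ k ∈ F \ s, v k := by
    rw [Finset.sum_inter_add_sum_sdiff]
  have h2 : ‖∑ k ∈ F ∩ s, v k‖ ≤ ∑ k ∈ s, ‖v k‖ :=
    (norm_sum_le _ _).trans
      (Finset.sum_le_sum_of_subset_of_nonneg Finset.inter_subset_right fun _ _ _ => norm_nonneg _)
  have h3 := hs (F \ s) Finset.sdiff_disjoint
  simp only [h1]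
  linarith [norm_add_le (∑ k ∈ F ∩ s, v k) (∑ k ∈ F \ s, v k)]

variable {X : Type*} [NormedAddCommGroup X] [NormedSpace ℝ X]

/-- The partial sum projections of an unconditional basis are uniformly bounded: the map sending
`f` to the family of all its finite partial sums, with values in `ℓ^∞`, has closed graph. -/
theorem exists_partial_sum_bound [CompleteSpace X] {u : ℕ → X} (hu : ∀ k, ‖u k‖ = 1)
    {c : X → ℕ → ℝ} (hc : ∀ f, HasSum (fun k => c f k • u k) f)
    (huniq : ∀ f d, HasSum (fun k => d k • u k) f → d = c f) :
    ∃ K : ℝ, 0 ≤ K ∧ ∀ f (F : Finset ℕ), ‖∑ k ∈ F, c f k • u k‖ ≤ K * ‖f‖ := by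
  have hadd : ∀ f g, c (f + g) = c f + c g := fun f g =>
    (huniq _ _ (by simpa [add_smul] using (hc f).add (hc g))).symm
  have hsmul : ∀ (a : ℝ) f, c (a • f) = a • c f := fun a f =>
    (huniq _ _ (by simpa [mul_smul] using (hc f).const_smul a)).symm
  let J : X →ₗ[ℝ] lp (fun _ : Finset ℕ => X) ∞ :=
    { toFun := fun f => ⟨fun F => ∑ k ∈ F, c f k • u k,
        memℓp_infty (bddAbove_norm_partial_sums (hc f).summable)⟩
      map_add' := fun f g => by
        ext F; simp [hadd, add_smul, Finset.sum_add_distrib]; rfl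
      map_smul' := fun a f => by
        ext F; simp [hsmul, mul_smul, Finset.smul_sum] }
  have hJ : ∀ f F, J f F = ∑ k ∈ F, c f k • u k := fun f F => rfl
  have hcont : Continuous J := by
    refine J.continuous_of_seq_closed_graph fun x f s hx hs => ?_
    have hpt : ∀ F, Filter.Tendsto (fun n => J (x n) F) Filter.atTop (nhds (s F)) := by
      intro F
      rw [tendsto_iff_norm_sub_tendsto_zero] at hs ⊢
      refine squeeze_zero (fun _ => norm_nonneg _) (fun n => ?_) hs
      exact lp.norm_apply_le_norm (by simp) (J (x n) - s) F
    -- each coordinate sequence is Cauchy because `u k` has norm one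
    have hlim : ∀ k, ∃ d : ℝ, Filter.Tendsto (fun n => c (x n) k) Filter.atTop (nhds d) := by
      intro k
      refine cauchySeq_tendsto_of_complete ?_
      have h1 := (hpt {k}).cauchySeq
      rw [Metric.cauchySeq_iff] at h1 ⊢
      intro ε hε
      obtain ⟨N, hN⟩ := h1 ε hε
      refine ⟨N, fun m hm n hn => ?_⟩
      have := hN m hm n hn
      simpa [hJ, dist_eq_norm, ← sub_smul, norm_smul, hu] using this
    choose d hd using hlim
    have hsF : ∀ F, s F = ∑ k ∈ F, d k • u k := fun F =>
      tendsto_nhds_unique (hpt F)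
        (tendsto_finsetSum _ fun k _ => (hd k).smul_const (u k))
    have hdsum : HasSum (fun k => d k • u k) f := by
      rw [HasSum, SummationFilter.unconditional_filter, Metric.tendsto_atTop]
      intro ε hε
      rw [Metric.tendsto_atTop] at hx hs
      obtain ⟨N1, hN1⟩ := hx (ε / 3) (by positivity)
      obtain ⟨N2, hN2⟩ := hs (ε / 3) (by positivity)
      set n := max N1 N2
      have h1 := hN1 n (le_max_left _ _)
      have h2 := hN2 n (le_max_right _ _)
      have h3 := hc (x n)
      rw [HasSum, SummationFilter.unconditional_filter, Metric.tendsto_atTop] at h3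
      obtain ⟨F0, hF0⟩ := h3 (ε / 3) (by positivity)
      refine ⟨F0, fun F hF => ?_⟩
      have h4 := hF0 F hF
      have h5 : dist (J (x n) F) (s F) < ε / 3 := by
        refine lt_of_le_of_lt ?_ h2
        rw [dist_eq_norm, Function.comp_apply, dist_eq_norm]
        exact lp.norm_apply_le_norm (by simp) (J (x n) - s) F
      rw [hsF, hJ, dist_comm] at h5
      calc _ ≤ _ := dist_triangle4 _ _ _ _
        _ < ε / 3 + ε / 3 + ε / 3 := add_lt_add (add_lt_add h5 h4) h1
        _ = ε := by ring
    ext F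
    rw [hsF, hJ, huniq f d hdsum]
  let T : X →L[ℝ] lp (fun _ : Finset ℕ => X) ∞ := ⟨J, hcont⟩
  refine ⟨‖T‖, norm_nonneg _, fun f F => ?_⟩
  exact (lp.norm_apply_le_norm (by simp) (T f) F).trans (T.le_opNorm f)

/-- Changing signs in a finite partial sum costs at most twice the partial sum bound. -/
theorem norm_signed_sum_le {u : ℕ → X} {a : ℕ → ℝ} {M : ℝ}
    (hM : ∀ F : Finset ℕ, ‖∑ k ∈ F, a k • u k‖ ≤ M) {e : ℕ → ℝ}
    (he : ∀ k, e k = 1 ∨ e k = -1) (F : Finset ℕ) :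
    ‖∑ k ∈ F, e k • a k • u k‖ ≤ 2 * M := by
  classical
  have h1 : ∑ k ∈ F, e k • a k • u k =
      ∑ k ∈ F with e k = 1, a k • u k - ∑ k ∈ F with ¬ e k = 1, a k • u k := by
    rw [← Finset.sum_filter_add_sum_filter_not F (fun k => e k = 1), sub_eq_add_neg,
      ← Finset.sum_neg_distrib]
    congr 1
    · refine Finset.sum_congr rfl fun k hk => ?_
      rw [(Finset.mem_filter.1 hk).2, one_smul]
    · refine Finset.sum_congr rfl fun k hk => ?_
      rw [(he k).resolve_left (Finset.mem_filter.1 hk).2, neg_one_smul]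
  rw [h1]
  linarith [norm_sub_le (∑ k ∈ F with e k = 1, a k • u k) (∑ k ∈ F with ¬ e k = 1, a k • u k),
    hM {k ∈ F | e k = 1}, hM {k ∈ F | ¬ e k = 1}]

/-- A bounded functional tends to zero along a sequence whose signed sums of `N` distinct terms
grow slower than `N`. -/
theorem tendsto_zero_of_sums {r : ℕ → X} {B : ℕ → ℝ}
    (hB : ∀ (I : Finset ℕ) (e : ℕ → ℝ), (∀ n, |e n| ≤ 1) → ‖∑ n ∈ I, e n • r n‖ ≤ B I.card)
    (hBo : ∀ η > 0, ∃ N : ℕ, B N < η * N)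
    (φ : X →ₗ[ℝ] ℝ) {C : ℝ} (hφ : ∀ f, |φ f| ≤ C * ‖f‖) :
    Filter.Tendsto (fun n => φ (r n)) Filter.cofinite (nhds 0) := by
  rw [Metric.tendsto_nhds]
  intro η hη
  by_contra hcon
  have hinf : {n | η ≤ |φ (r n)|}.Infinite := by
    intro hfin
    apply hcon
    refine Filter.mem_of_superset hfin.compl_mem_cofinite fun n hn => ?_
    simpa using hn
  have hC : 0 < |C| + 1 := by positivity
  obtain ⟨N, hN⟩ := hBo (η / (|C| + 1)) (by positivity)
  obtain ⟨I, hI, hIc⟩ := hinf.exists_subset_card_eq N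
  let e : ℕ → ℝ := fun n => SignType.sign (φ (r n))
  have he : ∀ n, |e n| ≤ 1 := by
    intro n
    rcases lt_trichotomy (φ (r n)) 0 with h | h | h <;> simp [e, h, sign_neg, sign_pos]
  have h1 : η * N ≤ φ (∑ n ∈ I, e n • r n) := by
    rw [map_sum]
    have : ∑ n ∈ I, η ≤ ∑ n ∈ I, φ (e n • r n) := by
      refine Finset.sum_le_sum fun n hn => ?_
      rw [map_smul, smul_eq_mul, sign_mul_self]
      exact hI hn
    simpa [hIc, mul_comm] using this
  have h2 := (le_abs_self _).trans (hφ (∑ n ∈ I, e n • r n))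
  have h3 := hB I e he
  rw [hIc] at h3
  have h4 : C * ‖∑ n ∈ I, e n • r n‖ ≤ (|C| + 1) * ‖∑ n ∈ I, e n • r n‖ := by
    gcongr; linarith [le_abs_self C]
  have h5 : (|C| + 1) * ‖∑ n ∈ I, e n • r n‖ < η * N := by
    calc _ ≤ (|C| + 1) * B N := by gcongr
      _ < (|C| + 1) * (η / (|C| + 1) * N) := by gcongr
      _ = η * N := by field_simp
  linarith

/-- Gliding hump, in the spirit of the Schur property of `ℓ¹`: an operator into `ℓ¹` (given by
its coordinates `φ k`) cannot stay bounded below along a sequence whose signed sums of `N`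
distinct terms grow slower than `N`. Adding a far away `r n` to a fixed `f` increases the
`ℓ¹` norm of the image by almost the full norm of the image of `r n`. -/
theorem no_lower_bound_of_sums {r : ℕ → X} {B : ℕ → ℝ}
    (hB : ∀ (I : Finset ℕ) (e : ℕ → ℝ), (∀ n, |e n| ≤ 1) → ‖∑ n ∈ I, e n • r n‖ ≤ B I.card)
    (hBo : ∀ η > 0, ∃ N : ℕ, B N < η * N)
    (φ : ℕ → X →ₗ[ℝ] ℝ) {C : ℝ} (hφ : ∀ f (F : Finset ℕ), ∑ k ∈ F, |φ k f| ≤ C * ‖f‖)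
    {δ : ℝ} (hδ : 0 < δ) (hlow : ∀ᶠ n in Filter.cofinite, δ ≤ ∑' k, |φ k (r n)|) : False := by
  have hsum : ∀ f, Summable fun k => |φ k f| := fun f =>
    summable_of_sum_le (fun _ => abs_nonneg _) (hφ f)
  have hto : ∀ k, Filter.Tendsto (fun n => φ k (r n)) Filter.cofinite (nhds 0) := fun k =>
    tendsto_zero_of_sums hB hBo (φ k) (C := C) fun f => by simpa using hφ f {k}
  have key : ∀ N : ℕ, ∃ I : Finset ℕ, I.card = N ∧
      N * (δ / 2) ≤ ∑' k, |φ k (∑ n ∈ I, r n)| := by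
    intro N
    induction N with
    | zero => exact ⟨∅, rfl, by simp⟩
    | succ N ih =>
      obtain ⟨I, hI, hIN⟩ := ih
      set f := ∑ n ∈ I, r n with hf
      -- most of the image of `f` lives on `F`, almost none of the image of `r n` does
      obtain ⟨F, hF⟩ : ∃ F : Finset ℕ, ∑' k, |φ k f| - δ / 8 < ∑ k ∈ F, |φ k f| :=
        ((hsum f).hasSum.eventually (lt_mem_nhds (by linarith))).exists
      have hsmall : ∀ᶠ n in Filter.cofinite, ∑ k ∈ F, |φ k (r n)| < δ / 8 := by
        have : Filter.Tendsto (fun n => ∑ k ∈ F, |φ k (r n)|) Filter.cofinite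
            (nhds (∑ k ∈ F, |(0 : ℝ)|)) := tendsto_finsetSum _ fun k _ => (hto k).abs
        exact this.eventually (gt_mem_nhds (by simp; positivity))
      obtain ⟨n, hn1, hn2, hn3⟩ :=
        (hsmall.and (hlow.and I.finite_toSet.compl_mem_cofinite)).exists
      have hnI : n ∉ I := by simpa using hn3
      refine ⟨insert n I, by simp [hnI, hI], ?_⟩
      rw [Finset.sum_insert hnI, ← hf]
      have e1 := (hsum f).sum_add_tsum_compl (s := F)
      have e2 := (hsum (r n)).sum_add_tsum_compl (s := F)
      have e3 := (hsum (r n + f)).sum_add_tsum_compl (s := F)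
      have s1 : Summable fun k : ↑((F : Set ℕ)ᶜ) => |φ k f| := (hsum f).subtype _
      have s2 : Summable fun k : ↑((F : Set ℕ)ᶜ) => |φ k (r n)| := (hsum (r n)).subtype _
      have s3 : Summable fun k : ↑((F : Set ℕ)ᶜ) => |φ k (r n + f)| := (hsum _).subtype _
      have i1 : ∑ k ∈ F, |φ k f| - ∑ k ∈ F, |φ k (r n)| ≤ ∑ k ∈ F, |φ k (r n + f)| := by
        rw [← Finset.sum_sub_distrib]
        refine Finset.sum_le_sum fun k _ => ?_
        rw [map_add]
        have := abs_sub_abs_le_abs_sub (φ k f) (-φ k (r n))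
        rw [abs_neg, sub_neg_eq_add, add_comm (φ k f)] at this
        exact this
      have i2 : ∑' k : ↑((F : Set ℕ)ᶜ), |φ k (r n)| - ∑' k : ↑((F : Set ℕ)ᶜ), |φ k f| ≤
          ∑' k : ↑((F : Set ℕ)ᶜ), |φ k (r n + f)| := by
        rw [← s2.tsum_sub s1]
        refine (s2.sub s1).tsum_le_tsum (fun k => ?_) s3
        rw [map_add]
        have := abs_sub_abs_le_abs_sub (φ k (r n)) (-φ k f)
        rw [abs_neg, sub_neg_eq_add] at this
        exact this
      push_cast
      linarith
  have hC : 0 < |C| + 1 := by positivity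
  obtain ⟨N, hN⟩ := hBo (δ / 2 / (|C| + 1)) (by positivity)
  obtain ⟨I, hI, hIN⟩ := key N
  have h1 : ∑' k, |φ k (∑ n ∈ I, r n)| ≤ C * ‖∑ n ∈ I, r n‖ :=
    (hsum _).tsum_le_of_sum_le (hφ _)
  have h2 : ‖∑ n ∈ I, r n‖ ≤ B N := by
    have := hB I (fun _ => 1) (by simp)
    simpa [hI] using this
  have h4 : C * ‖∑ n ∈ I, r n‖ ≤ (|C| + 1) * ‖∑ n ∈ I, r n‖ := by
    gcongr; linarith [le_abs_self C]
  have h5 : (|C| + 1) * ‖∑ n ∈ I, r n‖ < N * (δ / 2) := by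
    calc _ ≤ (|C| + 1) * B N := by gcongr
      _ < (|C| + 1) * (δ / 2 / (|C| + 1) * N) := by gcongr
      _ = N * (δ / 2) := by field_simp
  linarith

end Abstract

/-! ### Cotype of `L^p` and norms in `L¹(E)` -/

section LpEstimates

variable {α : Type*} {m : MeasurableSpace α} {μ : Measure α} {p : ℝ≥0∞}

theorem Lp_norm_rpow_eq [Fact (1 ≤ p)] (hp : p ≠ ⊤) (f : Lp ℝ p μ) :
    ‖f‖ ^ p.toReal = ∫ x, |f x| ^ p.toReal ∂μ := by
  have h0 : p ≠ 0 := (zero_lt_one.trans_le Fact.out).ne'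
  have hq : 0 < p.toReal := ENNReal.toReal_pos h0 hp
  have hI : 0 ≤ ∫ x, ‖f x‖ ^ p.toReal ∂μ := integral_nonneg fun x => by positivity
  rw [Lp.norm_def, (Lp.memLp f).eLpNorm_eq_integral_rpow_norm h0 hp,
    ENNReal.toReal_ofReal (by positivity), Real.rpow_inv_rpow hI hq.ne']
  rfl

theorem Lp_integrable_rpow [Fact (1 ≤ p)] (hp : p ≠ ⊤) (f : Lp ℝ p μ) :
    Integrable (fun x => |f x| ^ p.toReal) μ :=
  (Lp.memLp f).integrable_norm_rpow (zero_lt_one.trans_le Fact.out).ne' hp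

/-- Convexity of `t ↦ t^{q/2}` and the parallelogram law bound the right side below by
`2 (a² + b²)^{q/2}`, and superadditivity of the same power finishes. -/
theorem two_point_ineq {q : ℝ} (hq : 2 ≤ q) (a b : ℝ) :
    2 * (|a| ^ q + |b| ^ q) ≤ |a + b| ^ q + |a - b| ^ q := by
  have hsq : ∀ t : ℝ, |t| ^ q = (t ^ 2) ^ (q / 2) := by
    intro t
    rw [← sq_abs, ← Real.rpow_natCast, ← Real.rpow_mul (abs_nonneg t)]
    congr 1; push_cast; ring
  simp only [hsq]
  have h1 := Real.add_rpow_le_rpow_add (sq_nonneg a) (sq_nonneg b) (p := q / 2) (by linarith)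
  have hconv : ConvexOn ℝ (Set.Ici 0) fun x : ℝ => x ^ (q / 2) := convexOn_rpow (by linarith)
  have h2 := hconv.2 (Set.mem_Ici.2 (sq_nonneg (a + b))) (Set.mem_Ici.2 (sq_nonneg (a - b)))
    (by norm_num : (0 : ℝ) ≤ 1 / 2) (by norm_num : (0 : ℝ) ≤ 1 / 2) (by norm_num)
  simp only [smul_eq_mul] at h2
  rw [show 1 / 2 * (a + b) ^ 2 + 1 / 2 * (a - b) ^ 2 = a ^ 2 + b ^ 2 by ring] at h2
  linarith

/-- Clarkson's inequality for `p ≥ 2`, in the direction that yields cotype `p`. -/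
theorem Lp_clarkson [Fact (1 ≤ p)] (hp2 : 2 ≤ p) (hp : p ≠ ⊤) (f g : Lp ℝ p μ) :
    2 * (‖f‖ ^ p.toReal + ‖g‖ ^ p.toReal) ≤ ‖f + g‖ ^ p.toReal + ‖f - g‖ ^ p.toReal := by
  have hq : 2 ≤ p.toReal := by simpa using ENNReal.toReal_mono hp hp2
  simp only [Lp_norm_rpow_eq hp]
  rw [← integral_add (Lp_integrable_rpow hp _) (Lp_integrable_rpow hp _),
    ← integral_add (Lp_integrable_rpow hp _) (Lp_integrable_rpow hp _), ← integral_const_mul]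
  refine integral_mono_ae
    (((Lp_integrable_rpow hp _).add (Lp_integrable_rpow hp _)).const_mul 2)
    ((Lp_integrable_rpow hp _).add (Lp_integrable_rpow hp _)) ?_
  filter_upwards [Lp.coeFn_add f g, Lp.coeFn_sub f g] with x h1 h2
  simp only [h1, h2, Pi.add_apply, Pi.sub_apply]
  exact two_point_ineq hq _ _

/-- Cotype `p` of `L^p` for `p ≥ 2`, with constant one: some choice of signs makes the sum at
least as large as the `ℓ^p` norm of the summands. -/
theorem exists_signs_sum_rpow_le [Fact (1 ≤ p)] (hp2 : 2 ≤ p) (hp : p ≠ ⊤) (v : ℕ → Lp ℝ p μ)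
    (F : Finset ℕ) : ∃ e : ℕ → ℝ, (∀ k, e k = 1 ∨ e k = -1) ∧
      ∑ k ∈ F, ‖v k‖ ^ p.toReal ≤ ‖∑ k ∈ F, e k • v k‖ ^ p.toReal := by
  have hq : 2 ≤ p.toReal := by simpa using ENNReal.toReal_mono hp hp2
  induction F using Finset.induction_on with
  | empty => exact ⟨fun _ => 1, by simp, by simp [Real.zero_rpow (by linarith : p.toReal ≠ 0)]⟩
  | insert j F hj ih =>
    obtain ⟨e, he, hle⟩ := ih
    have hup : ∀ t : ℝ, ∑ k ∈ insert j F, Function.update e j t k • v k =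
        t • v j + ∑ k ∈ F, e k • v k := by
      intro t
      rw [Finset.sum_insert hj, Function.update_self]
      congr 1
      refine Finset.sum_congr rfl fun k hk => ?_
      rw [Function.update_of_ne (ne_of_mem_of_not_mem hk hj)]
    have hs : ∀ t : ℝ, (t = 1 ∨ t = -1) → ∀ k,
        Function.update e j t k = 1 ∨ Function.update e j t k = -1 := by
      intro t ht k
      by_cases h : k = j
      · subst h; simpa using ht
      · simpa [Function.update_of_ne h] using he k
    have hcl := Lp_clarkson hp2 hp (∑ k ∈ F, e k • v k) (v j)
    rw [Finset.sum_insert hj]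
    by_cases hcase : ‖∑ k ∈ F, e k • v k - v j‖ ^ p.toReal ≤
        ‖∑ k ∈ F, e k • v k + v j‖ ^ p.toReal
    · refine ⟨Function.update e j 1, hs 1 (Or.inl rfl), ?_⟩
      rw [hup, one_smul, add_comm (v j)]
      linarith
    · refine ⟨Function.update e j (-1), hs (-1) (Or.inr rfl), ?_⟩
      rw [hup, neg_one_smul, neg_add_eq_sub]
      linarith

theorem Lp_integrable_restrict [IsProbabilityMeasure μ] [Fact (1 ≤ p)] (E : Set α)
    (f : Lp ℝ p μ) : Integrable f (μ.restrict E) :=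
  ((Lp.memLp f).integrable Fact.out).restrict

theorem setIntegral_abs_le_norm [IsProbabilityMeasure μ] [Fact (1 ≤ p)] (E : Set α)
    (f : Lp ℝ p μ) : ∫ x in E, |f x| ∂μ ≤ ‖f‖ := by
  have hf : Integrable f μ := (Lp.memLp f).integrable Fact.out
  have h1 : ∫ x in E, |f x| ∂μ ≤ ∫ x, |f x| ∂μ :=
    setIntegral_le_integral hf.abs (ae_of_all _ fun x => abs_nonneg _)
  have h2 : ∫ x, |f x| ∂μ = (eLpNorm f 1 μ).toReal := by
    rw [eLpNorm_one_eq_lintegral_enorm, ← integral_norm_eq_lintegral_enorm hf.1]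
    rfl
  have h3 : (eLpNorm f 1 μ).toReal ≤ (eLpNorm f p μ).toReal :=
    ENNReal.toReal_mono (Lp.memLp f).2.ne
      (eLpNorm_le_eLpNorm_of_exponent_le Fact.out hf.1)
  rw [Lp.norm_def]
  linarith

/-- Integration over `E` as a linear functional on `L^p` of a probability space. -/
noncomputable def setIntegralLin (p : ℝ≥0∞) [Fact (1 ≤ p)] (μ : Measure α) [IsProbabilityMeasure μ]
    (E : Set α) : Lp ℝ p μ →ₗ[ℝ] ℝ where
  toFun f := ∫ x in E, f x ∂μ
  map_add' f g := by
    rw [← integral_add (Lp_integrable_restrict E f) (Lp_integrable_restrict E g)]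
    exact integral_congr_ae (ae_restrict_of_ae (Lp.coeFn_add f g))
  map_smul' a f := by
    rw [RingHom.id_apply, smul_eq_mul, ← integral_const_mul]
    exact integral_congr_ae (ae_restrict_of_ae (Lp.coeFn_smul a f))

theorem abs_setIntegralLin_le [IsProbabilityMeasure μ] [Fact (1 ≤ p)] (E : Set α)
    (f : Lp ℝ p μ) : |setIntegralLin p μ E f| ≤ ‖f‖ :=
  (abs_integral_le_integral_abs).trans (setIntegral_abs_le_norm E f)

theorem setIntegral_abs_add_le [IsProbabilityMeasure μ] [Fact (1 ≤ p)] (E : Set α)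
    (f g : Lp ℝ p μ) :
    ∫ x in E, |(f + g : Lp ℝ p μ) x| ∂μ ≤ ∫ x in E, |f x| ∂μ + ∫ x in E, |g x| ∂μ := by
  rw [← integral_add (Lp_integrable_restrict E f).abs (Lp_integrable_restrict E g).abs]
  refine integral_mono_ae (Lp_integrable_restrict E _).abs
    ((Lp_integrable_restrict E f).abs.add (Lp_integrable_restrict E g).abs)
    (ae_restrict_of_ae ?_)
  filter_upwards [Lp.coeFn_add f g] with x hx
  rw [hx]
  exact abs_add_le _ _

theorem setIntegral_abs_smul [IsProbabilityMeasure μ] [Fact (1 ≤ p)] (E : Set α)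
    (a : ℝ) (f : Lp ℝ p μ) :
    ∫ x in E, |(a • f : Lp ℝ p μ) x| ∂μ = |a| * ∫ x in E, |f x| ∂μ := by
  rw [← integral_const_mul]
  refine integral_congr_ae (ae_restrict_of_ae ?_)
  filter_upwards [Lp.coeFn_smul a f] with x hx
  simp [hx, abs_mul]

theorem setIntegral_abs_sum_le [IsProbabilityMeasure μ] [Fact (1 ≤ p)] (E : Set α)
    (a : ℕ → ℝ) (u : ℕ → Lp ℝ p μ) (F : Finset ℕ) :
    ∫ x in E, |(∑ k ∈ F, a k • u k : Lp ℝ p μ) x| ∂μ ≤ ∑ k ∈ F, |a k| * ∫ x in E, |u k x| ∂μ := by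
  induction F using Finset.induction_on with
  | empty =>
    simp
  | insert j F hj ih =>
    rw [Finset.sum_insert hj, Finset.sum_insert hj, ← setIntegral_abs_smul]
    exact (setIntegral_abs_add_le E _ _).trans (add_le_add le_rfl ih)

/-- If `f = ∑ a k • u k` in `L^p` and `∑ |a k| ‖u k‖` converges in `L¹(E)`, then this sum
dominates the norm of `f` in `L¹(E)`. -/
theorem setIntegral_abs_le_tsum [IsProbabilityMeasure μ] [Fact (1 ≤ p)] (E : Set α)
    {a : ℕ → ℝ} {u : ℕ → Lp ℝ p μ} {f : Lp ℝ p μ} (hf : HasSum (fun k => a k • u k) f)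
    (hs : Summable fun k => |a k| * ∫ x in E, |u k x| ∂μ) :
    ∫ x in E, |f x| ∂μ ≤ ∑' k, |a k| * ∫ x in E, |u k x| ∂μ := by
  refine le_of_forall_pos_le_add fun ε hε => ?_
  rw [HasSum, SummationFilter.unconditional_filter, Metric.tendsto_atTop] at hf
  obtain ⟨F, hF⟩ := hf ε hε
  have h1 := hF F le_rfl
  rw [dist_comm, dist_eq_norm] at h1
  have h2 := setIntegral_abs_add_le E (f - ∑ k ∈ F, a k • u k) (∑ k ∈ F, a k • u k)
  rw [sub_add_cancel] at h2
  have h3 := setIntegral_abs_le_norm E (f - ∑ k ∈ F, a k • u k)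
  have h4 := setIntegral_abs_sum_le E a u F
  have h5 := hs.sum_le_tsum F fun k _ =>
    mul_nonneg (abs_nonneg (a k)) (integral_nonneg fun x => abs_nonneg (u k x))
  linarith

/-- If the integrals of the positive parts over `E` lie in `ℓ^{p'}`, then the coefficient
sequence, weighted by the `L¹(E)` norms of the basis vectors, is bounded in `ℓ¹`. Cotype `p` and
Hölder's inequality control the positive parts; the negative parts follow because
`∑ |c k| ∫_E u k` is controlled by changing the signs in the expansion. -/
theorem exists_l1_bound [IsProbabilityMeasure μ] [Fact (1 ≤ p)] (hp2 : 2 ≤ p) (hp : p ≠ ⊤)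
    {p' : ℝ} (hpp : p.toReal.HolderConjugate p') (E : Set α)
    {u : ℕ → Lp ℝ p μ} (hu : ∀ k, ‖u k‖ = 1) {c : Lp ℝ p μ → ℕ → ℝ} {K : ℝ} (hK : 0 ≤ K)
    (hbd : ∀ f (F : Finset ℕ), ‖∑ k ∈ F, c f k • u k‖ ≤ K * ‖f‖)
    (hs : Summable fun k => |∫ x in E, max (u k x) 0 ∂μ| ^ p') :
    ∃ C : ℝ, ∀ f (F : Finset ℕ), ∑ k ∈ F, |c f k| * ∫ x in E, |u k x| ∂μ ≤ C * ‖f‖ := by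
  have hq : 0 < p.toReal := hpp.pos
  set W := (∑' k, |∫ x in E, max (u k x) 0 ∂μ| ^ p') ^ (1 / p') with hW
  have hT : 0 ≤ ∑' k, |∫ x in E, max (u k x) 0 ∂μ| ^ p' := tsum_nonneg fun k => by positivity
  refine ⟨2 * (2 * K * W) + 2 * K, fun f F => ?_⟩
  have hsign := fun (e : ℕ → ℝ) he => norm_signed_sum_le (hbd f) (e := e) he F
  have hcot : (∑ k ∈ F, |c f k| ^ p.toReal) ^ (1 / p.toReal) ≤ 2 * (K * ‖f‖) := by
    obtain ⟨e, he, hle⟩ := exists_signs_sum_rpow_le hp2 hp (fun k => c f k • u k) F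
    simp only [norm_smul, hu, mul_one, Real.norm_eq_abs] at hle
    have h1 : ∑ k ∈ F, |c f k| ^ p.toReal ≤ (2 * (K * ‖f‖)) ^ p.toReal :=
      hle.trans (Real.rpow_le_rpow (norm_nonneg _) (hsign e he) hq.le)
    calc _ ≤ ((2 * (K * ‖f‖)) ^ p.toReal) ^ (1 / p.toReal) :=
          Real.rpow_le_rpow (Finset.sum_nonneg fun k _ => by positivity) h1 (by positivity)
      _ = _ := by rw [one_div, Real.rpow_rpow_inv (by positivity) hq.ne']
  have hpos : ∑ k ∈ F, |c f k| * ∫ x in E, max (u k x) 0 ∂μ ≤ 2 * (K * ‖f‖) * W := by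
    refine (Real.inner_le_Lp_mul_Lq F (fun k => |c f k|)
      (fun k => ∫ x in E, max (u k x) 0 ∂μ) hpp).trans ?_
    simp only [abs_abs]
    refine mul_le_mul hcot ?_ ?_ (by positivity)
    · refine Real.rpow_le_rpow (Finset.sum_nonneg fun k _ => by positivity)
        (hs.sum_le_tsum F fun k _ => by positivity) (by have := hpp.symm.pos; positivity)
    · exact Real.rpow_nonneg (Finset.sum_nonneg fun k _ => by positivity) _
  have htot : -(2 * (K * ‖f‖)) ≤ ∑ k ∈ F, |c f k| * ∫ x in E, u k x ∂μ := by
    -- with `e k` the sign of `c f k`, this is the integral over `E` of a signed partial sum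
    let e : ℕ → ℝ := fun k => if 0 ≤ c f k then 1 else -1
    have he : ∀ k, e k = 1 ∨ e k = -1 := fun k => by by_cases h : 0 ≤ c f k <;> simp [e, h]
    have hea : ∀ k, e k * c f k = |c f k| := by
      intro k
      by_cases h : 0 ≤ c f k
      · simp [e, h, abs_of_nonneg]
      · simp [e, h, abs_of_neg (not_le.1 h)]
    have h1 := (abs_setIntegralLin_le E (∑ k ∈ F, e k • c f k • u k)).trans (hsign e he)
    rw [map_sum] at h1
    simp only [map_smul, smul_eq_mul, ← mul_assoc, hea] at h1
    have := neg_le_of_abs_le h1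
    rw [mul_assoc] at this
    exact this
  -- `|u| = 2 u⁺ - u`
  have hw : ∀ k, ∫ x in E, |u k x| ∂μ =
      2 * ∫ x in E, max (u k x) 0 ∂μ - ∫ x in E, u k x ∂μ := by
    intro k
    have hi := Lp_integrable_restrict E (u k)
    rw [← integral_const_mul, ← integral_sub (hi.pos_part.const_mul 2) hi]
    refine integral_congr_ae (ae_of_all _ fun x => ?_)
    rcases le_total 0 (u k x) with h | h
    · simp [h, abs_of_nonneg]; ring
    · simp [h, abs_of_nonpos]
  have hsplit : ∑ k ∈ F, |c f k| * ∫ x in E, |u k x| ∂μ =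
      2 * ∑ k ∈ F, |c f k| * ∫ x in E, max (u k x) 0 ∂μ -
        ∑ k ∈ F, |c f k| * ∫ x in E, u k x ∂μ := by
    rw [Finset.mul_sum, ← Finset.sum_sub_distrib]
    refine Finset.sum_congr rfl fun k _ => ?_
    rw [hw]; ring
  rw [hsplit]
  linarith

end LpEstimates

/-! ### Cosines in `L^p(0,1)` -/

section Cosines

/-- The functions `cos (2π (n+1) x)`, `n ≥ 0`; the constant is left out. -/
noncomputable def cosFun (n : ℕ) (x : ℝ) : ℝ := Real.cos (2 * Real.pi * (n + 1) * x)

theorem continuous_cosFun (n : ℕ) : Continuous (cosFun n) := by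
  unfold cosFun; fun_prop

theorem abs_cosFun_le (n : ℕ) (x : ℝ) : |cosFun n x| ≤ 1 := Real.abs_cos_le_one _

theorem integral_cos_int {m : ℤ} (hm : m ≠ 0) :
    ∫ x in (0:ℝ)..1, Real.cos (2 * Real.pi * m * x) = 0 := by
  have hm' : (m : ℝ) ≠ 0 := by exact_mod_cast hm
  have h0 : 2 * Real.pi * m ≠ 0 := by positivity
  rw [intervalIntegral.integral_comp_mul_left (fun y => Real.cos y) h0, integral_cos]
  have : Real.sin (2 * Real.pi * m * 1) = 0 := by
    have := Real.sin_int_mul_pi (2 * m)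
    push_cast at this
    rw [← this]; congr 1; ring
  simp only [this]
  simp

theorem integral_cosFun_mul (n k : ℕ) :
    ∫ x in (0:ℝ)..1, cosFun n x * cosFun k x = if n = k then 1 / 2 else 0 := by
  have h1 : ∀ x, cosFun n x * cosFun k x =
      (Real.cos (2 * Real.pi * (((n : ℤ) - k : ℤ) : ℝ) * x) +
        Real.cos (2 * Real.pi * (((n : ℤ) + k + 2 : ℤ) : ℝ) * x)) / 2 := by
    intro x
    unfold cosFun
    have e1 : 2 * Real.pi * (((n : ℤ) - k : ℤ) : ℝ) * x =
      2 * Real.pi * (n + 1) * x - 2 * Real.pi * (k + 1) * x := by push_cast; ring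
    have e2 : 2 * Real.pi * (((n : ℤ) + k + 2 : ℤ) : ℝ) * x =
      2 * Real.pi * (n + 1) * x + 2 * Real.pi * (k + 1) * x := by push_cast; ring
    rw [e1, e2, Real.cos_sub, Real.cos_add]
    ring
  have hi : ∀ t : ℝ, IntervalIntegrable (fun x => Real.cos (2 * Real.pi * t * x)) volume 0 1 :=
    fun t => Continuous.intervalIntegrable (by fun_prop) _ _
  simp only [h1]
  rw [intervalIntegral.integral_div, intervalIntegral.integral_add (hi _) (hi _),
    integral_cos_int (m := (n : ℤ) + k + 2) (by positivity)]
  split_ifs with h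
  · subst h; simp
  · rw [integral_cos_int (by omega)]; simp

theorem integral_sum_cosFun_sq (I : Finset ℕ) (e : ℕ → ℝ) :
    ∫ x in (0:ℝ)..1, (∑ n ∈ I, e n * cosFun n x) ^ 2 = ∑ n ∈ I, e n ^ 2 / 2 := by
  have h1 : ∀ x, (∑ n ∈ I, e n * cosFun n x) ^ 2 =
      ∑ n ∈ I, ∑ k ∈ I, (e n * e k) * (cosFun n x * cosFun k x) := by
    intro x
    rw [sq, Finset.sum_mul_sum]
    refine Finset.sum_congr rfl fun n _ => Finset.sum_congr rfl fun k _ => by ring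
  have hc : ∀ n k, Continuous fun x => (e n * e k) * (cosFun n x * cosFun k x) := fun n k =>
    continuous_const.mul ((continuous_cosFun n).mul (continuous_cosFun k))
  simp only [h1]
  rw [intervalIntegral.integral_finsetSum fun n _ =>
    (continuous_finsetSum I fun k _ => hc n k).intervalIntegrable _ _]
  refine Finset.sum_congr rfl fun n hn => ?_
  rw [intervalIntegral.integral_finsetSum fun k _ => (hc n k).intervalIntegrable _ _]
  simp only [intervalIntegral.integral_const_mul, integral_cosFun_mul]
  simp [hn, sq]
  ring

/-- Lebesgue measure on the unit interval. -/
noncomputable abbrev unitVol : Measure ℝ := volume.restrict (Set.Ioo (0:ℝ) 1)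

instance : IsProbabilityMeasure unitVol := ⟨by simp [unitVol]⟩

variable {p : ℝ≥0∞}

theorem memLp_cosFun (p : ℝ≥0∞) (n : ℕ) : MemLp (cosFun n) p unitVol :=
  MemLp.of_bound (continuous_cosFun n).aestronglyMeasurable 1
    (ae_of_all _ fun x => abs_cosFun_le n x)

/-- The cosines as elements of `L^p(0,1)`. -/
noncomputable def cosLp (p : ℝ≥0∞) (n : ℕ) : Lp ℝ p unitVol := (memLp_cosFun p n).toLp

/-- Signed sums of `N` cosines have size `O(N^{1-1/p})`: interpolate between the `L²` norm, at
most `√N` by orthogonality, and the sup norm, at most `N`. -/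
theorem norm_sum_cosLp_le [Fact (1 ≤ p)] (hp2 : 2 ≤ p) (hp : p ≠ ⊤) (I : Finset ℕ) (e : ℕ → ℝ)
    (he : ∀ n, |e n| ≤ 1) :
    ‖∑ n ∈ I, e n • cosLp p n‖ ≤ ((I.card : ℝ) ^ (p.toReal - 1)) ^ p.toReal⁻¹ := by
  have hq : 2 ≤ p.toReal := by simpa using ENNReal.toReal_mono hp hp2
  set q := p.toReal with hqdef
  rcases I.eq_empty_or_nonempty with rfl | hne
  · simp only [Finset.sum_empty, norm_zero]; positivity
  have hN : 0 < (I.card : ℝ) := by exact_mod_cast hne.card_pos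
  set S : ℝ → ℝ := fun x => ∑ n ∈ I, e n * cosFun n x with hS
  have hScont : Continuous S :=
    continuous_finsetSum I fun n _ => continuous_const.mul (continuous_cosFun n)
  have hSae : (∑ n ∈ I, e n • cosLp p n : Lp ℝ p unitVol) =ᵐ[unitVol] S := by
    simp only [hS]
    clear_value q
    clear hScont hS S hN hne he
    induction I using Finset.induction_on with
    | empty => filter_upwards with x; simp
    | insert j I hj ih =>
      rw [Finset.sum_insert hj]
      filter_upwards [Lp.coeFn_add (e j • cosLp p j) (∑ n ∈ I, e n • cosLp p n),
        Lp.coeFn_smul (e j) (cosLp p j), (memLp_cosFun p j).coeFn_toLp, ih] with x h1 h2 h3 h4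
      rw [h1, Pi.add_apply, h2, h4, Finset.sum_insert hj, Pi.smul_apply, cosLp, h3, smul_eq_mul]
  have hSb : ∀ x, |S x| ≤ I.card := by
    intro x
    refine (Finset.abs_sum_le_sum_abs _ _).trans ?_
    calc ∑ n ∈ I, |e n * cosFun n x| ≤ ∑ n ∈ I, 1 := by
          refine Finset.sum_le_sum fun n _ => ?_
          rw [abs_mul]
          exact mul_le_one₀ (he n) (abs_nonneg _) (abs_cosFun_le n x)
      _ = I.card := by simp
  have hsq : ∫ x, S x ^ 2 ∂unitVol ≤ I.card := by
    have h1 := integral_sum_cosFun_sq I e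
    rw [intervalIntegral.integral_of_le zero_le_one, ← restrict_Ioo_eq_restrict_Ioc] at h1
    rw [show ∫ x, S x ^ 2 ∂unitVol = ∑ n ∈ I, e n ^ 2 / 2 from h1]
    calc ∑ n ∈ I, e n ^ 2 / 2 ≤ ∑ n ∈ I, (1 : ℝ) := by
          refine Finset.sum_le_sum fun n _ => ?_
          have := (sq_le_one_iff_abs_le_one (e n)).2 (he n)
          linarith
      _ = I.card := by simp
  -- `|S|^q = |S|^(q-2) S²`, with the sup bound for the first factor
  have hpt : ∀ x, |S x| ^ q ≤ (I.card : ℝ) ^ (q - 2) * S x ^ 2 := by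
    intro x
    rcases eq_or_ne (S x) 0 with h | h
    · simp [h, Real.zero_rpow (by linarith : q ≠ 0)]
    · have h0 : 0 < |S x| := abs_pos.2 h
      have : |S x| ^ q = |S x| ^ (q - 2) * S x ^ 2 := by
        rw [← sq_abs (S x), ← Real.rpow_natCast, ← Real.rpow_add h0]
        congr 1; push_cast; ring
      rw [this]
      gcongr
      exact hSb x
  have hint : Integrable (fun x => S x ^ 2) unitVol := by
    refine (integrable_const ((I.card : ℝ) ^ 2)).mono' (hScont.pow 2).aestronglyMeasurable
      (ae_of_all _ fun x => ?_)
    rw [Real.norm_eq_abs, abs_pow]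
    gcongr
    exact hSb x
  have hfin : ‖∑ n ∈ I, e n • cosLp p n‖ ^ q ≤ (I.card : ℝ) ^ (q - 1) := by
    rw [Lp_norm_rpow_eq hp]
    calc ∫ x, |(∑ n ∈ I, e n • cosLp p n : Lp ℝ p unitVol) x| ^ q ∂unitVol
        ≤ ∫ x, (I.card : ℝ) ^ (q - 2) * S x ^ 2 ∂unitVol := by
          refine integral_mono_ae (Lp_integrable_rpow hp _) (hint.const_mul _) ?_
          filter_upwards [hSae] with x hx
          rw [hx]; exact hpt x
      _ = (I.card : ℝ) ^ (q - 2) * ∫ x, S x ^ 2 ∂unitVol := integral_const_mul _ _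
      _ ≤ (I.card : ℝ) ^ (q - 2) * I.card := by gcongr
      _ = (I.card : ℝ) ^ (q - 1) := by
          rw [← Real.rpow_add_one hN.ne']; congr 1; ring
  rw [← Real.rpow_rpow_inv (norm_nonneg (∑ n ∈ I, e n • cosLp p n)) (by linarith : q ≠ 0)]
  exact Real.rpow_le_rpow (by positivity) hfin (by positivity)

theorem exists_rpow_lt_mul {q : ℝ} (hq : 1 < q) {η : ℝ} (hη : 0 < η) :
    ∃ N : ℕ, ((N : ℝ) ^ (q - 1)) ^ q⁻¹ < η * N := by
  obtain ⟨N, hN⟩ := exists_nat_gt (η⁻¹ ^ q)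
  have hN0 : 0 < (N : ℝ) := lt_of_le_of_lt (by positivity) hN
  refine ⟨N, ?_⟩
  have hq0 : 0 < q := by linarith
  rw [Real.rpow_inv_lt_iff_of_pos (by positivity) (by positivity) hq0,
    Real.mul_rpow hη.le hN0.le, Real.rpow_sub_one hN0.ne', div_lt_iff₀ hN0]
  rw [Real.inv_rpow hη.le, inv_lt_iff_one_lt_mul₀ (by positivity)] at hN
  have : 0 < (N : ℝ) ^ q := by positivity
  nlinarith

/-- The cosines do not tend to zero in `L¹(E)`: `|cos θ| ≥ cos² θ = (1 + cos 2θ) / 2`, and the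
cosines are weakly null. -/
theorem eventually_le_setIntegral_cosLp [Fact (1 ≤ p)] (hp2 : 2 ≤ p) (hp : p ≠ ⊤) {E : Set ℝ}
    (hE : 0 < unitVol E) :
    ∀ᶠ n in Filter.cofinite, unitVol.real E / 4 ≤ ∫ x in E, |cosLp p n x| ∂unitVol := by
  have hq : 2 ≤ p.toReal := by simpa using ENNReal.toReal_mono hp hp2
  have hE' : 0 < unitVol.real E := ENNReal.toReal_pos hE.ne' (measure_ne_top _ _)
  have h0 : Filter.Tendsto (fun n => setIntegralLin p unitVol E (cosLp p n))
      Filter.cofinite (nhds 0) :=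
    tendsto_zero_of_sums (B := fun N => ((N : ℝ) ^ (p.toReal - 1)) ^ p.toReal⁻¹)
      (fun I e he => norm_sum_cosLp_le hp2 hp I e he)
      (fun η hη => exists_rpow_lt_mul (by linarith) hη) _ (C := 1)
      (fun f => by simpa using abs_setIntegralLin_le E f)
  have hinj : Function.Injective fun n : ℕ => 2 * n + 1 := fun a b h => by
    simp only at h; omega
  have h1 := h0.comp hinj.tendsto_cofinite
  have h2 := h1.eventually (lt_mem_nhds (show -(unitVol.real E / 2) < 0 by linarith))
  filter_upwards [h2] with n hn
  simp only [Function.comp_apply] at hn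
  have hi : Integrable (cosLp p (2 * n + 1)) (unitVol.restrict E) := Lp_integrable_restrict E _
  have h3 : ∫ x in E, (1 + cosLp p (2 * n + 1) x) / 2 ∂unitVol ≤
      ∫ x in E, |cosLp p n x| ∂unitVol := by
    refine integral_mono_ae (((integrable_const 1).add hi).div_const 2)
      (Lp_integrable_restrict E _).abs (ae_restrict_of_ae ?_)
    filter_upwards [(memLp_cosFun p n).coeFn_toLp, (memLp_cosFun p (2 * n + 1)).coeFn_toLp]
      with x hx1 hx2
    simp only [cosLp, hx1, hx2]
    -- the frequency `2 (n+1)` has index `2 n + 1`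
    have e1 : cosFun (2 * n + 1) x = 2 * cosFun n x ^ 2 - 1 := by
      unfold cosFun
      rw [← Real.cos_two_mul]; congr 1; push_cast; ring
    rw [e1]
    have h4 := abs_cosFun_le n x
    have h5 := sq_abs (cosFun n x)
    nlinarith [abs_nonneg (cosFun n x)]
  rw [integral_div, integral_add (integrable_const 1) hi] at h3
  have h6 : ∫ x in E, (1 : ℝ) ∂unitVol = unitVol.real E := by simp
  rw [h6] at h3
  change _ < ∫ x in E, cosLp p (2 * n + 1) x ∂unitVol at hn
  linarith

end Cosines

/-! ### Positive parts of a basis and pointwise divergence -/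

section Main

/-- Non-summability of the integrals of the positive parts: otherwise the coefficients would give a
bounded operator from `L^p` into `ℓ¹` dominating the `L¹(E)` norm, which the cosines forbid. -/
theorem not_summable_posPart {p : ℝ≥0∞} [Fact (1 ≤ p)] (hp2 : 2 ≤ p) (hp : p ≠ ⊤)
    {p' : ℝ} (hpp : p.toReal.HolderConjugate p') {u : ℕ → Lp ℝ p unitVol} (hu : ∀ k, ‖u k‖ = 1)
    (hbasis : ∀ f : Lp ℝ p unitVol, ∃! c : ℕ → ℝ, HasSum (fun k => c k • u k) f)
    {E : Set ℝ} (hE : 0 < unitVol E) :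
    ¬ Summable fun k => |∫ x in E, max (u k x) 0 ∂unitVol| ^ p' := by
  intro hs
  have hq : 2 ≤ p.toReal := by simpa using ENNReal.toReal_mono hp hp2
  choose c hc huniq using hbasis
  have hc' : ∀ f, HasSum (fun k => c f k • u k) f := hc
  have huniq' : ∀ f d, HasSum (fun k => d k • u k) f → d = c f := huniq
  obtain ⟨K, hK, hbd⟩ := exists_partial_sum_bound hu hc' huniq'
  obtain ⟨C, hC⟩ := exists_l1_bound hp2 hp hpp E hu hK hbd hs
  have hw : ∀ k, 0 ≤ ∫ x in E, |u k x| ∂unitVol := fun k =>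
    integral_nonneg fun x => abs_nonneg _
  -- the coordinates of the operator into `ℓ¹`; linearity comes from uniqueness of expansions
  let φ : ℕ → Lp ℝ p unitVol →ₗ[ℝ] ℝ := fun k =>
    { toFun := fun f => c f k * ∫ x in E, |u k x| ∂unitVol
      map_add' := fun f g => by
        have : c (f + g) = c f + c g :=
          (huniq' _ _ (by simpa [add_smul] using (hc' f).add (hc' g))).symm
        rw [this, Pi.add_apply, add_mul]
      map_smul' := fun a f => by
        have : c (a • f) = a • c f :=
          (huniq' _ _ (by simpa [mul_smul] using (hc' f).const_smul a)).symm
        rw [this, Pi.smul_apply, smul_eq_mul, smul_eq_mul, mul_assoc, RingHom.id_apply] }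
  have hφ : ∀ k f, |φ k f| = |c f k| * ∫ x in E, |u k x| ∂unitVol := fun k f => by
    change |c f k * _| = _
    rw [abs_mul, abs_of_nonneg (hw k)]
  have hE' : 0 < unitVol.real E := ENNReal.toReal_pos hE.ne' (measure_ne_top _ _)
  refine no_lower_bound_of_sums
    (B := fun N => ((N : ℝ) ^ (p.toReal - 1)) ^ p.toReal⁻¹) (r := cosLp p)
    (fun I e he => norm_sum_cosLp_le hp2 hp I e he)
    (fun η hη => exists_rpow_lt_mul (by linarith) hη) φ (C := C)
    (fun f F => by simpa only [hφ] using hC f F)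
    (δ := unitVol.real E / 4) (by positivity) ?_
  filter_upwards [eventually_le_setIntegral_cosLp hp2 hp hE] with n hn
  simp only [hφ]
  refine hn.trans (setIntegral_abs_le_tsum E (hc' _) ?_)
  exact summable_of_sum_le (fun k => mul_nonneg (abs_nonneg _) (hw k)) (hC _)

/-- Jensen's inequality for a power `s > 1` and a measure of total mass at most one. -/
theorem rpow_lintegral_le {α : Type*} {m : MeasurableSpace α} {ν : Measure α} (hν : ν Set.univ ≤ 1)
    {s : ℝ} (hs : 1 < s) {g : α → ℝ≥0∞} (hg : AEMeasurable g ν) :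
    (∫⁻ x, g x ∂ν) ^ s ≤ ∫⁻ x, g x ^ s ∂ν := by
  have hs0 : 0 < s := by linarith
  have h1 := ENNReal.lintegral_mul_le_Lp_mul_Lq ν (Real.HolderConjugate.conjExponent hs) hg
    (aemeasurable_const (b := (1 : ℝ≥0∞)))
  simp only [Pi.mul_apply, mul_one, ENNReal.one_rpow, lintegral_const, one_mul] at h1
  have h2 : ν Set.univ ^ (1 / s.conjExponent) ≤ 1 :=
    ENNReal.rpow_le_one hν (by
      have := (Real.HolderConjugate.conjExponent hs).symm.pos
      positivity)
  have h3 : ∫⁻ x, g x ∂ν ≤ (∫⁻ x, g x ^ s ∂ν) ^ (1 / s) :=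
    h1.trans (mul_le_of_le_one_right' h2)
  calc (∫⁻ x, g x ∂ν) ^ s ≤ ((∫⁻ x, g x ^ s ∂ν) ^ (1 / s)) ^ s := ENNReal.rpow_le_rpow h3 hs0.le
    _ = _ := by rw [← ENNReal.rpow_mul, one_div_mul_cancel hs0.ne', ENNReal.rpow_one]

theorem summable_iff_tsum_ofReal {a : ℕ → ℝ} (ha : ∀ k, 0 ≤ a k) :
    Summable a ↔ ∑' k, ENNReal.ofReal (a k) ≠ ⊤ := by
  refine ⟨fun h => h.tsum_ofReal_ne_top, fun h => ?_⟩
  have := ENNReal.summable_toReal h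
  simpa [ENNReal.toReal_ofReal, ha] using this

/-- The pointwise divergence follows from the divergence of the integrals: if the pointwise sums
converged on a set of positive measure, they would be bounded by some `M` on a set `E` of positive
measure, and Jensen's inequality would bound the sum of the `s`-th powers of the integrals
over `E` by `M`. -/
theorem ae_not_summable_posPart {s : ℝ} (hs : 1 < s) {v : ℕ → ℝ → ℝ} (hv : ∀ k, Measurable (v k))
    (hi : ∀ k, Integrable (v k) unitVol)
    (h : ∀ E : Set ℝ, 0 < unitVol E →
      ¬ Summable fun k => |∫ x in E, max (v k x) 0 ∂unitVol| ^ s) :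
    ∀ᵐ x ∂unitVol, ¬ Summable fun k => (max (v k x) 0) ^ s := by
  have hs0 : 0 < s := by linarith
  let g : ℕ → ℝ → ℝ≥0∞ := fun k x => ENNReal.ofReal (max (v k x) 0)
  have hg : ∀ k, Measurable (g k) := fun k => ((hv k).max measurable_const).ennreal_ofReal
  let G : ℝ → ℝ≥0∞ := fun x => ∑' k, g k x ^ s
  have hGsum : ∀ x, (Summable fun k => (max (v k x) 0) ^ s) ↔ G x ≠ ⊤ := by
    intro x
    rw [summable_iff_tsum_ofReal fun k => by positivity]
    simp only [G, g]
    rw [tsum_congr fun k => ENNReal.ofReal_rpow_of_nonneg (le_max_right (v k x) 0) hs0.le]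
  have hbdd : ∀ M : ℕ, unitVol {x | G x ≤ M} = 0 := by
    intro M
    by_contra hne
    set E := {x | G x ≤ M} with hEdef
    have hEm : MeasurableSet E :=
      measurableSet_le (Measurable.tsum fun k => (hg k).pow_const s) measurable_const
    refine h E (pos_iff_ne_zero.2 hne) ?_
    rw [summable_iff_tsum_ofReal fun k => by positivity]
    have h1 : ∀ k, ENNReal.ofReal (|∫ x in E, max (v k x) 0 ∂unitVol| ^ s) ≤
        ∫⁻ x in E, g k x ^ s ∂unitVol := by
      intro k
      have h0 : 0 ≤ ∫ x in E, max (v k x) 0 ∂unitVol := integral_nonneg fun x => le_max_right _ _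
      rw [abs_of_nonneg h0, ← ENNReal.ofReal_rpow_of_nonneg h0 hs0.le,
        ofReal_integral_eq_lintegral_ofReal (hi k).restrict.pos_part
          (ae_of_all _ fun x => le_max_right _ _)]
      refine rpow_lintegral_le ?_ hs (hg k).aemeasurable
      rw [Measure.restrict_apply_univ]
      exact prob_le_one
    refine ne_top_of_le_ne_top (b := (M : ℝ≥0∞)) (by simp) ?_
    calc ∑' k, ENNReal.ofReal (|∫ x in E, max (v k x) 0 ∂unitVol| ^ s)
        ≤ ∑' k, ∫⁻ x in E, g k x ^ s ∂unitVol := ENNReal.tsum_le_tsum h1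
      _ = ∫⁻ x in E, G x ∂unitVol :=
          (lintegral_tsum fun k => ((hg k).pow_const s).aemeasurable).symm
      _ ≤ ∫⁻ x in E, M ∂unitVol := setLIntegral_mono measurable_const fun x hx => hx
      _ ≤ M := by
          rw [setLIntegral_const]
          exact mul_le_of_le_one_right' prob_le_one
  -- a point where `G` is finite lies in one of these countably many null sets
  have hall : ∀ᵐ x ∂unitVol, ∀ M : ℕ, ¬ G x ≤ M := by
    rw [ae_all_iff]
    intro M
    rw [ae_iff]
    simpa using hbdd M
  filter_upwards [hall] with x hx
  rw [hGsum, not_not]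
  by_contra hne
  obtain ⟨M, hM⟩ := ENNReal.exists_nat_gt hne
  exact hx M hM.le

end Main

/-- Let `2 < p < ∞`, `p'` the conjugate exponent, and `(u k)` a
normalized unconditional basis of `L^p_ℝ(0,1)`. Then for every measurable
`E ⊆ (0,1)` of positive measure the sequences `(∫_E uₖ⁺)ₖ` and `(∫_E uₖ⁻)ₖ` are not
in `ℓ^{p'}`; in particular `∑ₖ (uₖ⁺ x)^{p'} = ∞` and `∑ₖ (uₖ⁻ x)^{p'} = ∞` for
a.e. `x ∈ (0,1)`. -/
theorem unconditional_basis_Lp_large_p_signs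
    (p : ℝ≥0∞) [Fact (1 ≤ p)] (hp1 : 2 < p) (hp2 : p < ⊤)
    (p' : ℝ) (hp' : 1 / p.toReal + 1 / p' = 1)
    (u : ℕ → Lp ℝ p (volume.restrict (Set.Ioo (0:ℝ) 1)))
    (hnorm : ∀ k, ‖u k‖ = 1)
    (hbasis : ∀ f : Lp ℝ p (volume.restrict (Set.Ioo (0:ℝ) 1)),
      ∃! c : ℕ → ℝ, HasSum (fun k => c k • u k) f) :
    (∀ E : Set ℝ, E ⊆ Set.Ioo (0:ℝ) 1 → MeasurableSet E → 0 < volume E →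
      (¬ Summable fun k => |∫ x in E, max ((u k : ℝ → ℝ) x) 0| ^ p') ∧
      (¬ Summable fun k => |∫ x in E, max (-((u k : ℝ → ℝ) x)) 0| ^ p')) ∧
    (∀ᵐ x ∂(volume.restrict (Set.Ioo (0:ℝ) 1)),
      (¬ Summable fun k => (max ((u k : ℝ → ℝ) x) 0) ^ p') ∧
      (¬ Summable fun k => (max (-((u k : ℝ → ℝ) x)) 0) ^ p')) := by
  have hp2le : 2 ≤ p := hp1.le
  have hp : p ≠ ⊤ := hp2.ne
  have hq : 2 < p.toReal := by simpa using ENNReal.toReal_strict_mono hp hp1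
  have hpp : p.toReal.HolderConjugate p' := by
    rw [Real.holderConjugate_iff]
    exact ⟨by linarith, by simpa using hp'⟩
  have hneg : ∀ k, ((-u k : Lp ℝ p unitVol) : ℝ → ℝ) =ᵐ[unitVol] fun x => -(u k x) := fun k =>
    Lp.coeFn_neg (u k)
  have hP : ∀ E : Set ℝ, 0 < unitVol E →
      ¬ Summable fun k => |∫ x in E, max (u k x) 0 ∂unitVol| ^ p' := fun E hE =>
    not_summable_posPart hp2le hp hpp hnorm hbasis hE
  -- the negative parts are the positive parts of the basis `-u k`
  have hN : ∀ E : Set ℝ, 0 < unitVol E →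
      ¬ Summable fun k => |∫ x in E, max (-(u k x)) 0 ∂unitVol| ^ p' := by
    intro E hE
    have h := not_summable_posPart hp2le hp hpp (u := fun k => -u k) (by simpa using hnorm)
      (fun f => by
        obtain ⟨c, hc, huniq⟩ := hbasis (-f)
        refine ⟨c, ?_, fun d hd => huniq d ?_⟩
        · simpa using HasSum.neg hc
        · simpa using HasSum.neg hd) hE
    convert h using 5 with k
    refine integral_congr_ae (ae_restrict_of_ae ?_)
    filter_upwards [hneg k] with x hx
    rw [hx]
  have hi : ∀ k, Integrable (u k) unitVol := fun k => (Lp.memLp (u k)).integrable Fact.out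
  have hm : ∀ k, Measurable (u k) := fun k => (Lp.stronglyMeasurable (u k)).measurable
  refine ⟨fun E hE hEm hE0 => ?_, ?_⟩
  · have hr : unitVol.restrict E = volume.restrict E :=
      Measure.restrict_restrict_of_subset hE
    have hE1 : 0 < unitVol E := by
      rw [Measure.restrict_apply hEm, Set.inter_eq_left.2 hE]
      exact hE0
    have h1 := hP E hE1
    have h2 := hN E hE1
    rw [hr] at h1 h2
    exact ⟨h1, h2⟩
  · filter_upwards [ae_not_summable_posPart hpp.symm.lt hm hi hP,
      ae_not_summable_posPart hpp.symm.lt (fun k => (hm k).neg) (fun k => (hi k).neg) hN]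
      with x h1 h2
    exact ⟨h1, h2⟩
end

section
/- Let 0 < B < 1 and let (b_n)_{n≥0} be a monotone increasing sequence of positive reals with b_n → ∞, b_n/b_{n−1} → 1, and ∑_n 1/b_n = ∞. Set a_n = (1/(2B))·√(b_n b_{n−1}) for n ≥ 1, and define polynomials (p_n)_{n≥0} by the three-term recurrence x·p_n(x) = a_{n+1} p_{n+1}(x) + b_n p_n(x) + a_n p_{n−1}(x) with p_0 = 1, p_{−1} = 0. Then for every compact set K ⊂ ℝ there exists a constant C_K such that |p_n(x)|² ≤ C_K / b_n for every n ≥ 0 and every x ∈ K. -/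
/-!
Put `q n = √(b n) * p n x`. Dividing the recurrence by `√(b n)` removes the off-diagonal weights:
`q (n+1) = c n * q n - q (n-1)` with `c n = 2 B (x / b n - 1)`, so the claim is that `q` is bounded
uniformly for `x` in a bounded set. Since `c n → -2B`, eventually `|c n| ≤ 2 - δ` with `δ = 1 - B`,
and then the quadratic form `E n = q (n+1)² - c n * q (n+1) * q n + q n²` is comparable to
`q (n+1)² + q n²`. It satisfies `E (n+1) - E n = (c n - c (n+1)) * q n * q (n+1)`, so its growth is
controlled by the total variation of `c`, which is finite because `1 / b n` is monotone
(`energy_le`). The finitely many earlier terms are bounded by a crude exponential estimate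
(`crude_growth`).
-/

lemma crude_growth (q c : ℕ → ℝ) (L : ℝ) (hL : 0 ≤ L)
    (h1 : q 1 = c 0 * q 0) (hq : ∀ n, q (n + 2) = c (n + 1) * q (n + 1) - q n)
    (hc : ∀ n, |c n| ≤ L) (n : ℕ) :
    |q n| ≤ |q 0| * (L + 1) ^ n ∧ |q (n + 1)| ≤ |q 0| * (L + 1) ^ (n + 1) := by
  induction n with
  | zero =>
    refine ⟨by simp, ?_⟩
    rw [zero_add, h1, abs_mul]
    nlinarith [hc 0, abs_nonneg (q 0)]
  | succ n ih =>
    refine ⟨ih.2, ?_⟩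
    rw [show n + 1 + 1 = n + 2 from rfl, hq]
    have hp : 0 ≤ |q 0| * (L + 1) ^ n := by positivity
    calc |c (n + 1) * q (n + 1) - q n| ≤ |c (n + 1) * q (n + 1)| + |q n| := abs_sub _ _
      _ = |c (n + 1)| * |q (n + 1)| + |q n| := by rw [abs_mul]
      _ ≤ L * (|q 0| * (L + 1) ^ (n + 1)) + |q 0| * (L + 1) ^ n := by
        gcongr
        exacts [hc _, ih.2, ih.1]
      _ ≤ |q 0| * (L + 1) ^ (n + 2) := by
        have e1 : |q 0| * (L + 1) ^ (n + 1) = (|q 0| * (L + 1) ^ n) * (L + 1) := by ring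
        have e2 : |q 0| * (L + 1) ^ (n + 2) = (|q 0| * (L + 1) ^ n) * (L + 1) ^ 2 := by ring
        rw [e1, e2]
        nlinarith [mul_nonneg hp hL]

/-- The form `y² - c y z + z²` is coercive for `|c| ≤ 2 - δ`. -/
lemma energy_coercive {c δ y z : ℝ} (hc : |c| ≤ 2 - δ) :
    δ / 2 * (y ^ 2 + z ^ 2) ≤ y ^ 2 - c * y * z + z ^ 2 := by
  obtain ⟨h1, h2⟩ := abs_le.mp hc
  nlinarith [mul_nonneg (sub_nonneg.mpr h2) (sq_nonneg (y + z)),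
    mul_nonneg (by linarith : 0 ≤ c + (2 - δ)) (sq_nonneg (y - z))]

/-- A discrete Grönwall estimate for the energy: `v` is a decreasing majorant of the remaining
variation of `c`, measured in units of `δ`. -/
lemma energy_le (q c v : ℕ → ℝ) (δ : ℝ) (N : ℕ) (hδ : 0 < δ)
    (hq : ∀ n, q (n + 2) = c (n + 1) * q (n + 1) - q n)
    (hc : ∀ n, N ≤ n → |c n| ≤ 2 - δ)
    (hv : ∀ n, |c n - c (n + 1)| ≤ δ * (v n - v (n + 1))) (n : ℕ) (hn : N ≤ n) :
    q (n + 1) ^ 2 - c n * q (n + 1) * q n + q n ^ 2 ≤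
      (q (N + 1) ^ 2 - c N * q (N + 1) * q N + q N ^ 2) * Real.exp (v N - v n) := by
  induction n, hn using Nat.le_induction with
  | base => simp
  | succ n hn ih =>
    set E := q (n + 1) ^ 2 - c n * q (n + 1) * q n + q n ^ 2 with hE
    have hco : δ / 2 * (q (n + 1) ^ 2 + q n ^ 2) ≤ E := energy_coercive (hc n hn)
    have hE0 : 0 ≤ E := le_trans (by positivity) hco
    have hstep : q (n + 1 + 1) ^ 2 - c (n + 1) * q (n + 1 + 1) * q (n + 1) + q (n + 1) ^ 2
        = E + (c n - c (n + 1)) * (q n * q (n + 1)) := by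
      rw [show n + 1 + 1 = n + 2 from rfl, hq, hE]; ring
    have hprod : δ * |q n * q (n + 1)| ≤ E := by
      refine le_trans ?_ hco
      rw [abs_mul]
      nlinarith [sq_nonneg (|q n| - |q (n + 1)|), sq_abs (q n), sq_abs (q (n + 1))]
    have hw : 0 ≤ v n - v (n + 1) :=
      nonneg_of_mul_nonneg_right ((abs_nonneg _).trans (hv n)) hδ
    calc _ = E + (c n - c (n + 1)) * (q n * q (n + 1)) := hstep
      _ ≤ E + |c n - c (n + 1)| * |q n * q (n + 1)| := by
        rw [← abs_mul]; gcongr; exact le_abs_self _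
      _ ≤ E + δ * (v n - v (n + 1)) * |q n * q (n + 1)| := by gcongr; exact hv n
      _ ≤ E * ((v n - v (n + 1)) + 1) := by nlinarith [mul_le_mul_of_nonneg_left hprod hw]
      _ ≤ E * Real.exp (v n - v (n + 1)) := by gcongr; exact Real.add_one_le_exp _
      _ ≤ (q (N + 1) ^ 2 - c N * q (N + 1) * q N + q N ^ 2) * Real.exp (v N - v n)
            * Real.exp (v n - v (n + 1)) := by gcongr
      _ = _ := by rw [mul_assoc, ← Real.exp_add]; congr 2; ring

/-- Solutions of `q (n+2) = c (n+1) * q (n+1) - q n` are bounded when `c` has bounded variation and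
is eventually in `[-(2 - δ), 2 - δ]`. The bound is explicit, hence uniform in parameters. -/
lemma solution_bounded (q c v : ℕ → ℝ) (δ L : ℝ) (N : ℕ) (hδ : 0 < δ) (hL : 0 ≤ L)
    (h1 : q 1 = c 0 * q 0) (hq : ∀ n, q (n + 2) = c (n + 1) * q (n + 1) - q n)
    (hcL : ∀ n, |c n| ≤ L) (hc : ∀ n, N ≤ n → |c n| ≤ 2 - δ)
    (hv : ∀ n, |c n - c (n + 1)| ≤ δ * (v n - v (n + 1))) (hv0 : ∀ n, 0 ≤ v n) (n : ℕ) :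
    q n ^ 2 ≤ (|q 0| * (L + 1) ^ (N + 1)) ^ 2
      + 2 / δ * ((2 + L) * (|q 0| * (L + 1) ^ (N + 1)) ^ 2 * Real.exp (v N)) := by
  set A := |q 0| * (L + 1) ^ (N + 1) with hA
  have hA0 : 0 ≤ A := by positivity
  have hsmall : ∀ m ≤ N + 1, |q m| ≤ A := fun m hm =>
    (crude_growth q c L hL h1 hq hcL m).1.trans (by
      rw [hA]; gcongr; linarith)
  rcases le_total n N with hn | hn
  · have : q n ^ 2 ≤ A ^ 2 := sq_le_sq' (abs_le.mp (hsmall n (by omega))).1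
      (abs_le.mp (hsmall n (by omega))).2
    have h2 : 0 ≤ 2 / δ * ((2 + L) * A ^ 2 * Real.exp (v N)) := by positivity
    linarith
  · have hEN : q (N + 1) ^ 2 - c N * q (N + 1) * q N + q N ^ 2 ≤ (2 + L) * A ^ 2 := by
      have e1 : q (N + 1) ^ 2 ≤ A ^ 2 := by
        rw [← sq_abs]; gcongr; exact hsmall _ le_rfl
      have e2 : q N ^ 2 ≤ A ^ 2 := by
        rw [← sq_abs]; gcongr; exact hsmall _ (by omega)
      have e3 : -(c N * q (N + 1) * q N) ≤ L * A * A := by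
        refine (neg_le_abs _).trans ?_
        rw [abs_mul, abs_mul]
        gcongr
        exacts [hcL N, hsmall _ le_rfl, hsmall _ (by omega)]
      nlinarith
    have hEn := energy_le q c v δ N hδ hq hc hv n hn
    have hco := energy_coercive (y := q (n + 1)) (z := q n) (hc n hn)
    have hexp : Real.exp (v N - v n) ≤ Real.exp (v N) :=
      Real.exp_le_exp.mpr (by linarith [hv0 n])
    have hfin : δ / 2 * q n ^ 2 ≤ (2 + L) * A ^ 2 * Real.exp (v N) := by
      calc δ / 2 * q n ^ 2 ≤ δ / 2 * (q (n + 1) ^ 2 + q n ^ 2) := by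
            gcongr; linarith [sq_nonneg (q (n + 1))]
        _ ≤ _ := hco
        _ ≤ _ := hEn
        _ ≤ (2 + L) * A ^ 2 * Real.exp (v N - v n) := by gcongr
        _ ≤ _ := by gcongr
    have h3 : q n ^ 2 = 2 / δ * (δ / 2 * q n ^ 2) := by field_simp
    have h4 : 2 / δ * (δ / 2 * q n ^ 2) ≤ 2 / δ * ((2 + L) * A ^ 2 * Real.exp (v N)) := by gcongr
    nlinarith [sq_nonneg A]

open Filter

/-- Theorem 3.1 / `Theorem bn`. Let `0 < B < 1`, `(b n)` monotone
increasing positive with `b n → ∞`, `b n / b (n-1) → 1` and `∑ 1 / b n = ∞`, and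
`a n = (1/(2B)) √(bₙ b_{n-1})` for `n ≥ 1`. If `(p n)` are the functions generated by
the three-term recurrence `x pₙ(x) = a_{n+1} p_{n+1}(x) + bₙ pₙ(x) + aₙ p_{n-1}(x)`
with `p₀ = 1`, `p₋₁ = 0`, then on every compact `K ⊆ ℝ` one has
`|pₙ(x)|² ≤ C_K / bₙ`. -/
theorem recurrence_polys_local_decay
    (B : ℝ) (hB0 : 0 < B) (hB1 : B < 1)
    (b : ℕ → ℝ) (hb_pos : ∀ n, 0 < b n) (hb_mono : Monotone b)
    (hb_top : Tendsto b atTop atTop)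
    (hb_ratio : Tendsto (fun n => b (n + 1) / b n) atTop (nhds 1))
    (hb_div : ¬ Summable fun n => 1 / b n)
    (a : ℕ → ℝ)
    (ha : ∀ n : ℕ, 1 ≤ n → a n = (1 / (2 * B)) * Real.sqrt (b n * b (n - 1)))
    (p : ℕ → ℝ → ℝ)
    (hp0 : ∀ x, p 0 x = 1)
    (hrec0 : ∀ x : ℝ, x * p 0 x = a 1 * p 1 x + b 0 * p 0 x)
    (hrec : ∀ n : ℕ, 1 ≤ n → ∀ x : ℝ,
      x * p n x = a (n + 1) * p (n + 1) x + b n * p n x + a n * p (n - 1) x) :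
    ∀ K : Set ℝ, IsCompact K → ∃ C : ℝ, ∀ n : ℕ, ∀ x ∈ K,
      (p n x) ^ 2 ≤ C / b n := by
  intro K hK
  obtain ⟨M, hM⟩ := hK.isBounded.exists_norm_le
  set R := max M 0 with hR
  have hR0 : 0 ≤ R := le_max_right _ _
  have hKR : ∀ x ∈ K, |x| ≤ R := fun x hx => (hM x hx).trans (le_max_left _ _)
  -- Beyond `N` one has `R / b n ≤ (1 - B) / 2`, hence `2 B (1 + R / b n) ≤ 2 - (1 - B)`.
  obtain ⟨N, hN⟩ := (hb_top.eventually_ge_atTop (2 * R / (1 - B))).exists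
  have hδ : 0 < 1 - B := by linarith
  have habs : ∀ x ∈ K, ∀ n, |2 * B * (x / b n - 1)| ≤ 2 * B * (R / b n + 1) := by
    intro x hx n
    rw [abs_mul, abs_of_pos (by positivity : (0 : ℝ) < 2 * B)]
    gcongr
    refine (abs_sub _ _).trans ?_
    rw [abs_div, abs_of_pos (hb_pos n), abs_one]
    have := hb_pos n
    gcongr
    exact hKR x hx
  set L := 2 * B * (R / b 0 + 1) with hLdef
  have hL : 0 ≤ L := by have := hb_pos 0; positivity
  set v : ℕ → ℝ := fun n => 2 * B * R / (1 - B) * (1 / b n) with hvdef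
  have hv0 : ∀ n, 0 ≤ v n := fun n => by have := hb_pos n; simp only [hvdef]; positivity
  refine ⟨(|Real.sqrt (b 0)| * (L + 1) ^ (N + 1)) ^ 2 + 2 / (1 - B) *
    ((2 + L) * (|Real.sqrt (b 0)| * (L + 1) ^ (N + 1)) ^ 2 * Real.exp (v N)), ?_⟩
  intro n x hx
  have hs : ∀ n, 0 < Real.sqrt (b n) := fun n => Real.sqrt_pos.mpr (hb_pos n)
  have hss : ∀ n, Real.sqrt (b n) ^ 2 = b n := fun n => Real.sq_sqrt (hb_pos n).le
  have ha' : ∀ n, a (n + 1) = 1 / (2 * B) * (Real.sqrt (b (n + 1)) * Real.sqrt (b n)) := by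
    intro n
    rw [ha (n + 1) (by omega), Nat.add_sub_cancel, Real.sqrt_mul (hb_pos _).le]
  have key := solution_bounded (fun n => Real.sqrt (b n) * p n x)
    (fun n => 2 * B * (x / b n - 1)) v (1 - B) L N hδ hL ?_ ?_ ?_ ?_ ?_ hv0 n
  · simp only [hp0, mul_one] at key
    rw [le_div_iff₀ (hb_pos n)]
    rw [mul_pow, hss] at key
    linarith
  · have h := hrec0 x
    rw [ha' 0] at h
    have h0 := hs 0
    have hb0 := hss 0
    simp only [zero_add] at h ⊢
    generalize Real.sqrt (b 0) = s at *
    rw [← hb0] at h ⊢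
    field_simp at h ⊢
    linear_combination -h
  · intro n
    have h := hrec (n + 1) (by omega) x
    rw [Nat.add_sub_cancel, ha' n, ha' (n + 1)] at h
    have h0 := hs (n + 1)
    have hb0 := hss (n + 1)
    simp only [show n + 1 + 1 = n + 2 from rfl] at h ⊢
    generalize Real.sqrt (b (n + 1)) = s at *
    rw [← hb0] at h ⊢
    field_simp at h ⊢
    linear_combination -h
  · intro n
    refine (habs x hx n).trans ?_
    have h0 := hb_pos 0
    have h1 := hb_mono (Nat.zero_le n)
    rw [hLdef]
    gcongr
  · intro n hn
    refine (habs x hx n).trans ?_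
    have h1 := hN.trans (hb_mono hn)
    rw [div_le_iff₀ hδ] at h1
    have h2 : R / b n ≤ (1 - B) / 2 := by
      rw [div_le_iff₀ (hb_pos n)]; linarith
    nlinarith
  · intro n
    have hi : 0 ≤ 1 / b n - 1 / b (n + 1) :=
      sub_nonneg.mpr (one_div_le_one_div_of_le (hb_pos n) (hb_mono n.le_succ))
    have e1 : 2 * B * (x / b n - 1) - 2 * B * (x / b (n + 1) - 1)
        = 2 * B * x * (1 / b n - 1 / b (n + 1)) := by ring
    have e2 : (1 - B) * (v n - v (n + 1)) = 2 * B * R * (1 / b n - 1 / b (n + 1)) := by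
      simp only [hvdef]; field_simp
    rw [e1, e2, abs_mul, abs_of_nonneg hi, abs_mul, abs_of_pos (by positivity : (0 : ℝ) < 2 * B)]
    gcongr
    exact hKR x hx
end

section
/- Let [a,b] ⊂ ℝ be a compact interval, B ∈ ℝ with |B| < 1, and for n ≥ 0 let Λ_n : [a,b] → (0,∞) be continuous with Λ_n → 1/2 uniformly on [a,b] and ∑_n sup_{x∈[a,b]} |Λ_{n+1}(x) − Λ_n(x)| < ∞. Let A_n : [a,b] → ℝ be continuous functions satisfying Λ_{n+1}(x) A_{n+1}(x) + B·A_n(x) + Λ_n(x) A_{n−1}(x) = 0 for all n ≥ N and x ∈ [a,b]. Define Δ_n(x) = A_n(x)² − A_{n−1}(x) A_{n+1}(x) and ε_n(x) = |Λ_{n+1}(x) − Λ_n(x)| + |Λ_{n+2}(x) − Λ_{n+1}(x)|. Then there exist a constant C > 0 and an index N' ≥ N such that for all n ≥ N' and all x ∈ [a,b]: Δ_n(x) > 0 whenever (A_n(x), A_{n+1}(x)) ≠ (0,0); A_n(x)² + A_{n+1}(x)² ≤ C·Δ_n(x); and (1 − C·ε_n(x))·Δ_n(x) ≤ Δ_{n+1}(x)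 ≤ (1 + C·ε_n(x))·Δ_n(x). -/
/-!
Write `p, q, r` for `Λₙ, Λₙ₊₁, Λₙ₊₂` and `u, v` for `Aₙ, Aₙ₊₁`. Using the recurrence to eliminate
`Aₙ₋₁` and `Aₙ₊₂` gives
`p Δₙ = p u² + B u v + q v²` and `r Δₙ₊₁ = r v² + B u v + q u²`.
For `δ = (1 - |B|) / 4` and `p, q, r` within `δ` of `1 / 2`, the first form dominates
`δ (u² + v²)`, because `|B u v| ≤ |B| (u² + v²) / 2`: this gives positivity and the lower bound for
`Δₙ`. Subtracting the two identities,
`r (Δₙ₊₁ - Δₙ) = (q - p) u² + (r - q) v² + (p - r) Δₙ`,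
whose right side is at most `εₙ (u² + v² + Δₙ) ≤ εₙ (1 / δ + 1) Δₙ` in absolute value, while
`r ≥ 1 / 4`. So `C = 4 / δ + 4` works, at each point `x` separately; uniform convergence makes the
index `N'` independent of `x`.
-/

open Filter

/-- Coercivity of `Δₙ = u² - w v`, where `w = Aₙ₋₁` is tied to `u, v` by the recurrence. -/
lemma turan_coercive {B p q u v w δ : ℝ} (hδ : |B| = 1 - 4 * δ) (hδ0 : 0 < δ)
    (hp : |p - 1 / 2| < δ) (hq : |q - 1 / 2| < δ) (h : q * v + B * u + p * w = 0) :
    δ * (u ^ 2 + v ^ 2) ≤ u ^ 2 - w * v := by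
  have hB0 := abs_nonneg B
  rw [abs_lt] at hp hq
  have hp0 : 0 < p := by linarith
  have key : p * (u ^ 2 - w * v) = p * u ^ 2 + B * u * v + q * v ^ 2 := by
    linear_combination (-v) * h
  have hBuv : -((1 - 4 * δ) * ((u ^ 2 + v ^ 2) / 2)) ≤ B * u * v := by
    have h1 : |B * u * v| ≤ (1 - 4 * δ) * ((u ^ 2 + v ^ 2) / 2) := by
      rw [mul_assoc, abs_mul, hδ]
      refine mul_le_mul_of_nonneg_left ?_ (by linarith)
      rw [abs_le]
      constructor <;> nlinarith [sq_nonneg (u + v), sq_nonneg (u - v)]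
    exact (abs_le.mp h1).1
  have hlow : δ * (u ^ 2 + v ^ 2) ≤ p * (u ^ 2 - w * v) := by
    rw [key]
    nlinarith [mul_nonneg (by linarith : 0 ≤ p - (1 / 2 - δ)) (sq_nonneg u),
      mul_nonneg (by linarith : 0 ≤ q - (1 / 2 - δ)) (sq_nonneg v)]
  have hΔ : 0 ≤ u ^ 2 - w * v :=
    nonneg_of_mul_nonneg_right ((by positivity : 0 ≤ δ * (u ^ 2 + v ^ 2)).trans hlow) hp0
  nlinarith [mul_nonneg (by linarith : 0 ≤ 1 - p) hΔ]

/-- The relative change from `Δₙ` to `Δₙ₊₁` is at most a multiple of `εₙ`. -/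
lemma turan_step {B p q r u v w z δ : ℝ} (hδ0 : 0 < δ) (hr : 1 / 4 ≤ r)
    (h : q * v + B * u + p * w = 0) (h' : r * z + B * v + q * u = 0)
    (hco : δ * (u ^ 2 + v ^ 2) ≤ u ^ 2 - w * v) :
    |(v ^ 2 - u * z) - (u ^ 2 - w * v)|
      ≤ (4 / δ + 4) * (|q - p| + |r - q|) * (u ^ 2 - w * v) := by
  set D := u ^ 2 - w * v with hD
  set D' := v ^ 2 - u * z with hD'
  have hD0 : 0 ≤ D := (by positivity : 0 ≤ δ * (u ^ 2 + v ^ 2)).trans hco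
  have key : r * (D' - D) = (q - p) * u ^ 2 + (r - q) * v ^ 2 + (p - r) * D := by
    rw [hD, hD']
    linear_combination (-u) * h' + v * h
  have hε : 0 ≤ |q - p| + |r - q| := by positivity
  have hpr : |p - r| ≤ |q - p| + |r - q| := by
    rw [abs_sub_comm q p, abs_sub_comm r q]
    exact abs_sub_le p q r
  have hsum : u ^ 2 + v ^ 2 ≤ D / δ := by
    rw [le_div_iff₀ hδ0]
    linarith
  have hrhs : |r * (D' - D)| ≤ (|q - p| + |r - q|) * (D / δ + D) := by
    rw [key]
    calc |(q - p) * u ^ 2 + (r - q) * v ^ 2 + (p - r) * D|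
        ≤ |q - p| * u ^ 2 + |r - q| * v ^ 2 + |p - r| * D := by
          refine (abs_add_three _ _ _).trans_eq ?_
          simp only [abs_mul, abs_of_nonneg hD0, abs_of_nonneg (sq_nonneg u),
            abs_of_nonneg (sq_nonneg v)]
      _ ≤ (|q - p| + |r - q|) * u ^ 2 + (|q - p| + |r - q|) * v ^ 2
            + (|q - p| + |r - q|) * D := by
          gcongr
          · linarith [abs_nonneg (r - q)]
          · linarith [abs_nonneg (q - p)]
      _ ≤ (|q - p| + |r - q|) * (D / δ + D) := by
          nlinarith [mul_le_mul_of_nonneg_left hsum hε]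
  rw [abs_mul, abs_of_nonneg (by linarith : 0 ≤ r)] at hrhs
  have hquarter : 1 / 4 * |D' - D| ≤ r * |D' - D| :=
    mul_le_mul_of_nonneg_right hr (abs_nonneg _)
  have hC : (4 / δ + 4) * (|q - p| + |r - q|) * D
      = 4 * ((|q - p| + |r - q|) * (D / δ + D)) := by ring
  rw [hC]
  linarith

/-- the key intermediate estimates in the Maté–Nevai argument.
With `Δₙ = Aₙ² − A_{n-1} A_{n+1}` and
`εₙ = |Λ_{n+1} − Λₙ| + |Λ_{n+2} − Λ_{n+1}|`, for all large `n` (uniformly on `[a,b]`):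
`Δₙ > 0` unless `Aₙ = A_{n+1} = 0`, `Aₙ² + A_{n+1}² ≤ C Δₙ`, and
`(1 − C εₙ) Δₙ ≤ Δ_{n+1} ≤ (1 + C εₙ) Δₙ`. -/
theorem mate_nevai_estimates
    (a b : ℝ) (hab : a ≤ b) (B : ℝ) (hB : |B| < 1) (N : ℕ) (hN : 1 ≤ N)
    (Λ : ℕ → ℝ → ℝ)
    (hΛcont : ∀ n, ContinuousOn (Λ n) (Set.Icc a b))
    (hΛpos : ∀ n, ∀ x ∈ Set.Icc a b, 0 < Λ n x)
    (hΛlim : TendstoUniformlyOn Λ (fun _ => 1 / 2) atTop (Set.Icc a b))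
    (hΛbv : Summable fun n => ⨆ x : Set.Icc a b, |Λ (n + 1) x - Λ n x|)
    (A : ℕ → ℝ → ℝ)
    (hAcont : ∀ n, ContinuousOn (A n) (Set.Icc a b))
    (hrec : ∀ n, N ≤ n → ∀ x ∈ Set.Icc a b,
      Λ (n + 1) x * A (n + 1) x + B * A n x + Λ n x * A (n - 1) x = 0) :
    ∃ C : ℝ, 0 < C ∧ ∃ N' : ℕ, N ≤ N' ∧ ∀ n, N' ≤ n → ∀ x ∈ Set.Icc a b,
      (¬ (A n x = 0 ∧ A (n + 1) x = 0) →
        0 < (A n x) ^ 2 - A (n - 1) x * A (n + 1) x) ∧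
      ((A n x) ^ 2 + (A (n + 1) x) ^ 2
        ≤ C * ((A n x) ^ 2 - A (n - 1) x * A (n + 1) x)) ∧
      ((1 - C * (|Λ (n + 1) x - Λ n x| + |Λ (n + 2) x - Λ (n + 1) x|)) *
          ((A n x) ^ 2 - A (n - 1) x * A (n + 1) x)
        ≤ (A (n + 1) x) ^ 2 - A n x * A (n + 2) x) ∧
      ((A (n + 1) x) ^ 2 - A n x * A (n + 2) x
        ≤ (1 + C * (|Λ (n + 1) x - Λ n x| + |Λ (n + 2) x - Λ (n + 1) x|)) *
          ((A n x) ^ 2 - A (n - 1) x * A (n + 1) x)) := by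
  obtain ⟨δ, hδ⟩ : ∃ δ : ℝ, |B| = 1 - 4 * δ := ⟨(1 - |B|) / 4, by ring⟩
  have hδ0 : 0 < δ := by linarith
  have hB0 := abs_nonneg B
  obtain ⟨M, hM⟩ := eventually_atTop.mp (Metric.tendstoUniformlyOn_iff.mp hΛlim δ hδ0)
  have hclose : ∀ n, M ≤ n → ∀ x ∈ Set.Icc a b, |Λ n x - 1 / 2| < δ := fun n hn x hx => by
    have h := hM n hn x hx
    rwa [dist_comm, Real.dist_eq] at h
  refine ⟨4 / δ + 4, by positivity, max N M, le_max_left _ _, fun n hn x hx => ?_⟩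
  have hnN : N ≤ n := (le_max_left _ _).trans hn
  have hnM : M ≤ n := (le_max_right _ _).trans hn
  have h := hrec n hnN x hx
  have h' : Λ (n + 2) x * A (n + 2) x + B * A (n + 1) x + Λ (n + 1) x * A n x = 0 :=
    hrec (n + 1) (by omega) x hx
  have hco := turan_coercive hδ hδ0 (hclose n hnM x hx) (hclose (n + 1) (by omega) x hx) h
  have hr : 1 / 4 ≤ Λ (n + 2) x := by
    have := (abs_lt.mp (hclose (n + 2) (by omega) x hx)).1
    linarith
  have hstep := abs_le.mp (turan_step hδ0 hr h h' hco)
  have hD0 : 0 ≤ (A n x) ^ 2 - A (n - 1) x * A (n + 1) x :=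
    (by positivity : 0 ≤ δ * ((A n x) ^ 2 + (A (n + 1) x) ^ 2)).trans hco
  refine ⟨fun hne => lt_of_lt_of_le (mul_pos hδ0 ?_) hco, ?_, ?_, ?_⟩
  · rcases not_and_or.mp hne with h0 | h0 <;> positivity
  · have hsum : (A n x) ^ 2 + (A (n + 1) x) ^ 2
        ≤ 1 / δ * ((A n x) ^ 2 - A (n - 1) x * A (n + 1) x) := by
      rw [one_div_mul_eq_div, le_div_iff₀ hδ0]
      linarith
    refine hsum.trans (mul_le_mul_of_nonneg_right ?_ hD0)
    have : 0 < 1 / δ := by positivity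
    have : 4 / δ = 4 * (1 / δ) := by ring
    linarith
  · linarith [hstep.1]
  · linarith [hstep.2]
end

section
/- There exists an orthonormal basis (U_k)_{k≥1} of L²_ℝ(0,2) (Lebesgue measure) such that for almost every x ∈ (0,1): ∑_{k=1}^n (U_k⁺(x))² → ∞ as n → ∞ and ∑_{k=1}^n (U_k⁻(x))² = o( ∑_{k=1}^n (U_k⁺(x))² ) as n → ∞; that is, the ratio (∑_{k=1}^n (U_k⁻(x))²) / (∑_{k=1}^n (U_k⁺(x))²) tends to 0. -/
open MeasureTheory Filter

/-!
An orthonormal basis of `L²(0,2)` restricted to `(0,1)` is a Parseval family of `L²(0,1)`, i.e. a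
family `F k` with `∑ ⟨F k, v⟩² = ‖v‖²` for all `v` supported there. Conversely, by Naimark dilation
(`exists_hilbertBasis_dilation`) such a family is the restriction of an orthonormal basis of
`L²(0,2)`, provided both the space of functions supported on `(1,2)` and the orthocomplement of the
analysis operator's range are infinite-dimensional. It therefore suffices to construct a Parseval
family whose squared positive parts dominate its squared negative parts pointwise.

The family is `√(w_t 2^t / 2) (1_{I(t,j)} - c_t 1_{I(⌊t/2⌋, j')})` for `j < 2^t`, where `I(t,j)` are
the dyadic intervals of `[0,2)` of length `2/2^t`, the interval `I(⌊t/2⌋, j')` is the ancestor of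
`I(t,j)` at level `⌊t/2⌋`, and `c_t = 2^{-(t-⌊t/2⌋)}` makes the mean of the bracket vanish (for
`t ≤ 1` no ancestor is subtracted). Write `q_t` for the squared norm of the projection of `v` onto
the step functions of level `t`. The `t`-th round of vectors contributes `w_t (q_t - q_{⌊t/2⌋})` to
`∑ ⟨F k, v⟩²`. The weights `w_t = 2^{-⌊log₂ t⌋}` satisfy `w_{2s} + w_{2s+1} = w_s`, so the rounds
`t < 2S` sum to the weighted average `∑_{S ≤ t < 2S} w_t q_t` (`sum_weight_telescope`), which tends
to `‖v‖²` because dyadic step functions are dense.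

At a given point, round `t` has exactly one vector that is positive, tall and of squared height at
least `w_t 2^t / 8`; all others are zero or shallow and negative, and their squares sum to at most
`2^⌊t/2⌋`. Since `w_t ≥ 1/t`, the positive sum grows at least like `2^m / m` and the negative one at
most like `m 2^{m/2}`, where `m = ⌊log₂ n⌋`; partial rounds cause no loss that matters.
-/

/-! ### Naimark dilation -/

/-- Every infinite-dimensional separable real Hilbert space has an orthonormal basis indexed by `ℕ`:
the balls of radius `1/2` about the members of an orthonormal basis are disjoint, so separability
makes the basis countable. -/
lemma exists_hilbertBasis_nat {V : Type*} [NormedAddCommGroup V] [InnerProductSpace ℝ V]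
    [CompleteSpace V] [TopologicalSpace.SeparableSpace V] (hV : ¬ FiniteDimensional ℝ V) :
    ∃ _b : HilbertBasis ℕ ℝ V, True := by
  obtain ⟨w, b, hb⟩ := exists_hilbertBasis ℝ V
  have hdist : Pairwise (Function.onFun Disjoint fun i : w => Metric.ball (b i) (1 / 2)) := by
    intro i j hij
    apply Metric.ball_disjoint_ball
    have h0 : inner ℝ (b i) (b j) = 0 := b.orthonormal.2 hij
    have h1 := norm_sub_sq_real (b i) (b j)
    rw [h0, b.orthonormal.1 i, b.orthonormal.1 j] at h1
    rw [dist_eq_norm]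
    nlinarith [norm_nonneg (b i - b j)]
  have hc : Countable w := hdist.countable_of_isOpen_disjoint (fun _ => Metric.isOpen_ball)
    (fun i => ⟨b i, Metric.mem_ball_self (by norm_num)⟩)
  have hinf : Infinite w := by
    by_contra hfin
    rw [not_infinite_iff_finite] at hfin
    have := Fintype.ofFinite w
    exact hV b.toOrthonormalBasis.toBasis.finiteDimensional_of_finite
  obtain ⟨e⟩ := nonempty_equiv_of_countable (α := ℕ) (β := w)
  refine ⟨HilbertBasis.mk (b.orthonormal.comp e e.injective) ?_, trivial⟩
  rw [e.surjective.range_comp, b.dense_span]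

/-- **Naimark dilation.** A family that is Parseval on a subspace `K` agrees, when tested against
`K`, with an orthonormal basis of the whole space. Infinitely many `F k` orthogonal to `K` make the
orthocomplement of the range of the analysis operator `v ↦ (⟨F k, v⟩)_k` infinite-dimensional, so
that this isometry of `K` extends to a unitary of the whole space. -/
lemma exists_hilbertBasis_dilation {E : Type*} [NormedAddCommGroup E] [InnerProductSpace ℝ E]
    [CompleteSpace E] [TopologicalSpace.SeparableSpace E] (K : Submodule ℝ E)
    [CompleteSpace K] (hK : ¬ FiniteDimensional ℝ Kᗮ) (F : ℕ → E)
    (hF : ∀ v ∈ K, HasSum (fun k => inner ℝ (F k) v ^ 2) (‖v‖ ^ 2))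
    (hinf : {k | F k ∈ Kᗮ}.Infinite) :
    ∃ U : HilbertBasis ℕ ℝ E, ∀ k, ∀ v ∈ K, inner ℝ (U k) v = inner ℝ (F k) v := by
  have hE : ¬ FiniteDimensional ℝ E := fun h => hK inferInstance
  obtain ⟨b, -⟩ := exists_hilbertBasis_nat hE
  have hmem : ∀ v : K, Memℓp (fun k => inner ℝ (F k) (v : E)) 2 := fun v => by
    rw [memℓp_gen_iff (by norm_num)]
    simpa using (hF v v.2).summable
  let T₀ : K →ₗᵢ[ℝ] lp (fun _ : ℕ => ℝ) 2 :=
    { toFun := fun v => ⟨fun k => inner ℝ (F k) (v : E), hmem v⟩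
      map_add' := fun u v => by ext k; simp [inner_add_right]; rfl
      map_smul' := fun c v => by ext k; simp [inner_smul_right]
      norm_map' := fun v => by
        rw [← sq_eq_sq₀ (norm_nonneg _) (norm_nonneg _), ← real_inner_self_eq_norm_sq,
          lp.inner_eq_tsum]
        simpa [sq] using (hF v v.2).tsum_eq }
  let T : K →ₗᵢ[ℝ] E := b.repr.symm.toLinearIsometry.comp T₀
  -- `T` is the analysis operator of `F`, with `ℓ²` identified with `E` through `b`.
  have hT : ∀ k v, inner ℝ (b k) (T v) = inner ℝ (F k) (v : E) := fun k v => by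
    rw [← b.repr_apply_apply]
    change b.repr (b.repr.symm (T₀ v)) k = _
    rw [LinearIsometryEquiv.apply_symm_apply]; rfl
  let R : Submodule ℝ E := LinearMap.range T.toLinearMap
  have hRc : CompleteSpace R := T.isometry.isUniformInducing.isComplete_range.completeSpace_coe
  have hR : ¬ FiniteDimensional ℝ Rᗮ := fun hfd => by
    have hb : ∀ k : {k | F k ∈ Kᗮ}, b k ∈ Rᗮ := fun k => by
      rw [Submodule.mem_orthogonal']
      rintro _ ⟨v, rfl⟩
      change inner ℝ (b k) (T v) = 0
      rw [hT]
      exact (Submodule.mem_orthogonal' _ _).1 k.2 v v.2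
    have hli : LinearIndependent ℝ (fun k : {k | F k ∈ Kᗮ} => (⟨b k, hb k⟩ : Rᗮ)) := by
      apply LinearIndependent.of_comp Rᗮ.subtype
      exact (b.orthonormal.comp _ Subtype.val_injective).linearIndependent
    have := hinf.to_subtype
    exact not_finite_iff_infinite.2 this hli.finite
  obtain ⟨b₁, -⟩ := exists_hilbertBasis_nat hK
  obtain ⟨b₂, -⟩ := exists_hilbertBasis_nat hR
  let e₁ : K ≃ₗᵢ[ℝ] R := T.equivRange
  let e₂ : Kᗮ ≃ₗᵢ[ℝ] Rᗮ := b₁.repr.trans b₂.repr.symm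
  -- The unitary extending `T`; the required basis is the preimage of `b` under it.
  let W : E ≃ₗᵢ[ℝ] E := (K.orthogonalDecomposition.trans
    (LinearIsometryEquiv.withLpProdCongr 2 e₁ e₂)).trans R.orthogonalDecomposition.symm
  have hW : ∀ v : K, W v = T v := fun v => by
    have h0 : Kᗮ.orthogonalProjectionOnto (v : E) = 0 := by
      rw [Submodule.orthogonalProjectionOnto_eq_zero_iff]
      exact K.le_orthogonal_orthogonal v.2
    simp only [W, e₁, LinearIsometryEquiv.trans_apply, K.orthogonalDecomposition_apply, h0]
    simp
    rfl
  refine ⟨HilbertBasis.ofRepr (W.trans b.repr), fun k v hv => ?_⟩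
  have hU : (HilbertBasis.ofRepr (W.trans b.repr)) k = W.symm (b k) := by
    rw [← HilbertBasis.repr_symm_single, ← b.repr_symm_single]; rfl
  rw [hU, ← hT k ⟨v, hv⟩, ← hW, ← W.inner_map_map, W.apply_symm_apply]

/-! ### Weights and dyadic details -/

/-- The weight `2^{-⌊log₂ t⌋}` of round `t`, with weight `0` for round `0`. Each dyadic block
`S ≤ t < 2S` has total weight `1`. -/
noncomputable def weight (t : ℕ) : ℝ := if t = 0 then 0 else ((2 : ℝ) ^ Nat.log 2 t)⁻¹

/-- The coefficient of the coarse ancestor in round `t`: the ratio of the length of a level-`t`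
interval to that of a level-`⌊t/2⌋` interval, or `0` when `t ≤ 1`. -/
noncomputable def coarse (t : ℕ) : ℝ := if t ≤ 1 then 0 else ((2 : ℝ) ^ (t - t / 2))⁻¹

/-- The `j`-th detail of round `t` of a dyadic array `X`: its entry `(t, j)` minus `coarse t` times
the ancestor entry at level `⌊t/2⌋`, suitably normalized. It is used for arrays of indicator functions
in `L²`, of their inner products with a vector, and of their values at a point. -/
noncomputable def detail {V : Type*} [AddCommGroup V] [Module ℝ V] (X : ℕ → ℕ → V) (t j : ℕ) : V :=
  √(weight t * 2 ^ t / 2) • (X t j - coarse t • X (t / 2) (j / 2 ^ (t - t / 2)))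

/-- The details of rounds `0, 1, 2, …` listed as one sequence: `k = 2^t + j` with `j < 2^t` gives the
`j`-th detail of round `t`. The term at `k = 0` is zero since `weight 0 = 0`. -/
noncomputable def detailSeq {V : Type*} [AddCommGroup V] [Module ℝ V] (X : ℕ → ℕ → V) (k : ℕ) : V :=
  detail X (Nat.log 2 k) (k - 2 ^ Nat.log 2 k)

lemma weight_nonneg (t : ℕ) : 0 ≤ weight t := by
  unfold weight; split_ifs <;> positivity

lemma weight_le_one (t : ℕ) : weight t ≤ 1 := by
  unfold weight; split_ifs
  · norm_num
  · exact inv_le_one_of_one_le₀ (one_le_pow₀ (by norm_num))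

lemma weight_ge {t : ℕ} (ht : t ≠ 0) : (t : ℝ)⁻¹ ≤ weight t := by
  unfold weight; rw [if_neg ht]
  apply inv_anti₀ (by positivity)
  exact_mod_cast Nat.pow_log_le_self 2 ht

lemma weight_double {s : ℕ} (hs : s ≠ 0) :
    weight (2 * s) = weight s / 2 ∧ weight (2 * s + 1) = weight s / 2 := by
  have h1 : Nat.log 2 (2 * s) = Nat.log 2 s + 1 := by
    rw [mul_comm]; exact Nat.log_mul_base (by norm_num) hs
  have h2 : Nat.log 2 (2 * s + 1) = Nat.log 2 s + 1 := by
    rw [Nat.log_of_one_lt_of_le (by norm_num) (by omega)]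
    congr 2; omega
  unfold weight
  rw [h1, h2, if_neg hs, if_neg (by omega), if_neg (by omega), pow_succ, mul_inv]
  constructor <;> ring

lemma coarse_nonneg (t : ℕ) : 0 ≤ coarse t := by
  unfold coarse; split_ifs <;> positivity

lemma coarse_le_half (t : ℕ) : coarse t ≤ 1 / 2 := by
  unfold coarse; split_ifs with h
  · norm_num
  · rw [one_div]
    apply inv_anti₀ (by norm_num)
    exact le_self_pow₀ (by norm_num) (by omega)

lemma sum_range_mul_block (g : ℕ → ℝ) (p m : ℕ) :
    ∑ j ∈ Finset.range (p * m), g j =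
      ∑ i ∈ Finset.range p, ∑ l ∈ Finset.range m, g (i * m + l) := by
  induction p with
  | zero => simp
  | succ p ih => rw [add_mul, one_mul, Finset.sum_range_add, ih, Finset.sum_range_succ]

lemma pow_half_mul (t : ℕ) : (2 : ℕ) ^ (t / 2) * 2 ^ (t - t / 2) = 2 ^ t := by
  rw [← pow_add]; congr 1; omega

/-- Grouping the level-`t` indices by their ancestor at level `⌊t/2⌋`. -/
lemma sum_fine (g : ℕ → ℕ → ℝ) (t : ℕ) :
    ∑ j ∈ Finset.range (2 ^ t), g j (j / 2 ^ (t - t / 2)) =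
      ∑ i ∈ Finset.range (2 ^ (t / 2)), ∑ l ∈ Finset.range (2 ^ (t - t / 2)),
        g (i * 2 ^ (t - t / 2) + l) i := by
  rw [← pow_half_mul t, sum_range_mul_block]
  refine Finset.sum_congr rfl fun i _ => Finset.sum_congr rfl fun l hl => ?_
  congr 1
  rw [mul_comm, Nat.mul_add_div (by positivity), Nat.div_eq_of_lt (Finset.mem_range.1 hl), add_zero]

lemma sum_detailSeq {V : Type*} [AddCommGroup V] [Module ℝ V] (X : ℕ → ℕ → V) (φ : V → ℝ)
    (h0 : φ 0 = 0) (T : ℕ) :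
    ∑ k ∈ Finset.range (2 ^ T), φ (detailSeq X k) =
      ∑ t ∈ Finset.range T, ∑ j ∈ Finset.range (2 ^ t), φ (detail X t j) := by
  induction T with
  | zero => simp [detailSeq, detail, weight, h0]
  | succ T ih =>
    rw [pow_succ, mul_two, Finset.sum_range_add, ih, Finset.sum_range_succ]
    congr 1
    refine Finset.sum_congr rfl fun j hj => ?_
    have hlog : Nat.log 2 (2 ^ T + j) = T := by
      rw [Nat.log_eq_iff (Or.inr ⟨by norm_num, by positivity⟩)]
      have := Finset.mem_range.1 hj
      constructor
      · omega
      · rw [pow_succ]; omega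
    rw [detailSeq, hlog, Nat.add_sub_cancel_left]

/-- The energy `2^t/2 ∑ (X t j)²` of the level-`t` entries. When `X t j` is the integral of `v` over
the `j`-th dyadic interval of length `2/2^t`, this is the squared norm of the projection of `v` onto
the step functions of level `t`. -/
noncomputable def energy (X : ℕ → ℕ → ℝ) (t : ℕ) : ℝ :=
  2 ^ t / 2 * ∑ j ∈ Finset.range (2 ^ t), X t j ^ 2

/-! ### The Parseval identity -/

lemma additive_iterate {X : ℕ → ℕ → ℝ} (hX : ∀ t i, X t i = X (t + 1) (2 * i) + X (t + 1) (2 * i + 1))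
    (a D i : ℕ) : X a i = ∑ l ∈ Finset.range (2 ^ D), X (a + D) (i * 2 ^ D + l) := by
  induction D generalizing a i with
  | zero => simp
  | succ D ih =>
    rw [hX, ih (a + 1) (2 * i), ih (a + 1) (2 * i + 1), pow_succ, mul_two, Finset.sum_range_add]
    congr 1 <;> refine Finset.sum_congr rfl fun l _ => ?_ <;> congr 1 <;> ring

/-- Pythagoras: on each ancestor interval, the deviations of the fine entries from their mean have
squares summing to the difference of the energies. -/
lemma sum_detail_sq {X : ℕ → ℕ → ℝ} (hX : ∀ t i, X t i = X (t + 1) (2 * i) + X (t + 1) (2 * i + 1))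
    (t : ℕ) : ∑ j ∈ Finset.range (2 ^ t), detail X t j ^ 2 =
      weight t * (energy X t - if t ≤ 1 then 0 else energy X (t / 2)) := by
  have hA : 0 ≤ weight t * 2 ^ t / 2 := by have := weight_nonneg t; positivity
  simp only [detail, smul_eq_mul, mul_pow, Real.sq_sqrt hA, ← Finset.mul_sum]
  split_ifs with h
  · simp only [coarse, if_pos h, zero_mul, sub_zero, energy]; ring
  rw [sum_fine (fun j i => (X t j - coarse t * X (t / 2) i) ^ 2)]
  have hin : ∀ i, ∑ l ∈ Finset.range (2 ^ (t - t / 2)),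
      (X t (i * 2 ^ (t - t / 2) + l) - coarse t * X (t / 2) i) ^ 2 =
      ∑ l ∈ Finset.range (2 ^ (t - t / 2)), X t (i * 2 ^ (t - t / 2) + l) ^ 2
        - coarse t * X (t / 2) i ^ 2 := fun i => by
    have h1 := additive_iterate hX (t / 2) (t - t / 2) i
    rw [show t / 2 + (t - t / 2) = t by omega] at h1
    have h2 : coarse t * 2 ^ (t - t / 2) = 1 := by
      rw [coarse, if_neg h]; field_simp
    simp only [sub_sq, Finset.sum_add_distrib, Finset.sum_sub_distrib, Finset.sum_const,
      Finset.card_range, nsmul_eq_mul, ← Finset.sum_mul, ← Finset.mul_sum, ← h1]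
    push_cast
    linear_combination (coarse t * X (t / 2) i ^ 2) * h2
  simp only [hin, Finset.sum_sub_distrib, ← Finset.mul_sum]
  rw [← sum_range_mul_block (fun j => X t j ^ 2), pow_half_mul, energy, energy]
  have h3 : (2 : ℝ) ^ t * coarse t = 2 ^ (t / 2) := by
    rw [coarse, if_neg h]
    have : (2 : ℝ) ^ t = 2 ^ (t / 2) * 2 ^ (t - t / 2) := by exact_mod_cast (pow_half_mul t).symm
    rw [this]; field_simp
  linear_combination (-weight t / 2 * ∑ i ∈ Finset.range (2 ^ (t / 2)), X (t / 2) i ^ 2) * h3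

/-- The terms `weight t * q (t / 2)` with `t ∈ {2s, 2s+1}` cancel `weight s * q s`, leaving the
top dyadic block only. -/
lemma sum_weight_telescope (q : ℕ → ℝ) (S : ℕ) (hS : 1 ≤ S) :
    ∑ t ∈ Finset.range (2 * S), weight t * (q t - if t ≤ 1 then 0 else q (t / 2)) =
      ∑ t ∈ Finset.Ico S (2 * S), weight t * q t := by
  induction S, hS using Nat.le_induction with
  | base => simp [Finset.sum_range_succ, weight]
  | succ S hS ih =>
    obtain ⟨h1, h2⟩ := weight_double (s := S) (by omega)
    have h3 : (2 * S + 1) / 2 = S := by omega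
    have h4 : 2 * S / 2 = S := by omega
    have h5 := Finset.sum_eq_sum_Ico_succ_bot (show S < 2 * S + 1 + 1 by omega)
      (fun t => weight t * q t)
    rw [Finset.sum_Ico_succ_top (by omega), Finset.sum_Ico_succ_top (by omega)] at h5
    rw [show 2 * (S + 1) = 2 * S + 1 + 1 by ring, Finset.sum_range_succ, Finset.sum_range_succ, ih,
      if_neg (by omega), if_neg (by omega), h3, h4]
    rw [h1, h2] at h5 ⊢
    linarith

lemma sum_weight_eq_one (S : ℕ) (hS : 1 ≤ S) : ∑ t ∈ Finset.Ico S (2 * S), weight t = 1 := by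
  have h := sum_weight_telescope (fun _ => 1) S hS
  simp only [mul_one] at h
  rw [← h, Finset.sum_eq_single 1]
  · simp [weight]
  · intro t _ ht
    rcases Nat.lt_or_gt_of_ne ht with h | h
    · simp [weight, show t = 0 by omega]
    · simp [show ¬ t ≤ 1 by omega]
  · intro h; simp at h; omega

/-- The squared details of an additive array sum to the limit of its energies. -/
lemma hasSum_detailSeq_sq {X : ℕ → ℕ → ℝ}
    (hX : ∀ t i, X t i = X (t + 1) (2 * i) + X (t + 1) (2 * i + 1)) {L : ℝ}
    (hL : Tendsto (energy X) atTop (nhds L)) :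
    HasSum (fun k => detailSeq X k ^ 2) L := by
  rw [hasSum_iff_tendsto_nat_of_nonneg (fun _ => sq_nonneg _)]
  have hmono : Monotone fun n => ∑ k ∈ Finset.range n, detailSeq X k ^ 2 :=
    fun m n h => Finset.sum_le_sum_of_subset_of_nonneg (Finset.range_mono h)
      fun _ _ _ => sq_nonneg _
  -- By monotonicity, the partial sums over the rounds `t < 2S` suffice.
  have hsub : Tendsto (fun S : ℕ => 2 ^ (2 * S)) atTop (atTop : Filter ℕ) :=
    (tendsto_pow_atTop_atTop_of_one_lt (by norm_num : 1 < 2)).comp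
      (tendsto_id.const_mul_atTop' (by norm_num))
  rw [tendsto_iff_tendsto_subseq_of_monotone hmono hsub]
  rw [Metric.tendsto_atTop] at hL ⊢
  intro ε hε
  obtain ⟨N, hN⟩ := hL (ε / 2) (by positivity)
  refine ⟨max N 1, fun S hS => ?_⟩
  have hS1 : 1 ≤ S := le_of_max_le_right hS
  have key : ∑ k ∈ Finset.range (2 ^ (2 * S)), detailSeq X k ^ 2 =
      ∑ t ∈ Finset.Ico S (2 * S), weight t * energy X t := by
    rw [sum_detailSeq X (fun v => v ^ 2) (by simp), ← sum_weight_telescope _ _ hS1]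
    exact Finset.sum_congr rfl fun t _ => sum_detail_sq hX t
  change dist (∑ k ∈ Finset.range (2 ^ (2 * S)), detailSeq X k ^ 2) L < ε
  rw [key, Real.dist_eq]
  have : ∑ t ∈ Finset.Ico S (2 * S), weight t * energy X t - L =
      ∑ t ∈ Finset.Ico S (2 * S), weight t * (energy X t - L) := by
    simp only [mul_sub, Finset.sum_sub_distrib, ← Finset.sum_mul, sum_weight_eq_one S hS1, one_mul]
  rw [this]
  calc _ ≤ ∑ t ∈ Finset.Ico S (2 * S), |weight t * (energy X t - L)| :=
        Finset.abs_sum_le_sum_abs _ _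
    _ ≤ ∑ t ∈ Finset.Ico S (2 * S), weight t * (ε / 2) := by
        refine Finset.sum_le_sum fun t ht => ?_
        rw [abs_mul, abs_of_nonneg (weight_nonneg t)]
        refine mul_le_mul_of_nonneg_left ?_ (weight_nonneg t)
        rw [← Real.dist_eq]
        exact (hN t (by have := (Finset.mem_Ico.1 ht).1; have := le_of_max_le_left hS; omega)).le
    _ = ε / 2 := by rw [← Finset.sum_mul, sum_weight_eq_one S hS1, one_mul]
    _ < ε := by linarith

/-! ### Pointwise estimates -/

/-- The value at `y` of the indicator of `[j/2^t, (j+1)/2^t)`, for `y ≥ 0`. -/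
noncomputable def cell (y : ℝ) (t j : ℕ) : ℝ := if ⌊y * 2 ^ t⌋₊ = j then 1 else 0

lemma floor_coarse (y : ℝ) (t : ℕ) :
    ⌊y * 2 ^ t⌋₊ / 2 ^ (t - t / 2) = ⌊y * 2 ^ (t / 2)⌋₊ := by
  have h : (2 : ℝ) ^ t = 2 ^ (t / 2) * 2 ^ (t - t / 2) := by exact_mod_cast (pow_half_mul t).symm
  have := Nat.floor_div_natCast (y * 2 ^ t) (2 ^ (t - t / 2))
  rw [← this, h]
  congr 1
  push_cast
  field_simp

lemma floor_lt {y : ℝ} (hy : 0 ≤ y) (hy1 : y < 1) (t : ℕ) : ⌊y * 2 ^ t⌋₊ < 2 ^ t := by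
  rw [Nat.floor_lt (by positivity)]
  push_cast
  have : (0 : ℝ) < 2 ^ t := by positivity
  nlinarith

/-- The interval containing `y` gives a positive detail of height at least half the
normalization. -/
lemma pos_part_round {y : ℝ} (hy : 0 ≤ y) (hy1 : y < 1) (t : ℕ) :
    weight t * 2 ^ t / 8 ≤
      ∑ j ∈ Finset.range (2 ^ t), max (detail (cell y) t j) 0 ^ 2 := by
  have hA : 0 ≤ weight t * 2 ^ t / 2 := by have := weight_nonneg t; positivity
  refine le_trans ?_ (Finset.single_le_sum (f := fun j => max (detail (cell y) t j) 0 ^ 2)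
    (fun _ _ => sq_nonneg _) (Finset.mem_range.2 (floor_lt hy hy1 t)))
  have h1 : detail (cell y) t ⌊y * 2 ^ t⌋₊ = √(weight t * 2 ^ t / 2) * (1 - coarse t) := by
    simp [detail, cell, floor_coarse]
  have hc := coarse_le_half t
  have h2 : √(weight t * 2 ^ t / 2) * (1 / 2) ≤ max (detail (cell y) t ⌊y * 2 ^ t⌋₊) 0 := by
    rw [h1]
    exact le_max_of_le_left (mul_le_mul_of_nonneg_left (by linarith) (Real.sqrt_nonneg _))
  calc weight t * 2 ^ t / 8 = (√(weight t * 2 ^ t / 2) * (1 / 2)) ^ 2 := by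
        rw [mul_pow, Real.sq_sqrt hA]; ring
    _ ≤ _ := pow_le_pow_left₀ (by positivity) h2 2

/-- Negative values come only from the ancestor containing `y`, which has `2^(t - t/2)` descendants,
each contributing at most `weight t * 2^t / 2 * coarse t ^ 2`. -/
lemma neg_part_round (y : ℝ) (t : ℕ) :
    ∑ j ∈ Finset.range (2 ^ t), max (-detail (cell y) t j) 0 ^ 2 ≤ 2 ^ (t / 2) := by
  have hA : 0 ≤ weight t * 2 ^ t / 2 := by have := weight_nonneg t; positivity
  have hc := coarse_nonneg t
  have hb : ∀ j, max (-detail (cell y) t j) 0 ^ 2 ≤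
      weight t * 2 ^ t / 2 * coarse t ^ 2 * cell y (t / 2) (j / 2 ^ (t - t / 2)) := fun j => by
    have h1 : 0 ≤ cell y t j := by unfold cell; split_ifs <;> norm_num
    have h2 : cell y (t / 2) (j / 2 ^ (t - t / 2)) ^ 2 = cell y (t / 2) (j / 2 ^ (t - t / 2)) := by
      unfold cell; split_ifs <;> norm_num
    have h3 : 0 ≤ cell y (t / 2) (j / 2 ^ (t - t / 2)) := by unfold cell; split_ifs <;> norm_num
    have h4 : max (-detail (cell y) t j) 0 ≤
        √(weight t * 2 ^ t / 2) * (coarse t * cell y (t / 2) (j / 2 ^ (t - t / 2))) := by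
      refine max_le ?_ (by positivity)
      rw [detail, smul_eq_mul, smul_eq_mul, ← mul_neg]
      exact mul_le_mul_of_nonneg_left (by linarith) (Real.sqrt_nonneg _)
    calc _ ≤ (√(weight t * 2 ^ t / 2) * (coarse t * cell y (t / 2) (j / 2 ^ (t - t / 2)))) ^ 2 :=
          pow_le_pow_left₀ (le_max_right _ _) h4 2
      _ = _ := by rw [mul_pow, mul_pow, Real.sq_sqrt hA, h2]; ring
  refine (Finset.sum_le_sum fun j _ => hb j).trans ?_
  rw [← Finset.mul_sum, sum_fine (fun _ i => cell y (t / 2) i)]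
  simp only [Finset.sum_const, Finset.card_range, nsmul_eq_mul, ← Finset.mul_sum]
  have h5 : ∑ i ∈ Finset.range (2 ^ (t / 2)), cell y (t / 2) i ≤ 1 := by
    unfold cell
    rw [Finset.sum_ite_eq]
    split_ifs <;> norm_num
  have h6 : weight t * 2 ^ t / 2 * coarse t ^ 2 * 2 ^ (t - t / 2) ≤ 2 ^ (t / 2) := by
    by_cases h : t ≤ 1
    · simp [coarse, h]
    have h7 : (2 : ℝ) ^ t = 2 ^ (t / 2) * 2 ^ (t - t / 2) := by exact_mod_cast (pow_half_mul t).symm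
    have h8 : weight t * 2 ^ t / 2 * coarse t ^ 2 * 2 ^ (t - t / 2) = weight t / 2 * 2 ^ (t / 2) := by
      rw [coarse, if_neg h, h7]; field_simp
    rw [h8]
    have := weight_le_one t
    have h9 : (0 : ℝ) < 2 ^ (t / 2) := by positivity
    nlinarith
  have h10 : 0 ≤ weight t * 2 ^ t / 2 * coarse t ^ 2 * 2 ^ (t - t / 2) := by positivity
  push_cast
  calc _ = (weight t * 2 ^ t / 2 * coarse t ^ 2 * 2 ^ (t - t / 2)) *
        ∑ i ∈ Finset.range (2 ^ (t / 2)), cell y (t / 2) i := by ring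
    _ ≤ (weight t * 2 ^ t / 2 * coarse t ^ 2 * 2 ^ (t - t / 2)) * 1 :=
        mul_le_mul_of_nonneg_left h5 h10
    _ ≤ _ := by rw [mul_one]; exact h6

/-- The last complete round among the first `n` terms already gives this bound. -/
lemma pos_part_lower {y : ℝ} (hy : 0 ≤ y) (hy1 : y < 1) {n : ℕ} (hn : 2 ≤ Nat.log 2 n) :
    2 ^ Nat.log 2 n / (16 * (Nat.log 2 n : ℝ)) ≤
      ∑ k ∈ Finset.range n, max (detailSeq (cell y) k) 0 ^ 2 := by
  obtain ⟨m, hm⟩ : ∃ m, Nat.log 2 n = m + 1 := ⟨Nat.log 2 n - 1, by omega⟩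
  have hn0 : n ≠ 0 := by rintro rfl; simp at hn
  have h1 := Nat.pow_log_le_self 2 hn0
  rw [hm] at h1 ⊢
  have h2 : ∑ k ∈ Finset.range (2 ^ (m + 1)), max (detailSeq (cell y) k) 0 ^ 2 ≤
      ∑ k ∈ Finset.range n, max (detailSeq (cell y) k) 0 ^ 2 :=
    Finset.sum_le_sum_of_subset_of_nonneg (Finset.range_mono h1) fun _ _ _ => sq_nonneg _
  refine le_trans ?_ h2
  rw [sum_detailSeq (cell y) (fun v => max v 0 ^ 2) (by simp), Finset.sum_range_succ]
  refine le_add_of_nonneg_of_le (Finset.sum_nonneg fun _ _ => Finset.sum_nonneg fun _ _ =>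
    sq_nonneg _) ((le_trans ?_ (pos_part_round hy hy1 m)))
  have h3 := weight_ge (t := m) (by omega)
  have hm0 : (0 : ℝ) < m := by exact_mod_cast (by omega : 0 < m)
  calc (2 : ℝ) ^ (m + 1) / (16 * ((m + 1 : ℕ) : ℝ)) ≤ 2 ^ (m + 1) / (16 * (m : ℝ)) := by
        gcongr; linarith
    _ = (m : ℝ)⁻¹ * 2 ^ m / 8 := by rw [pow_succ]; field_simp; norm_num
    _ ≤ _ := by gcongr

/-- Completing the last round bounds the sum by `⌊log₂ n⌋ + 1` full rounds. -/
lemma neg_part_upper (y : ℝ) (n : ℕ) :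
    ∑ k ∈ Finset.range n, max (-detailSeq (cell y) k) 0 ^ 2 ≤
      (Nat.log 2 n + 1 : ℝ) * √2 ^ (Nat.log 2 n) := by
  set m := Nat.log 2 n with hm
  have h1 : n ≤ 2 ^ (m + 1) := (Nat.lt_pow_succ_log_self (by norm_num) n).le
  have h2 : ∑ k ∈ Finset.range n, max (-detailSeq (cell y) k) 0 ^ 2 ≤
      ∑ k ∈ Finset.range (2 ^ (m + 1)), max (-detailSeq (cell y) k) 0 ^ 2 :=
    Finset.sum_le_sum_of_subset_of_nonneg (Finset.range_mono h1) fun _ _ _ => sq_nonneg _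
  refine h2.trans ?_
  rw [sum_detailSeq (cell y) (fun v => max (-v) 0 ^ 2) (by simp)]
  have hs : (1 : ℝ) ≤ √2 := by rw [Real.one_le_sqrt]; norm_num
  refine (Finset.sum_le_card_nsmul _ _ (√2 ^ m) fun t ht => ?_).trans ?_
  · refine (neg_part_round y t).trans ?_
    have h3 : (2 : ℝ) ^ (t / 2) = √2 ^ (2 * (t / 2)) := by
      rw [pow_mul, Real.sq_sqrt (by norm_num)]
    rw [h3]
    apply pow_le_pow_right₀ hs
    have := Finset.mem_range.1 ht
    omega
  · simp

lemma sq_le_two_pow {n : ℕ} (hn : 4 ≤ n) : n ^ 2 ≤ 2 ^ n := by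
  induction n, hn using Nat.le_induction with
  | base => norm_num
  | succ n hn ih => rw [pow_succ 2]; nlinarith

lemma tendsto_log : Tendsto (Nat.log 2) atTop atTop :=
  tendsto_atTop.2 fun b => by
    filter_upwards [eventually_ge_atTop (2 ^ b)] with n hn
    exact Nat.le_log_of_pow_le (by norm_num) hn

lemma tendsto_pos_part {y : ℝ} (hy : 0 ≤ y) (hy1 : y < 1) :
    Tendsto (fun n => ∑ k ∈ Finset.range n, max (detailSeq (cell y) k) 0 ^ 2) atTop atTop := by
  have h : Tendsto (fun n => (Nat.log 2 n : ℝ) / 16) atTop atTop :=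
    (tendsto_natCast_atTop_atTop.comp tendsto_log).atTop_div_const (by norm_num)
  refine tendsto_atTop_mono' _ ?_ h
  filter_upwards [tendsto_log.eventually_ge_atTop 4] with n hn
  refine le_trans ?_ (pos_part_lower hy hy1 (by omega))
  have h1 : ((Nat.log 2 n : ℕ) : ℝ) ^ 2 ≤ 2 ^ Nat.log 2 n := by exact_mod_cast sq_le_two_pow hn
  have h2 : (0 : ℝ) < (Nat.log 2 n : ℕ) := by exact_mod_cast (by omega : 0 < Nat.log 2 n)
  rw [div_le_div_iff₀ (by norm_num) (by positivity)]
  nlinarith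

lemma tendsto_ratio {y : ℝ} (hy : 0 ≤ y) (hy1 : y < 1) :
    Tendsto (fun n => (∑ k ∈ Finset.range n, max (-detailSeq (cell y) k) 0 ^ 2) /
      ∑ k ∈ Finset.range n, max (detailSeq (cell y) k) 0 ^ 2) atTop (nhds 0) := by
  have hs : |√2 / 2| < 1 := by
    rw [abs_of_nonneg (by positivity), div_lt_one (by norm_num), Real.sqrt_lt' (by norm_num)]
    norm_num
  have h : Tendsto (fun m : ℕ => 32 * ((m : ℝ) ^ 2 * (√2 / 2) ^ m)) atTop (nhds 0) := by
    simpa using (tendsto_pow_const_mul_const_pow_of_abs_lt_one 2 hs).const_mul 32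
  refine squeeze_zero' (Eventually.of_forall fun n => div_nonneg
    (Finset.sum_nonneg fun _ _ => sq_nonneg _) (Finset.sum_nonneg fun _ _ => sq_nonneg _)) ?_
    (h.comp tendsto_log)
  filter_upwards [tendsto_log.eventually_ge_atTop 4] with n hn
  set m := Nat.log 2 n with hm
  have hm1 : (1 : ℝ) ≤ m := by exact_mod_cast (by omega : 1 ≤ m)
  have h0 : (0 : ℝ) < 2 ^ m / (16 * m) := by positivity
  calc _ ≤ ((m + 1 : ℝ) * √2 ^ m) / (2 ^ m / (16 * m)) :=
        div_le_div₀ (by positivity) (neg_part_upper y n) h0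
          (pos_part_lower hy hy1 (by omega))
    _ = 16 * (m * (m + 1)) * (√2 / 2) ^ m := by rw [div_pow]; field_simp
    _ ≤ 16 * (m * (m + m)) * (√2 / 2) ^ m := by gcongr
    _ = _ := by simp only [Function.comp, ← hm]; ring

/-! ### Dyadic step functions in `L²(0,2)` -/

/-- Lebesgue measure on `(0,2)`. -/
noncomputable abbrev mu : Measure ℝ := volume.restrict (Set.Ioo (0 : ℝ) 2)

/-- The dyadic interval `[2j/2^t, 2(j+1)/2^t)`; those with `j < 2^t` partition `[0,2)`. -/
def box (t j : ℕ) : Set ℝ := Set.Ico (2 * (j : ℝ) / 2 ^ t) (2 * ((j + 1 : ℕ) : ℝ) / 2 ^ t)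

lemma measurableSet_box (t j : ℕ) : MeasurableSet (box t j) := measurableSet_Ico

/-- The indicator function of `box t j` as an element of `L²(0,2)`. -/
noncomputable def ind (t j : ℕ) : Lp ℝ 2 mu :=
  indicatorConstLp 2 (measurableSet_box t j) (measure_ne_top _ _) (1 : ℝ)

lemma box_le (t j : ℕ) : 2 * (j : ℝ) / 2 ^ t ≤ 2 * ((j + 1 : ℕ) : ℝ) / 2 ^ t := by
  gcongr; simp

lemma box_split (t i : ℕ) : box t i = box (t + 1) (2 * i) ∪ box (t + 1) (2 * i + 1) := by
  have h := box_le (t + 1) (2 * i)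
  have h' := box_le (t + 1) (2 * i + 1)
  unfold box
  rw [Set.Ico_union_Ico_eq_Ico h h']
  congr 1 <;> (push_cast; rw [pow_succ]; field_simp)
  ring

lemma box_disjoint (t : ℕ) {i j : ℕ} (h : i ≠ j) : Disjoint (box t i) (box t j) := by
  have hm : Monotone fun j : ℕ => 2 * (j : ℝ) / 2 ^ t := fun a b h => by
    dsimp only; gcongr
  exact hm.pairwise_disjoint_on_Ico_succ h

lemma ind_add (t i : ℕ) : ind t i = ind (t + 1) (2 * i) + ind (t + 1) (2 * i + 1) := by
  have h := indicatorConstLp_disjoint_union (p := 2) (measurableSet_box (t + 1) (2 * i))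
    (measurableSet_box (t + 1) (2 * i + 1)) (measure_ne_top mu _) (measure_ne_top mu _)
    (box_disjoint (t + 1) (by omega)) (1 : ℝ)
  unfold ind
  rw [← h]
  congr 1
  exact box_split t i

lemma box_inter_ae {t j : ℕ} (hj : j < 2 ^ t) :
    (box t j ∩ Set.Ioo 0 2 : Set ℝ) =ᵐ[volume] box t j := by
  have h1 : box t j ⊆ Set.Ico 0 2 := by
    apply Set.Ico_subset_Ico (by positivity)
    rw [div_le_iff₀ (by positivity)]
    have : ((j + 1 : ℕ) : ℝ) ≤ 2 ^ t := by exact_mod_cast hj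
    linarith
  have h2 : (box t j ∩ Set.Ico 0 2 : Set ℝ) = box t j := Set.inter_eq_left.2 h1
  conv_rhs => rw [← h2]
  exact (ae_eq_refl _).inter Ioo_ae_eq_Ico

lemma inner_ind (t : ℕ) {i j : ℕ} (hj : j < 2 ^ t) :
    inner ℝ (ind t i) (ind t j) = if i = j then (2 : ℝ) / 2 ^ t else 0 := by
  rw [ind, ind, L2.real_inner_indicatorConstLp_one_indicatorConstLp_one]
  split_ifs with h
  · subst h
    rw [Set.inter_self, measureReal_def, Measure.restrict_apply (measurableSet_box t i),
      measure_congr (box_inter_ae hj), box, Real.volume_Ico, ENNReal.toReal_ofReal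
      (sub_nonneg.2 (box_le t i))]
    push_cast; ring
  · rw [(box_disjoint t h).inter_eq]; simp

/-- The space of step functions on the dyadic intervals of level `t`. -/
noncomputable def levelSpace (t : ℕ) : Submodule ℝ (Lp ℝ 2 mu) :=
  Submodule.span ℝ (ind t '' Set.Iio (2 ^ t))

instance (t : ℕ) : FiniteDimensional ℝ (levelSpace t) :=
  FiniteDimensional.span_of_finite ℝ ((Set.finite_Iio _).image _)

lemma ind_mem {t j : ℕ} (hj : j < 2 ^ t) : ind t j ∈ levelSpace t :=
  Submodule.subset_span ⟨j, hj, rfl⟩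

lemma levelSpace_mono : Monotone levelSpace := by
  refine monotone_nat_of_le_succ fun t => Submodule.span_le.2 ?_
  rintro _ ⟨i, hi, rfl⟩
  rw [ind_add]
  have hi' : i < 2 ^ t := hi
  exact add_mem (ind_mem (by rw [pow_succ]; omega)) (ind_mem (by rw [pow_succ]; omega))

/-- The projection onto the step functions of level `t` in terms of the orthogonal basis `ind t j`,
whose members have squared norm `2/2^t`. -/
lemma starProjection_level (t : ℕ) (v : Lp ℝ 2 mu) :
    (levelSpace t).starProjection v =
      ((2 : ℝ) ^ t / 2) • ∑ j ∈ Finset.range (2 ^ t), (inner ℝ (ind t j) v : ℝ) • ind t j := by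
  apply Submodule.eq_starProjection_of_mem_orthogonal
  · exact Submodule.smul_mem _ _ (Submodule.sum_mem _ fun j hj =>
      Submodule.smul_mem _ _ (ind_mem (Finset.mem_range.1 hj)))
  · rw [levelSpace, Submodule.mem_orthogonal]
    intro u hu
    induction hu using Submodule.span_induction with
    | mem x hx =>
      obtain ⟨i, hi, rfl⟩ := hx
      have hi' : i < 2 ^ t := hi
      rw [inner_sub_right, inner_smul_right, inner_sum, Finset.sum_eq_single i]
      · rw [inner_smul_right, inner_ind t hi', if_pos rfl]; field_simp; simp
      · intro j hj hji
        rw [inner_smul_right, inner_ind t (Finset.mem_range.1 hj), if_neg hji.symm, mul_zero]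
      · intro h; exact absurd (Finset.mem_range.2 hi') h
    | zero => simp
    | add x y _ _ hx hy => rw [inner_add_left, hx, hy, add_zero]
    | smul a x _ hx => rw [inner_smul_left, hx, mul_zero]

lemma integral_dyadic_zero {v : ℝ → ℝ} (hv : IntegrableOn v (Set.Ioo 0 2))
    (h : ∀ t j, j < 2 ^ t → ∫ x in box t j, v x ∂mu = 0) (t j : ℕ) (hj : j ≤ 2 ^ t) :
    ∫ x in (0 : ℝ)..(2 * (j : ℝ) / 2 ^ t), v x = 0 := by
  have hint : IntervalIntegrable v volume 0 2 := by
    rw [intervalIntegrable_iff_integrableOn_Ioo_of_le (by norm_num)]; exact hv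
  induction j with
  | zero => simp
  | succ j ih =>
    have hb : ∀ i : ℕ, i ≤ 2 ^ t → 2 * (i : ℝ) / 2 ^ t ∈ Set.uIcc (0 : ℝ) 2 := fun i hi => by
      rw [Set.uIcc_of_le (by norm_num)]
      refine ⟨by positivity, ?_⟩
      rw [div_le_iff₀ (by positivity)]
      have : (i : ℝ) ≤ 2 ^ t := by exact_mod_cast hi
      linarith
    have h0 : (0 : ℝ) ∈ Set.uIcc (0 : ℝ) 2 := Set.left_mem_uIcc
    rw [← intervalIntegral.integral_add_adjacent_intervals (b := 2 * (j : ℝ) / 2 ^ t)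
      (hint.mono_set (Set.uIcc_subset_uIcc h0 (hb _ (by omega))))
      (hint.mono_set (Set.uIcc_subset_uIcc (hb _ (by omega)) (hb _ hj))), ih (by omega), zero_add,
      intervalIntegral.integral_of_le (box_le t j), ← h t j (by omega),
      Measure.restrict_restrict (measurableSet_box t j), setIntegral_congr_set (box_inter_ae (by omega)),
      box, integral_Ico_eq_integral_Ioc]

/-- A function with vanishing integrals over all dyadic intervals is zero: its primitive vanishes at
the dyadic points, hence everywhere by continuity, and Lebesgue differentiation applies. -/
lemma ae_zero_of_dyadic {v : ℝ → ℝ} (hv : IntegrableOn v (Set.Ioo 0 2))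
    (h : ∀ t j, j < 2 ^ t → ∫ x in box t j, v x ∂mu = 0) : v =ᵐ[mu] 0 := by
  have hint : IntervalIntegrable v volume 0 2 := by
    rw [intervalIntegrable_iff_integrableOn_Ioo_of_le (by norm_num)]; exact hv
  have hcont : ContinuousOn (fun x => ∫ s in (0 : ℝ)..x, v s) (Set.uIcc 0 2) :=
    intervalIntegral.continuousOn_primitive_interval
      ((intervalIntegrable_iff_integrableOn_Icc_of_le (by norm_num)).1 hint |>.mono_set
        (by rw [Set.uIcc_of_le (by norm_num)]))
  rw [Set.uIcc_of_le (by norm_num)] at hcont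
  have hG : ∀ a ∈ Set.Ioo (0 : ℝ) 2, ∫ s in (0 : ℝ)..a, v s = 0 := fun a ha => by
    have hfl := fun t => floor_lt (y := a / 2) (by linarith [ha.1]) (by linarith [ha.2]) t
    have h1 : Tendsto (fun t : ℕ => 2 * (⌊a / 2 * 2 ^ t⌋₊ : ℝ) / 2 ^ t) atTop (nhds a) := by
      have := ((tendsto_nat_floor_mul_div_atTop (R := ℝ) (a := a / 2) (by linarith [ha.1])).comp
        (tendsto_pow_atTop_atTop_of_one_lt (r := (2 : ℝ)) (by norm_num))).const_mul 2
      rw [mul_div_cancel₀ a (by norm_num : (2 : ℝ) ≠ 0)] at this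
      refine this.congr fun t => ?_
      simp only [Function.comp]; ring
    have h2 : Tendsto (fun t : ℕ => 2 * (⌊a / 2 * 2 ^ t⌋₊ : ℝ) / 2 ^ t) atTop
        (nhdsWithin a (Set.Icc 0 2)) := by
      refine tendsto_nhdsWithin_iff.2 ⟨h1, Eventually.of_forall fun t => ⟨by positivity, ?_⟩⟩
      rw [div_le_iff₀ (by positivity)]
      have : (⌊a / 2 * 2 ^ t⌋₊ : ℝ) ≤ 2 ^ t := by exact_mod_cast (hfl t).le
      linarith
    have h3 := (hcont a ⟨ha.1.le, ha.2.le⟩).tendsto.comp h2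
    refine tendsto_nhds_unique h3 (tendsto_const_nhds.congr fun t => ?_)
    exact (integral_dyadic_zero hv h t _ (hfl t).le).symm
  rw [Filter.EventuallyEq, ae_restrict_iff' measurableSet_Ioo]
  filter_upwards [hint.ae_hasDerivAt_integral] with x hx hx2
  have h4 := hx (by rw [Set.uIcc_of_le (by norm_num)]; exact ⟨hx2.1.le, hx2.2.le⟩) 0 Set.left_mem_uIcc
  have h5 : (fun x => ∫ s in (0 : ℝ)..x, v s) =ᶠ[nhds x] fun _ => 0 := by
    filter_upwards [Ioo_mem_nhds hx2.1 hx2.2] with a ha using hG a ha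
  exact (h4.congr_of_eventuallyEq h5.symm).unique (hasDerivAt_const x 0)

lemma inner_ind_eq (t j : ℕ) (v : Lp ℝ 2 mu) :
    inner ℝ (ind t j) v = ∫ x in box t j, v x ∂mu :=
  L2.inner_indicatorConstLp_one _ _ v

lemma levelSpace_dense : ⊤ ≤ (⨆ t, levelSpace t).topologicalClosure := by
  rw [top_le_iff, Submodule.topologicalClosure_eq_top_iff, Submodule.eq_bot_iff]
  intro v hv
  rw [Submodule.mem_orthogonal] at hv
  have hint : IntegrableOn v (Set.Ioo 0 2) := (Lp.memLp v).integrable (by norm_num)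
  rw [Lp.eq_zero_iff_ae_eq_zero]
  refine ae_zero_of_dyadic hint fun t j hj => ?_
  rw [← inner_ind_eq]
  exact hv _ (Submodule.mem_iSup_of_mem t (ind_mem hj))

lemma tendsto_energy (v : Lp ℝ 2 mu) :
    Tendsto (energy fun t j => inner ℝ (ind t j) v) atTop (nhds (‖v‖ ^ 2)) := by
  have h := Submodule.starProjection_tendsto_self levelSpace levelSpace_mono v levelSpace_dense
  have h2 : Tendsto (fun t => inner ℝ ((levelSpace t).starProjection v) v) atTop
      (nhds (inner ℝ v v)) := h.inner tendsto_const_nhds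
  rw [real_inner_self_eq_norm_sq] at h2
  refine h2.congr fun t => ?_
  rw [starProjection_level, inner_smul_left, sum_inner, energy]
  simp [inner_smul_left, sq]

lemma inner_detailSeq (v : Lp ℝ 2 mu) (k : ℕ) :
    inner ℝ (detailSeq ind k) v = detailSeq (fun t j => (inner ℝ (ind t j) v : ℝ)) k := by
  simp [detailSeq, detail, inner_smul_left, inner_sub_left]

/-- The details of the dyadic indicators form a Parseval family of `L²(0,2)`. -/
lemma hasSum_inner_detailSeq (v : Lp ℝ 2 mu) :
    HasSum (fun k => inner ℝ (detailSeq ind k) v ^ 2) (‖v‖ ^ 2) := by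
  simp only [inner_detailSeq]
  refine hasSum_detailSeq_sq (fun t i => ?_) (tendsto_energy v)
  rw [ind_add, inner_add_left]

/-! ### The two halves of the interval -/

/-- Indicator functions of measurable sets contained in `[1, ∞)`, as elements of `L²(0,2)`. -/
def rightHalf : Set (Lp ℝ 2 mu) :=
  {f | ∃ (S : Set ℝ) (hS : MeasurableSet S), S ⊆ Set.Ici 1 ∧
    f = indicatorConstLp 2 hS (measure_ne_top _ _) (1 : ℝ)}

/-- The functions of `L²(0,2)` vanishing almost everywhere on `(1,2)`, encoded as the orthogonal
complement of the indicators of `rightHalf`. -/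
noncomputable def leftSpace : Submodule ℝ (Lp ℝ 2 mu) := (Submodule.span ℝ rightHalf)ᗮ

lemma mem_leftSpace_orthogonal {f : Lp ℝ 2 mu} (hf : f ∈ rightHalf) : f ∈ leftSpaceᗮ :=
  Submodule.le_orthogonal_orthogonal _ (Submodule.subset_span hf)

lemma indicator_mem_leftSpace {S : Set ℝ} (hS : MeasurableSet S) (hS1 : S ⊆ Set.Iio 1) :
    indicatorConstLp 2 hS (measure_ne_top mu _) (1 : ℝ) ∈ leftSpace := by
  rw [leftSpace, Submodule.mem_orthogonal]
  intro u hu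
  induction hu using Submodule.span_induction with
  | mem x hx =>
    obtain ⟨S', hS', hsub, rfl⟩ := hx
    rw [L2.real_inner_indicatorConstLp_one_indicatorConstLp_one]
    have : S' ∩ S = ∅ := by
      ext x; simp only [Set.mem_inter_iff, Set.mem_empty_iff_false, iff_false, not_and]
      intro h1 h2
      have h3 : (1 : ℝ) ≤ x := hsub h1
      have h4 : x < 1 := hS1 h2
      linarith
    simp [this]
  | zero => simp
  | add x y _ _ hx hy => rw [inner_add_left, hx, hy, add_zero]
  | smul a x _ hx => rw [inner_smul_left, hx, mul_zero]

/-- Infinitely many details live on the right half: the first interval `box (t + 1) (2 ^ t)` to the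
right of `1` has as ancestor the interval of the same kind at the coarser level. -/
lemma infinite_right : {k | detailSeq ind k ∈ leftSpaceᗮ}.Infinite := by
  have hmid : ∀ t, ind (t + 1) (2 ^ t) ∈ leftSpaceᗮ := fun t =>
    mem_leftSpace_orthogonal ⟨_, measurableSet_box _ _, fun x hx => by
      have h1 : 2 * ((2 ^ t : ℕ) : ℝ) / 2 ^ (t + 1) = 1 := by
        push_cast; rw [pow_succ]; field_simp
      have h2 := hx.1
      rw [h1] at h2
      exact h2, rfl⟩
  refine Set.infinite_of_injective_forall_mem (f := fun s : ℕ => 2 ^ (s + 2) + 2 ^ (s + 1)) ?_ ?_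
  · refine StrictMono.injective (strictMono_nat_of_lt_succ fun s => ?_)
    have : 0 < 2 ^ s := by positivity
    simp only [pow_succ]; omega
  · intro s
    have hlog : Nat.log 2 (2 ^ (s + 2) + 2 ^ (s + 1)) = s + 2 := by
      rw [Nat.log_eq_iff (Or.inr ⟨by norm_num, by positivity⟩)]
      have : 0 < 2 ^ s := by positivity
      simp only [pow_succ]; omega
    have hdiv : 2 ^ (s + 1) / 2 ^ (s + 2 - (s + 2) / 2) = 2 ^ (s / 2) := by
      rw [Nat.pow_div (by omega) (by norm_num)]; congr 1; omega
    rw [Set.mem_ofPred_eq, detailSeq, hlog, Nat.add_sub_cancel_left, detail, hdiv,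
      show (s + 2) / 2 = s / 2 + 1 by omega]
    exact Submodule.smul_mem _ _ (sub_mem (hmid _) (Submodule.smul_mem _ _ (hmid _)))

/-- The indicators of the intervals `[2 - 2^{-n}, 2 - 2^{-(n+1)})` are orthogonal and nonzero. -/
lemma infinite_dim_right : ¬ FiniteDimensional ℝ leftSpaceᗮ := fun hfd => by
  let a : ℕ → ℝ := fun n => 2 - (1 / 2) ^ n
  have ha : StrictMono a := strictMono_nat_of_lt_succ fun n => by
    have : (0 : ℝ) < (1 / 2) ^ n := by positivity
    simp only [a, pow_succ]; linarith
  let f : ℕ → Lp ℝ 2 mu := fun n =>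
    indicatorConstLp 2 (measurableSet_Ico (a := a n) (b := a (n + 1))) (measure_ne_top _ _) (1 : ℝ)
  have ha1 : ∀ n, 1 ≤ a n := fun n => by
    have := ha.monotone (Nat.zero_le n)
    simp only [a] at this ⊢; norm_num at this ⊢; linarith
  have ha2 : ∀ n, a n ≤ 2 := fun n => by
    have : (0 : ℝ) < (1 / 2) ^ n := by positivity
    simp only [a]; linarith
  have hf : ∀ n, f n ∈ leftSpaceᗮ := fun n =>
    mem_leftSpace_orthogonal ⟨_, measurableSet_Ico, fun x hx => (ha1 n).trans hx.1, rfl⟩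
  have hli : LinearIndependent ℝ f := by
    apply linearIndependent_of_ne_zero_of_inner_eq_zero (𝕜 := ℝ)
    · intro n h0
      have hn : a n < a (n + 1) := ha n.lt_succ_self
      have h1 : inner ℝ (f n) (f n) = (0 : ℝ) := by rw [h0, inner_zero_left]
      rw [L2.real_inner_indicatorConstLp_one_indicatorConstLp_one, Set.inter_self, measureReal_def,
        Measure.restrict_apply measurableSet_Ico, Set.inter_eq_left.2, Real.volume_Ico,
        ENNReal.toReal_ofReal] at h1
      · linarith
      · linarith
      · exact fun x hx => ⟨by linarith [ha1 n, hx.1], hx.2.trans_le (ha2 _)⟩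
    · intro m n hmn
      change inner ℝ (f m) (f n) = (0 : ℝ)
      have hd : Disjoint (Set.Ico (a m) (a (m + 1))) (Set.Ico (a n) (a (n + 1))) :=
        ha.monotone.pairwise_disjoint_on_Ico_succ hmn
      rw [L2.real_inner_indicatorConstLp_one_indicatorConstLp_one, hd.inter_eq]
      simp
  have hli' : LinearIndependent ℝ (fun n => (⟨f n, hf n⟩ : leftSpaceᗮ)) :=
    LinearIndependent.of_comp (leftSpaceᗮ).subtype hli
  exact not_finite_iff_infinite.2 inferInstance hli'.finite

/-- Testing against `leftSpace` determines a function almost everywhere on `(0,1)`. -/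
lemma ae_eq_left {f g : Lp ℝ 2 mu} (h : ∀ v ∈ leftSpace, inner ℝ f v = inner ℝ g v) :
    f =ᵐ[volume.restrict (Set.Ioo (0 : ℝ) 1)] g := by
  have hle : volume.restrict (Set.Ioo (0 : ℝ) 1) ≤ mu :=
    Measure.restrict_mono (Set.Ioo_subset_Ioo_right (by norm_num)) le_rfl
  have hint : ∀ u : Lp ℝ 2 mu, Integrable u mu := fun u => (Lp.memLp u).integrable (by norm_num)
  refine Integrable.ae_eq_of_forall_setIntegral_eq _ _ ((hint f).mono_measure hle)
    ((hint g).mono_measure hle) fun S hS _ => ?_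
  have key : ∀ u : Lp ℝ 2 mu, ∫ x in S, u x ∂(volume.restrict (Set.Ioo (0 : ℝ) 1)) =
      inner ℝ u (indicatorConstLp 2 (hS.inter measurableSet_Ioo)
        (measure_ne_top mu (S ∩ Set.Ioo (0 : ℝ) 1)) (1 : ℝ)) := fun u => by
    have hsub : S ∩ Set.Ioo (0 : ℝ) 1 ∩ Set.Ioo 0 2 = S ∩ Set.Ioo (0 : ℝ) 1 :=
      Set.inter_eq_left.2 fun x hx => ⟨hx.2.1, hx.2.2.trans (by norm_num)⟩
    rw [real_inner_comm, L2.inner_indicatorConstLp_one, Measure.restrict_restrict hS,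
      Measure.restrict_restrict (hS.inter measurableSet_Ioo), hsub]
  rw [key, key]
  exact h _ (indicator_mem_leftSpace _ fun x hx => hx.2.2)

lemma ind_coe (t j : ℕ) : ∀ᵐ x ∂mu, ind t j x = cell (x / 2) t j := by
  filter_upwards [indicatorConstLp_coeFn (p := 2) (hs := measurableSet_box t j)
    (hμs := measure_ne_top mu _) (c := (1 : ℝ)), ae_restrict_mem measurableSet_Ioo] with x hx hx2
  have hiff : x ∈ box t j ↔ ⌊x / 2 * 2 ^ t⌋₊ = j := by
    rw [Nat.floor_eq_iff (by have := hx2.1; positivity), box, Set.mem_Ico,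
      div_le_iff₀ (by positivity), lt_div_iff₀ (by positivity)]
    push_cast
    exact ⟨fun h => ⟨by linarith [h.1], by linarith [h.2]⟩,
      fun h => ⟨by linarith [h.1], by linarith [h.2]⟩⟩
  rw [ind, hx, cell]
  by_cases h : x ∈ box t j
  · rw [Set.indicator_of_mem h, if_pos (hiff.1 h)]
  · rw [Set.indicator_of_notMem h, if_neg (mt hiff.2 h)]

lemma detailSeq_coe (k : ℕ) : ∀ᵐ x ∂mu, detailSeq ind k x = detailSeq (cell (x / 2)) k := by
  unfold detailSeq detail
  generalize Nat.log 2 k = t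
  generalize k - 2 ^ t = j
  generalize √(weight t * 2 ^ t / 2) = r
  filter_upwards [ind_coe t j, ind_coe (t / 2) (j / 2 ^ (t - t / 2)),
    Lp.coeFn_smul r (ind t j - coarse t • ind (t / 2) (j / 2 ^ (t - t / 2))),
    Lp.coeFn_sub (ind t j) (coarse t • ind (t / 2) (j / 2 ^ (t - t / 2))),
    Lp.coeFn_smul (coarse t) (ind (t / 2) (j / 2 ^ (t - t / 2)))] with x h1 h2 h3 h4 h5
  rw [h3, Pi.smul_apply, h4, Pi.sub_apply, h5, Pi.smul_apply, h1, h2]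

/-- §4.4: a lapse of equidistribution between `U_k^±`. There is an
orthonormal basis `(U k)` of `L²_ℝ(0,2)` such that for a.e. `x ∈ (0,1)` the partial
sums `∑_{k<n} (U_k⁺ x)²` tend to infinity while
`∑_{k<n} (U_k⁻ x)² = o(∑_{k<n} (U_k⁺ x)²)` as `n → ∞`. -/
theorem exists_onb_nonequidistributed_signs :
    ∃ U : HilbertBasis ℕ ℝ (Lp ℝ 2 (volume.restrict (Set.Ioo (0 : ℝ) 2))),
      ∀ᵐ x ∂(volume.restrict (Set.Ioo (0 : ℝ) 1)),
        Tendsto (fun n : ℕ => ∑ k ∈ Finset.range n,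
            (max (((U k : Lp ℝ 2 (volume.restrict (Set.Ioo (0 : ℝ) 2))) : ℝ → ℝ) x) 0) ^ 2)
          atTop atTop ∧
        Tendsto (fun n : ℕ =>
            (∑ k ∈ Finset.range n,
              (max (-(((U k : Lp ℝ 2 (volume.restrict (Set.Ioo (0 : ℝ) 2))) : ℝ → ℝ) x)) 0) ^ 2) /
            (∑ k ∈ Finset.range n,
              (max (((U k : Lp ℝ 2 (volume.restrict (Set.Ioo (0 : ℝ) 2))) : ℝ → ℝ) x) 0) ^ 2))
          atTop (nhds 0) := by
  have : Fact ((2 : ENNReal) ≠ ⊤) := ⟨by norm_num⟩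
  have : CompleteSpace leftSpace := by unfold leftSpace; infer_instance
  obtain ⟨U, hU⟩ := exists_hilbertBasis_dilation leftSpace infinite_dim_right (detailSeq ind)
    (fun v _ => hasSum_inner_detailSeq v) infinite_right
  have hle : volume.restrict (Set.Ioo (0 : ℝ) 1) ≤ mu :=
    Measure.restrict_mono (Set.Ioo_subset_Ioo_right (by norm_num)) le_rfl
  refine ⟨U, ?_⟩
  have h1 : ∀ᵐ x ∂(volume.restrict (Set.Ioo (0 : ℝ) 1)), ∀ k, U k x = detailSeq ind k x :=
    ae_all_iff.2 fun k => ae_eq_left (hU k)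
  have h2 : ∀ᵐ x ∂(volume.restrict (Set.Ioo (0 : ℝ) 1)),
      ∀ k, detailSeq ind k x = detailSeq (cell (x / 2)) k :=
    ae_all_iff.2 fun k => ae_mono hle (detailSeq_coe k)
  filter_upwards [h1, h2, ae_restrict_mem measurableSet_Ioo] with x hx1 hx2 hx
  simp only [hx1, hx2]
  have h0 : 0 ≤ x / 2 := by linarith [hx.1]
  have h1 : x / 2 < 1 := by linarith [hx.2]
  exact ⟨tendsto_pos_part h0 h1, tendsto_ratio h0 h1⟩
end
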